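/- arXiv:2405.13893 — 10 statements merged into one kernel-verified Lean document; each statement's English description precedes it below -/
import Mathlib

section
/- Let n ≥ 3. Then D_lir(P_n) = 0 if n is odd and D_lir(P_n) = 1 if n is even. Concretely: if n is odd, the path P_n admits a valid doubling-coloring (D, c) with D = ∅; if n is even, P_n admits a valid doubling-coloring (D, c) with |D| = 1 but admits none with D = ∅. -/
open Finset
open scoped Classical

/-- The weighted degree of vertex `v` in color `i`: each edge incident to `v` colored `i`
counts 2 if it is doubled (lies in `D`) and 1 otherwise. -/
noncomputable def wdeg {V : Type*} [Fintype V] (G : SimpleGraph V)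
    (D : Finset (Sym2 V)) (c : Sym2 V → Fin 2) (i : Fin 2) (v : V) : ℕ :=
  ∑ w ∈ Finset.univ.filter (fun w => G.Adj v w ∧ c s(v, w) = i),
    (if s(v, w) ∈ D then 2 else 1)

/-- `(D, c)` is a valid doubling-coloring of `G`: `D` is a set of edges of `G` and
for every edge `uv` of `G` of color `i`, the weighted `i`-degrees of `u` and `v` differ. -/
def ValidDC {V : Type*} [Fintype V] (G : SimpleGraph V)
    (D : Finset (Sym2 V)) (c : Sym2 V → Fin 2) : Prop :=
  ↑D ⊆ G.edgeSet ∧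
    ∀ u v, G.Adj u v →
      wdeg G D c (c s(u, v)) u ≠ wdeg G D c (c s(u, v)) v

lemma wdeg_path {n : ℕ} (D : Finset (Sym2 (Fin n))) (c : Sym2 (Fin n) → Fin 2)
    (C : ℕ → Fin 2) (W : ℕ → ℕ)
    (hC : ∀ k (h : k + 1 < n), c s(⟨k, by omega⟩, ⟨k + 1, h⟩) = C k)
    (hW : ∀ k (h : k + 1 < n),
      (if s((⟨k, by omega⟩ : Fin n), ⟨k + 1, h⟩) ∈ D then 2 else 1) = W k)
    (i : Fin 2) (v : ℕ) (hv : v < n) :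
    wdeg (SimpleGraph.pathGraph n) D c i ⟨v, hv⟩ =
      (if 0 < v ∧ C (v - 1) = i then W (v - 1) else 0) +
      (if v + 1 < n ∧ C v = i then W v else 0) := by
  unfold wdeg
  rw [Finset.sum_filter]
  have key : ∀ w : Fin n,
      (if (SimpleGraph.pathGraph n).Adj ⟨v, hv⟩ w ∧ c s(⟨v, hv⟩, w) = i then
        (if s((⟨v, hv⟩ : Fin n), w) ∈ D then 2 else 1) else 0) =
      (if w.val + 1 = v then (if C (v - 1) = i then W (v - 1) else 0) else 0) +
      (if w.val = v + 1 then (if C v = i then W v else 0) else 0) := by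
    rintro ⟨w, hw⟩
    simp only [SimpleGraph.pathGraph_adj]
    by_cases h1 : w + 1 = v
    · subst h1
      have := hC w hv
      have h2 := hW w hv
      rw [Sym2.eq_swap] at this h2
      rw [this, h2]
      have h4 : ¬ (w = w + 1 + 1) := by omega
      simp [h4]
    · by_cases h2 : w = v + 1
      · subst h2
        rw [hC v hw, hW v hw]
        simp
        omega
      · have h3 : ¬ (v + 1 = w) := fun h => h2 h.symm
        simp [h1, h2, h3]
  refine Eq.trans (Finset.sum_congr rfl (fun w _ => Eq.trans ?_ (key w))) ?_
  · congr
  rw [Finset.sum_add_distrib]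
  congr 1
  · by_cases h : 0 < v
    · rw [Finset.sum_eq_single (⟨v - 1, by omega⟩ : Fin n)]
      · have : v - 1 + 1 = v := by omega
        simp [h, this]
      · rintro ⟨b, hb⟩ _ hne
        rw [if_neg]
        intro h'
        apply hne
        simp only [Fin.mk.injEq]
        simp only at h'
        omega
      · simp
    · rw [Finset.sum_eq_zero]
      · simp [h]
      · intro w _
        rw [if_neg]
        omega
  · by_cases h : v + 1 < n
    · rw [Finset.sum_eq_single (⟨v + 1, h⟩ : Fin n)]
      · simp [h]
      · rintro ⟨b, hb⟩ _ hne
        rw [if_neg]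
        intro h'
        apply hne
        simpa using h'
      · simp
    · rw [Finset.sum_eq_zero]
      · simp [h]
      · intro w _
        rw [if_neg]
        omega

/-- Validity on the path, in terms of consecutive edges indexed by naturals. -/
lemma validDC_path {n : ℕ} (D : Finset (Sym2 (Fin n))) (c : Sym2 (Fin n) → Fin 2)
    (C : ℕ → Fin 2) (W : ℕ → ℕ)
    (hC : ∀ k (h : k + 1 < n), c s(⟨k, by omega⟩, ⟨k + 1, h⟩) = C k)
    (hW : ∀ k (h : k + 1 < n),
      (if s((⟨k, by omega⟩ : Fin n), ⟨k + 1, h⟩) ∈ D then 2 else 1) = W k) :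
    ValidDC (SimpleGraph.pathGraph n) D c ↔
      (↑D ⊆ (SimpleGraph.pathGraph n).edgeSet ∧ ∀ k, k + 1 < n →
        (if 0 < k ∧ C (k - 1) = C k then W (k - 1) else 0) ≠
        (if k + 2 < n ∧ C (k + 1) = C k then W (k + 1) else 0)) := by
  unfold ValidDC
  apply and_congr_right
  intro _
  have main : ∀ k (h : k + 1 < n),
      (wdeg (SimpleGraph.pathGraph n) D c (C k) ⟨k, by omega⟩ =
        wdeg (SimpleGraph.pathGraph n) D c (C k) ⟨k + 1, h⟩) ↔
      ((if 0 < k ∧ C (k - 1) = C k then W (k - 1) else 0) =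
        (if k + 2 < n ∧ C (k + 1) = C k then W (k + 1) else 0)) := by
    intro k h
    rw [wdeg_path D c C W hC hW, wdeg_path D c C W hC hW]
    simp only [h, Nat.add_sub_cancel, true_and, if_true, Nat.succ_pos]
    rw [show k + 1 + 1 = k + 2 from rfl]
    constructor <;> intro h' <;> omega
  constructor
  · intro H k h h'
    have := H ⟨k, by omega⟩ ⟨k + 1, h⟩ (by simp [SimpleGraph.pathGraph_adj])
    rw [hC k h] at this
    exact this ((main k h).2 h')
  · rintro H ⟨u, hu⟩ ⟨v, hv⟩ hadj
    rw [SimpleGraph.pathGraph_adj] at hadj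
    rcases hadj with h | h
    · simp only at h
      subst h
      rw [hC u hv]
      exact fun e => H u hv ((main u hv).1 e)
    · simp only at h
      subst h
      rw [Sym2.eq_swap, hC v hu]
      exact fun e => H v hu ((main v hu).1 e.symm)

/-- Color an edge according to its smaller endpoint. -/
def colOf (n : ℕ) (C : ℕ → Fin 2) : Sym2 (Fin n) → Fin 2 :=
  Sym2.lift ⟨fun a b => C (min a.val b.val), fun a b => by simp only [min_comm]⟩

lemma colOf_edge (n : ℕ) (C : ℕ → Fin 2) (k : ℕ) (h : k + 1 < n) :
    colOf n C s(⟨k, by omega⟩, ⟨k + 1, h⟩) = C k := by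
  simp [colOf]

/-- Colors in blocks of two. -/
def blk (k : ℕ) : Fin 2 := if k % 4 < 2 then 0 else 1

lemma blk_eq (a b : ℕ) : blk a = blk b ↔ (a % 4 < 2 ↔ b % 4 < 2) := by
  unfold blk
  split_ifs <;> simp <;> omega

/-- For `n ≥ 3`: if `n` is odd the path `P_n` admits a valid doubling-coloring with no
doubled edge; if `n` is even, it admits one with exactly one doubled edge but none with
no doubled edge. -/
theorem Dlir_pathGraph (n : ℕ) (hn : 3 ≤ n) :
    (Odd n → ∃ c : Sym2 (Fin n) → Fin 2,
        ValidDC (SimpleGraph.pathGraph n) (∅ : Finset (Sym2 (Fin n))) c) ∧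
    (Even n →
      (∃ (D : Finset (Sym2 (Fin n))) (c : Sym2 (Fin n) → Fin 2),
          ValidDC (SimpleGraph.pathGraph n) D c ∧ D.card = 1) ∧
      ¬ ∃ c : Sym2 (Fin n) → Fin 2,
          ValidDC (SimpleGraph.pathGraph n) (∅ : Finset (Sym2 (Fin n))) c) := by
  refine ⟨?_, ?_⟩
  · intro ho
    obtain ⟨m, hm⟩ := ho
    refine ⟨colOf n blk, ?_⟩
    rw [validDC_path _ _ blk (fun _ => 1) (colOf_edge n blk) (by simp)]
    refine ⟨by simp, ?_⟩
    intro k hk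
    simp only [blk_eq]
    split_ifs <;> omega
  · rintro ⟨m, hm⟩
    refine ⟨?_, ?_⟩
    · refine ⟨{s(⟨0, by omega⟩, ⟨1, by omega⟩)}, colOf n (fun k => blk (k - 1)), ?_, by simp⟩
      rw [validDC_path _ _ (fun k => blk (k - 1)) (fun k => if k = 0 then 2 else 1)
        (colOf_edge n _) (by
          intro k h
          by_cases hk : k = 0
          · subst hk; simp
          · simp [hk])]
      refine ⟨?_, ?_⟩
      · simp [SimpleGraph.pathGraph_adj]
      · intro k hk
        simp only [blk_eq]
        rcases Nat.eq_zero_or_pos k with h0 | h0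
        · subst h0
          have h2 : 0 + 2 < n := by omega
          simp [h2]
        · have h1 : k + 1 ≠ 0 := by omega
          simp only [h1, if_false]
          split_ifs <;> omega
    · rintro ⟨c, hc⟩
      obtain ⟨C, hC⟩ : ∃ C : ℕ → Fin 2, ∀ k (h : k + 1 < n),
          c s(⟨k, by omega⟩, ⟨k + 1, h⟩) = C k :=
        ⟨fun k => if h : k + 1 < n then c s(⟨k, by omega⟩, ⟨k + 1, h⟩) else 0,
          by intro k h; simp [h]⟩
      rw [validDC_path _ _ C (fun _ => 1) hC (by simp)] at hc
      obtain ⟨-, H⟩ := hc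
      have ind : ∀ j, 2 * j + 1 < n → ¬ (0 < 2 * j ∧ C (2 * j - 1) = C (2 * j)) := by
        intro j
        induction j with
        | zero => intro _; simp
        | succ j ih =>
          intro hj
          have h0 := ih (by omega)
          have h1 := H (2 * j) (by omega)
          rw [if_neg h0] at h1
          have h2 : C (2 * j + 1) = C (2 * j) := by
            by_contra hne
            simp [hne] at h1
          have h3 := H (2 * j + 1) (by omega)
          rw [if_pos ⟨by omega, by simpa using h2.symm⟩] at h3
          rintro ⟨-, h4⟩
          apply h3
          rw [if_pos ⟨by omega, h4.symm⟩]
      have h5 := H (2 * (m - 1)) (by omega)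
      rw [if_neg (ind (m - 1) (by omega)), if_neg (by omega)] at h5
      exact h5 rfl
end

section
/- Let n ≥ 4. Then D_lir(C_n) = 0 if n ≡ 0 (mod 4), D_lir(C_n) = 1 if n ≡ 1 (mod 4), and D_lir(C_n) = 2 if n ≡ 2 or 3 (mod 4). Concretely: the cycle C_n admits a valid doubling-coloring (D, c) with |D| equal to the stated value, and admits none with |D| strictly smaller. -/
open Finset
open scoped Classical

/-- The `i`-th edge of the cycle. -/
def cycE {m : ℕ} (i : Fin (m + 4)) : Sym2 (Fin (m + 4)) := s(i, i + 1)

open scoped Fin.CommRing in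
lemma cyc_adj {m : ℕ} (u v : Fin (m + 4)) :
    (SimpleGraph.cycleGraph (m + 4)).Adj u v ↔ v = u + 1 ∨ u = v + 1 := by
  refine (SimpleGraph.cycleGraph_adj (n := m + 2)).trans ?_
  rw [sub_eq_iff_eq_add,
    sub_eq_iff_eq_add, add_comm 1, add_comm 1]
  tauto

open scoped Fin.CommRing in
lemma fin_two_ne {m : ℕ} (i : Fin (m + 4)) : i ≠ i + 1 + 1 := by
  intro h
  have h2 : (1 + 1 : Fin (m + 4)) = 0 := by
    rw [add_assoc] at h
    exact left_eq_add.mp h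
  have := congrArg Fin.val h2
  rw [Fin.val_add, Fin.val_one, Nat.mod_eq_of_lt (by omega)] at this
  simp at this

open scoped Fin.CommRing in
lemma cycE_inj {m : ℕ} : Function.Injective (cycE (m := m)) := by
  intro i j h
  simp only [cycE, Sym2.eq_iff] at h
  rcases h with h | ⟨h1, h2⟩
  · exact h.1
  · rw [h1] at h2
    exact absurd h2.symm (fin_two_ne j)

/-- contribution of edge `j` -/
noncomputable def contr {m : ℕ} (D : Finset (Sym2 (Fin (m + 4)))) (c : Sym2 (Fin (m + 4)) → Fin 2)
    (k : Fin 2) (j : Fin (m + 4)) : ℕ :=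
  if c (cycE j) = k then (if cycE j ∈ D then 2 else 1) else 0

lemma wdeg_cyc {m : ℕ} (D : Finset (Sym2 (Fin (m + 4)))) (c : Sym2 (Fin (m + 4)) → Fin 2)
    (k : Fin 2) (i : Fin (m + 4)) :
    wdeg (SimpleGraph.cycleGraph (m + 4)) D c k (i + 1) = contr D c k i + contr D c k (i + 1) := by
  unfold wdeg contr
  trans ∑ w ∈ ({i, i + 1 + 1} : Finset (Fin (m + 4))).filter (fun w => c s(i + 1, w) = k),
    (if s(i + 1, w) ∈ D then 2 else 1)
  · refine Finset.sum_congr ?_ (fun _ _ => by congr)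
    ext w
    simp only [Finset.mem_filter, Finset.mem_univ, true_and, Finset.mem_insert,
      Finset.mem_singleton, cyc_adj, add_left_inj]
    grind
  rw [Finset.sum_filter, Finset.sum_pair (fin_two_ne i)]
  rw [Sym2.eq_swap (a := i + 1) (b := i)]
  rfl

open scoped Fin.CommRing in
lemma valid_iff {m : ℕ} (D : Finset (Sym2 (Fin (m + 4)))) (c : Sym2 (Fin (m + 4)) → Fin 2) :
    ValidDC (SimpleGraph.cycleGraph (m + 4)) D c ↔
    (∀ e ∈ D, ∃ i, e = cycE i) ∧
      ∀ i, contr D c (c (cycE (i + 1))) i ≠ contr D c (c (cycE (i + 1))) (i + 1 + 1) := by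
  have key : ∀ i, (wdeg (SimpleGraph.cycleGraph (m + 4)) D c (c (cycE (i + 1))) (i + 1) ≠
      wdeg (SimpleGraph.cycleGraph (m + 4)) D c (c (cycE (i + 1))) (i + 1 + 1)) ↔
      contr D c (c (cycE (i + 1))) i ≠ contr D c (c (cycE (i + 1))) (i + 1 + 1) := by
    intro i
    rw [wdeg_cyc, wdeg_cyc]
    omega
  unfold ValidDC
  constructor
  · rintro ⟨h1, h2⟩
    refine ⟨?_, fun i => (key i).1 (h2 _ _ ((cyc_adj _ _).2 (Or.inl rfl)))⟩
    intro e he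
    have := h1 he
    induction e using Sym2.ind with
    | _ a b =>
      rw [SimpleGraph.mem_edgeSet, cyc_adj] at this
      rcases this with h | h
      · exact ⟨a, by rw [h]; rfl⟩
      · exact ⟨b, by rw [h, Sym2.eq_swap]; rfl⟩
  · rintro ⟨h1, h2⟩
    constructor
    · intro e he
      obtain ⟨i, rfl⟩ := h1 e he
      exact (cyc_adj _ _).2 (Or.inl rfl)
    · intro u v h
      have key' : ∀ i, (wdeg (SimpleGraph.cycleGraph (m + 4)) D c (c (cycE i)) i ≠
      wdeg (SimpleGraph.cycleGraph (m + 4)) D c (c (cycE i)) (i + 1)) := by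
        intro i
        have := (key (i - 1)).2 (h2 (i - 1))
        rwa [sub_add_cancel] at this
      rcases (cyc_adj _ _).1 h with h | h
      · rw [h]; exact key' u
      · rw [h, Sym2.eq_swap]; exact (key' v).symm

/-- Edge index map `ℕ → Fin`. -/
def finOf (m k : ℕ) : Fin (m + 4) := Fin.ofNat (m + 4) k

lemma finOf_succ (m k : ℕ) : finOf m (k + 1) = finOf m k + 1 := by
  ext
  simp [finOf, Fin.val_add]

lemma finOf_eq (m k l : ℕ) : finOf m k = finOf m l ↔ k % (m + 4) = l % (m + 4) := by
  simp [finOf, Fin.ext_iff]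

lemma finOf_val (m : ℕ) (i : Fin (m + 4)) : finOf m i.val = i := by
  ext
  simp [finOf, Nat.mod_eq_of_lt i.isLt]

lemma flip_iter (x : ℕ → Fin 2) (a t : ℕ) (h : ∀ s < t, x (a + 2 * s + 2) ≠ x (a + 2 * s)) :
    (t % 2 = 0 → x (a + 2 * t) = x a) ∧ (t % 2 = 1 → x (a + 2 * t) ≠ x a) := by
  induction t with
  | zero => simp
  | succ t ih =>
    have := ih (fun s hs => h s (by omega))
    have h1 := h t (by omega)
    rw [show a + 2 * (t + 1) = a + 2 * t + 2 by ring]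
    omega

/-- Lower bound, doubling at most one edge (index 0). -/
lemma lower_one (n : ℕ) (hn : 4 ≤ n) (x : ℕ → Fin 2) (hp : ∀ k, x (k + n) = x k)
    (h : ∀ k, (k + 2) % n ≠ 0 → k % n ≠ 0 → x (k + 2) ≠ x k)
    (h0 : ¬ (x 0 ≠ x 1 ∧ x 2 ≠ x 1)) (h1 : ¬ (x (n - 2) ≠ x (n - 1) ∧ x 0 ≠ x (n - 1))) :
    n % 4 = 0 ∨ n % 4 = 1 := by
  have hlt : ∀ k, 1 ≤ k → k + 2 < n → x (k + 2) ≠ x k := by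
    intro k hk hk2
    apply h
    · rw [Nat.mod_eq_of_lt hk2]; omega
    · rw [Nat.mod_eq_of_lt (by omega)]; omega
  have hlast : x 1 ≠ x (n - 1) := by
    rw [← hp 1, show 1 + n = n - 1 + 2 by omega]
    apply h
    · rw [show n - 1 + 2 = 1 + n by omega, Nat.add_mod_right, Nat.mod_eq_of_lt (by omega)]; omega
    · rw [Nat.mod_eq_of_lt (by omega)]; omega
  by_contra hc
  have hc' : n % 4 = 2 ∨ n % 4 = 3 := by omega
  rcases hc' with hc | hc
  · have := flip_iter x 1 ((n - 2) / 2) (fun s hs => hlt _ (by omega) (by omega))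
    rw [show 1 + 2 * ((n - 2) / 2) = n - 1 by omega] at this
    have := this.1 (by omega)
    exact hlast this.symm
  · have a1 := flip_iter x 1 ((n - 3) / 2) (fun s hs => hlt _ (by omega) (by omega))
    have a2 := flip_iter x 2 ((n - 3) / 2) (fun s hs => hlt _ (by omega) (by omega))
    rw [show 1 + 2 * ((n - 3) / 2) = n - 2 by omega] at a1
    rw [show 2 + 2 * ((n - 3) / 2) = n - 1 by omega] at a2
    have a1 := a1.1 (by omega)
    have a2 := a2.1 (by omega)
    omega

/-- Colors of the construction. -/
def colF (r k : ℕ) : Fin 2 := ⟨((k - r) / 2) % 2, Nat.mod_lt _ (by norm_num)⟩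

lemma contr_finOf {m : ℕ} (D : Finset (Sym2 (Fin (m + 4)))) (c : Sym2 (Fin (m + 4)) → Fin 2)
    (h : ValidDC (SimpleGraph.cycleGraph (m + 4)) D c) (k : ℕ) :
    contr D c (c (cycE (finOf m (k + 1)))) (finOf m k) ≠
      contr D c (c (cycE (finOf m (k + 1)))) (finOf m (k + 2)) := by
  have := ((valid_iff D c).1 h).2 (finOf m k)
  rwa [← finOf_succ, ← finOf_succ] at this

lemma lower_zero (m : ℕ) (c : Sym2 (Fin (m + 4)) → Fin 2)
    (h : ValidDC (SimpleGraph.cycleGraph (m + 4)) ∅ c) : (m + 4) % 2 ≠ 1 := by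
  intro hodd
  have := flip_iter (fun k => c (cycE (finOf m k))) 0 (m + 4) (by
    intro s _
    have := contr_finOf ∅ c h (0 + 2 * s)
    simp only [contr, Finset.notMem_empty, if_false] at this
    intro he
    rw [he] at this
    exact this rfl)
  refine this.2 hodd ?_
  rw [(finOf_eq m (0 + 2 * (m + 4)) 0).2 (by simp)]

lemma lower_le_one (m : ℕ) (D : Finset (Sym2 (Fin (m + 4)))) (c : Sym2 (Fin (m + 4)) → Fin 2)
    (h : ValidDC (SimpleGraph.cycleGraph (m + 4)) D c) (hD : D.card ≤ 1) :
    (m + 4) % 4 = 0 ∨ (m + 4) % 4 = 1 := by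
  obtain ⟨a, ha⟩ : ∃ a : ℕ, ∀ k, cycE (finOf m k) ∈ D → k % (m + 4) = a % (m + 4) := by
    by_cases hne : ∃ e, e ∈ D
    · obtain ⟨e, he⟩ := hne
      obtain ⟨i, rfl⟩ := ((valid_iff D c).1 h).1 e he
      refine ⟨i.val, fun k hk => ?_⟩
      have := cycE_inj (Finset.card_le_one.1 hD _ hk _ he)
      rw [← finOf_eq, this, finOf_val]
    · exact ⟨0, fun k hk => absurd ⟨_, hk⟩ hne⟩
  have hE : ∀ k, cycE (finOf m (a + k)) ∈ D → k % (m + 4) = 0 := by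
    intro k hk
    have := ha _ hk
    have h2 : (a + k) ≡ a + 0 [MOD (m + 4)] := this
    have := Nat.ModEq.add_left_cancel' a h2
    simpa [Nat.ModEq] using this
  have hper : ∀ k, finOf m (a + (k + (m + 4))) = finOf m (a + k) := by
    intro k
    rw [finOf_eq, ← add_assoc, Nat.add_mod_right]
  apply lower_one (m + 4) (by omega) (fun k => c (cycE (finOf m (a + k))))
  · intro k
    rw [hper]
  · intro k h1 h2 he
    have n1 : cycE (finOf m (a + (k + 2))) ∉ D := fun hh => h1 (hE _ hh)
    have n2 : cycE (finOf m (a + k)) ∉ D := fun hh => h2 (hE _ hh)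
    have := contr_finOf D c h (a + k)
    rw [add_assoc a k 2] at this
    simp only [contr, n1, n2, he, if_false] at this
    exact this rfl
  · rintro ⟨h1, h2⟩
    have := contr_finOf D c h a
    simp only [contr] at this
    simp only [add_zero] at h1 h2
    simp [h1, h2] at this
  · rintro ⟨h1, h2⟩
    have := contr_finOf D c h (a + (m + 2))
    have e := hper 0
    simp only [contr] at this
    simp only [add_zero] at h1 h2 e
    rw [show m + 4 - 2 = m + 2 by omega, show m + 4 - 1 = m + 3 by omega] at h1
    rw [show m + 4 - 1 = m + 3 by omega] at h2
    simp only [zero_add] at e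
    rw [show a + (m + 2) + 1 = a + (m + 3) by ring, show a + (m + 2) + 2 = a + (m + 4) by ring,
      e] at this
    simp [h1, h2] at this

lemma upper (m : ℕ) (f : ℕ → Fin 2) (S : Finset ℕ) (hS : ∀ k ∈ S, k < m + 4)
    (hv : ∀ k < m + 4, ∀ k1 k2 : ℕ, k1 = (if k + 1 = m + 4 then 0 else k + 1) →
      k2 = (if k1 + 1 = m + 4 then 0 else k1 + 1) →
      (if f k = f k1 then (if k ∈ S then 2 else 1) else 0) ≠
      (if f k2 = f k1 then (if k2 ∈ S then 2 else 1) else 0)) :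
    ∃ (D : Finset (Sym2 (Fin (m + 4)))) (c : Sym2 (Fin (m + 4)) → Fin 2),
        ValidDC (SimpleGraph.cycleGraph (m + 4)) D c ∧ D.card = S.card := by
  refine ⟨S.image (fun k => cycE (finOf m k)),
    fun e => f (Function.invFun cycE e).val, ?_, ?_⟩
  · rw [valid_iff]
    constructor
    · intro e he
      obtain ⟨k, _, rfl⟩ := Finset.mem_image.1 he
      exact ⟨_, rfl⟩
    · have hm : ∀ j : Fin (m + 4), cycE j ∈ S.image (fun k => cycE (finOf m k)) ↔ j.val ∈ S := by
        intro j
        rw [Finset.mem_image]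
        constructor
        · rintro ⟨k, hk, he⟩
          have := congrArg Fin.val (cycE_inj he)
          simp only [finOf, Fin.val_ofNat, Nat.mod_eq_of_lt (hS k hk)] at this
          rwa [← this]
        · intro hj
          exact ⟨j.val, hj, by rw [finOf_val]⟩
      have hs : ∀ j : Fin (m + 4), (j + 1).val = if j.val + 1 = m + 4 then 0 else j.val + 1 := by
        intro j
        rw [Fin.val_add, Fin.val_one]
        split_ifs with h
        · rw [h, Nat.mod_self]
        · exact Nat.mod_eq_of_lt (by omega)
      intro i
      simp only [contr, Function.leftInverse_invFun cycE_inj _, hm]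
      exact hv i.val i.isLt _ _ (hs i) (hs (i + 1))
  · apply Finset.card_image_of_injOn
    intro k hk l hl he
    have := congrArg Fin.val (cycE_inj he)
    simpa only [finOf, Fin.val_ofNat, Nat.mod_eq_of_lt (hS k hk), Nat.mod_eq_of_lt (hS l hl)]
      using this

lemma colF_eq (r k l : ℕ) : colF r k = colF r l ↔ ((k - r) / 2) % 2 = ((l - r) / 2) % 2 := by
  simp [colF]

lemma upper_r (m r : ℕ) (hr : (m + 4) % 4 = r) (S : Finset ℕ)
    (hS : ∀ k, k ∈ S ↔ (2 ≤ k ∧ k ≤ 3 ∧ k < 2 + r)) :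
    ∃ (D : Finset (Sym2 (Fin (m + 4)))) (c : Sym2 (Fin (m + 4)) → Fin 2),
        ValidDC (SimpleGraph.cycleGraph (m + 4)) D c ∧ D.card = S.card := by
  apply upper m (colF r) S
  · intro k hk
    have := (hS k).1 hk
    omega
  · intro k hk k1 k2 h1 h2
    simp only [colF_eq, hS]
    have hr4 : r < 4 := by omega
    split_ifs at h1 h2 ⊢ <;> omega

/-- For `n ≥ 4`, `D_lir(C_n)` equals `0` if `n ≡ 0 (mod 4)`, `1` if `n ≡ 1 (mod 4)`,
and `2` otherwise: there is a valid doubling-coloring with that many doubled edges,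
and none with fewer. -/
theorem Dlir_cycleGraph (n : ℕ) (hn : 4 ≤ n) :
    (∃ (D : Finset (Sym2 (Fin n))) (c : Sym2 (Fin n) → Fin 2),
        ValidDC (SimpleGraph.cycleGraph n) D c ∧
        D.card = (if n % 4 = 0 then 0 else if n % 4 = 1 then 1 else 2)) ∧
    (∀ (D : Finset (Sym2 (Fin n))) (c : Sym2 (Fin n) → Fin 2),
        ValidDC (SimpleGraph.cycleGraph n) D c →
        (if n % 4 = 0 then 0 else if n % 4 = 1 then 1 else 2) ≤ D.card) := by
  obtain ⟨m, rfl⟩ : ∃ m, n = m + 4 := ⟨n - 4, by omega⟩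
  constructor
  · by_cases h0 : (m + 4) % 4 = 0
    · simp only [h0, if_true]
      exact upper_r m 0 h0 ∅ (fun k => ⟨fun h => absurd h (by simp), fun h => by omega⟩)
    · by_cases h1 : (m + 4) % 4 = 1
      · simp only [h1, if_true]
        exact upper_r m 1 h1 {2} (by intro k; simp only [Finset.mem_singleton]; omega)
      · simp only [h0, h1, if_false]
        exact upper_r m _ rfl {2, 3} (by
          intro k; simp only [Finset.mem_insert, Finset.mem_singleton]; omega)
  · intro D c h
    have hl := lower_le_one m D c h
    have hz : D.card = 0 → (m + 4) % 2 ≠ 1 := by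
      intro h0
      rw [Finset.card_eq_zero] at h0
      subst h0
      exact lower_zero m c h
    split_ifs <;> omega
end

section
/- If T is a tree of order at least three, then D_lir(T) ≤ 1; that is, T admits a valid doubling-coloring (D, c) with |D| ≤ 1. -/
open Finset
open scoped Classical

lemma exists_split_of {ι : Type*} (S : Finset ι) (a : ι → ℕ) (w s : ℕ) (hw : s ≠ S.card - s + w)
    (hs : (S.filter (fun i => a i = s)).card + s ≤ S.card)
    (hU : (S.filter (fun i => a i = S.card - s + w)).card ≤ s) :
    ∃ B ⊆ S, B.card = s ∧ (∀ i ∈ B, a i ≠ B.card) ∧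
      ∀ i ∈ S \ B, a i ≠ (S \ B).card + w := by
  obtain ⟨B, h1, h2, h3⟩ := Finset.exists_subsuperset_card_eq
    (s := S.filter (fun i => a i = S.card - s + w)) (t := S \ (S.filter (fun i => a i = s))) (n := s)
    (by
      intro i hi
      simp only [mem_filter, mem_sdiff] at hi ⊢
      refine ⟨hi.1, fun h => hw (by omega)⟩) hU
    (by
      rw [card_sdiff_of_subset (filter_subset _ _)]; omega)
  have hBS : B ⊆ S := h2.trans sdiff_subset
  refine ⟨B, hBS, h3, ?_, ?_⟩
  · intro i hi h
    have := h2 hi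
    simp only [mem_filter, mem_sdiff] at this
    exact this.2 ⟨this.1, by omega⟩
  · intro i hi h
    rw [card_sdiff_of_subset hBS, h3] at h
    rw [mem_sdiff] at hi
    exact hi.2 (h1 (by simp [hi.1, h]))

lemma exists_split {ι : Type*} (S : Finset ι) (a : ι → ℕ) (w : ℕ) (hw : w = 1 ∨ w = 2)
    (hS : S.card ≠ 1) :
    ∃ B ⊆ S, (S.card = 0 ∨ B.card < S.card) ∧ (∀ i ∈ B, a i ≠ B.card) ∧
      ∀ i ∈ S \ B, a i ≠ (S \ B).card + w := by
  set k := S.card with hk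
  let C : ℕ → Finset ι := fun s => S.filter (fun i => a i = s ∨ a i = k - s + w)
  have hsub1 : ∀ s, (S.filter (fun i => a i = s)).card ≤ (C s).card := fun s =>
    card_le_card (fun i hi => by simp only [C, mem_filter] at hi ⊢; tauto)
  have hsub2 : ∀ s, (S.filter (fun i => a i = k - s + w)).card ≤ (C s).card := fun s =>
    card_le_card (fun i hi => by simp only [C, mem_filter] at hi ⊢; tauto)
  by_cases hex : ∃ s, s ≤ k / 2 ∧ (C s).card ≤ s
  · obtain ⟨s, hs, hC⟩ := hex
    have h1 := hsub1 s
    have h2 := hsub2 s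
    obtain ⟨B, hB, hBc, h⟩ := exists_split_of S a w s (by omega) (by omega) (by rw [← hk]; omega)
    exact ⟨B, hB, by omega, h⟩
  push Not at hex
  have hcard : ∀ n ≤ k / 2 + 1, ((Finset.range n).biUnion C).card = ∑ s ∈ Finset.range n, (C s).card := by
    intro n hn
    apply card_biUnion
    intro x hx y hy hxy
    simp only [coe_range, Set.mem_Iio] at hx hy
    refine Finset.disjoint_left.2 ?_
    intro i hi hi'
    simp only [C, mem_filter] at hi hi'
    omega
  have hle : ∀ n ≤ k / 2 + 1, ∑ s ∈ Finset.range n, (s + 1) ≤ k := by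
    intro n hn
    calc _ ≤ ∑ s ∈ Finset.range n, (C s).card := sum_le_sum (fun s hs => by
            have := hex s (by rw [mem_range] at hs; omega); omega)
      _ = _ := (hcard n hn).symm
      _ ≤ k := card_le_card (biUnion_subset.2 fun s _ => filter_subset _ _)
  have hk3 : k = 3 := by
    have h0 := hle (k / 2 + 1) le_rfl
    rw [sum_add_distrib] at h0
    have h1 := Finset.sum_range_id_mul_two (k / 2 + 1)
    simp only [sum_const, card_range, smul_eq_mul, mul_one] at h0
    simp only [Nat.add_sub_cancel] at h1
    have h2 : (k/2+1) * (k/2) ≤ 2 * (k - (k/2+1)) := by omega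
    have h3 : k / 2 < 2 := by
      by_contra hc
      have : (k/2+1) * 2 ≤ (k/2+1) * (k/2) := Nat.mul_le_mul_left _ (by omega)
      omega
    interval_cases hh : k / 2 <;> omega
  have h01 := hcard 2 (by omega)
  simp only [sum_range_succ, range_zero, sum_empty] at h01
  have e0 := hex 0 (by omega)
  have e1 := hex 1 (by omega)
  have hall : (Finset.range 2).biUnion C = S := by
    apply eq_of_subset_of_card_le (biUnion_subset.2 fun s _ => filter_subset _ _)
    change S.card ≤ ((Finset.range 2).biUnion C).card
    omega
  have hno : ∀ i ∈ S, a i ≠ 2 ∧ a i ≠ k - 2 + w := by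
    intro i hi
    rw [← hall] at hi
    simp only [mem_biUnion, mem_range, C, mem_filter] at hi
    obtain ⟨s, hs, -, h⟩ := hi
    omega
  obtain ⟨B, hB, hBc⟩ := Finset.exists_subset_card_eq (s := S) (n := 2) (by omega)
  refine ⟨B, hB, by omega, ?_, ?_⟩
  · intro i hi
    rw [hBc]
    exact (hno i (hB hi)).1
  · intro i hi
    rw [card_sdiff_of_subset hB, hBc]
    exact (hno i (mem_sdiff.1 hi).1).2

lemma exists_split_one {ι : Type*} (S : Finset ι) (a : ι → ℕ) :
    ∃ B ⊆ S, (∀ i ∈ B, a i ≠ B.card) ∧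
      ∀ i ∈ S \ B, a i ≠ (S \ B).card + 1 := by
  by_cases hS : S.card = 1
  · obtain ⟨x, rfl⟩ := card_eq_one.1 hS
    by_cases h : a x = 2
    · exact ⟨{x}, by simp, by simp [h], by simp⟩
    · exact ⟨∅, by simp, by simp, by simpa using h⟩
  · obtain ⟨B, h1, -, h⟩ := exists_split S a 1 (Or.inl rfl) hS
    exact ⟨B, h1, h⟩

lemma exists_split_top {ι : Type*} (S : Finset ι) (a : ι → ℕ) (hS : S.card ≠ 0) :
    ∃ w, (w = 1 ∨ w = 2) ∧ ∃ B ⊆ S, (S \ B).card ≠ 0 ∧ (∀ i ∈ B, a i ≠ B.card) ∧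
      ∀ i ∈ S \ B, a i ≠ (S \ B).card + w := by
  by_cases hS : S.card = 1
  · obtain ⟨x, rfl⟩ := card_eq_one.1 hS
    by_cases h : a x = 2
    · exact ⟨2, by simp, ∅, by simp, by simp, by simp, by simp [h]⟩
    · exact ⟨1, by simp, ∅, by simp, by simp, by simp, by simpa using h⟩
  · obtain ⟨B, h1, h2, h⟩ := exists_split S a 2 (Or.inr rfl) hS
    exact ⟨2, by simp, B, h1, by rw [card_sdiff_of_subset h1]; omega, h⟩

lemma exists_parent {V : Type*} (T : SimpleGraph V) (hT : T.IsTree) (r : V) :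
    ∃ p : V → V, (∀ v, v ≠ r → T.Adj v (p v) ∧ T.dist r (p v) < T.dist r v) ∧
      ∀ x y, T.Adj x y → (x ≠ r ∧ p x = y) ∨ (y ≠ r ∧ p y = x) := by
  have huniq : ∀ x y z, T.Adj x y → T.Adj x z → T.dist r x = T.dist r y + 1 →
      T.dist r x = T.dist r z + 1 → y = z := by
    intro x y z hy hz hdy hdz
    obtain ⟨P, hP⟩ := (hT.connected y r).exists_walk_length_eq_dist
    obtain ⟨Q, hQ⟩ := (hT.connected z r).exists_walk_length_eq_dist
    have e1 : (SimpleGraph.Walk.cons hy P).IsPath := by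
      apply SimpleGraph.Walk.isPath_of_length_eq_dist
      rw [SimpleGraph.Walk.length_cons, hP, T.dist_comm, ← hdy, T.dist_comm]
    have e2 : (SimpleGraph.Walk.cons hz Q).IsPath := by
      apply SimpleGraph.Walk.isPath_of_length_eq_dist
      rw [SimpleGraph.Walk.length_cons, hQ, T.dist_comm, ← hdz, T.dist_comm]
    have := (hT.existsUnique_path x r).unique e1 e2
    have := congrArg SimpleGraph.Walk.snd this
    simpa using this
  have hex : ∀ v, ∃ y, v ≠ r → T.Adj v y ∧ T.dist r v = T.dist r y + 1 := by
    intro v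
    by_cases hv : v = r
    · exact ⟨v, fun h => absurd hv h⟩
    obtain ⟨P, hP⟩ := (hT.connected v r).exists_walk_length_eq_dist
    cases P with
    | nil => exact absurd rfl hv
    | @cons _ y _ h P =>
      refine ⟨y, fun _ => ⟨h, ?_⟩⟩
      rw [SimpleGraph.Walk.length_cons] at hP
      have h1 := SimpleGraph.dist_le P
      have h2 := hT.dist_eq_dist_add_one_of_adj r h
      rw [SimpleGraph.dist_comm] at h1 hP
      omega
  choose p hp using hex
  refine ⟨p, fun v hv => ⟨(hp v hv).1, by have := (hp v hv).2; omega⟩, ?_⟩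
  intro x y hxy
  rcases hT.dist_eq_dist_add_one_of_adj r hxy with h | h
  · have hx : x ≠ r := by rintro rfl; simp at h
    exact Or.inl ⟨hx, huniq x _ _ (hp x hx).1 hxy (hp x hx).2 h⟩
  · have hx : y ≠ r := by rintro rfl; simp at h
    exact Or.inr ⟨hx, huniq y _ _ (hp y hx).1 hxy.symm (hp y hx).2 h⟩

lemma exists_labels {V : Type*} [Fintype V] (d : V → ℕ) (ch : V → Finset V)
    (hch : ∀ v, ∀ w ∈ ch v, d v < d w) :
    ∃ B : V → Finset V, ∀ v, B v ⊆ ch v ∧ (∀ i ∈ B v, (ch i \ B i).card + 1 ≠ (B v).card) ∧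
      ∀ i ∈ ch v \ B v, (ch i \ B i).card + 1 ≠ (ch v \ B v).card + 1 := by
  have hwf : WellFounded (fun x y : V => d y < d x) := by
    have : IsTrans V (fun x y : V => d y < d x) := ⟨fun a b c h1 h2 => lt_trans h2 h1⟩
    have : Std.Irrefl (fun x y : V => d y < d x) := ⟨fun a h => lt_irrefl _ h⟩
    exact Finite.wellFounded_of_trans_of_irrefl _
  choose f hf1 hf2 hf3 using fun (S : Finset V) (a : V → ℕ) => exists_split_one S a
  let ext : (v : V) → ((w : V) → d v < d w → Finset V) → V → ℕ := fun v rec w =>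
    if h : d v < d w then (ch w \ rec w h).card + 1 else 0
  let B : V → Finset V := hwf.fix (fun v rec => f (ch v) (ext v rec))
  have hB : ∀ v, B v = f (ch v) (ext v (fun w _ => B w)) := fun v => hwf.fix_eq _ v
  have hext : ∀ v, ∀ w ∈ ch v, ext v (fun w _ => B w) w = (ch w \ B w).card + 1 := by
    intro v w hw
    simp [ext, hch v w hw]
  refine ⟨B, fun v => ?_⟩
  have h1 := hf1 (ch v) (ext v (fun w _ => B w))
  have h2 := hf2 (ch v) (ext v (fun w _ => B w))
  have h3 := hf3 (ch v) (ext v (fun w _ => B w))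
  rw [← hB] at h1 h2 h3
  refine ⟨h1, fun i hi => ?_, fun i hi => ?_⟩
  · rw [← hext v i (h1 hi)]; exact h2 i hi
  · rw [← hext v i (mem_sdiff.1 hi).1]; exact h3 i hi

lemma exists_col {V : Type*} (d : V → ℕ) (p : V → V) (r : V) (F : V → Prop)
    (hp : ∀ v, v ≠ r → d (p v) < d v) :
    ∃ col : V → Fin 2, ∀ v, v ≠ r → col v = if F v then col (p v) + 1 else col (p v) := by
  have hwf : WellFounded (fun x y : V => d x < d y) := (measure d).wf
  let step : (v : V) → ((y : V) → d y < d v → Fin 2) → Fin 2 := fun v rec =>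
    if h : d (p v) < d v then (if F v then rec (p v) h + 1 else rec (p v) h) else 0
  refine ⟨hwf.fix step, fun v hv => ?_⟩
  rw [hwf.fix_eq]
  exact dif_pos (hp v hv)

/-- Every tree of order at least three admits a valid doubling-coloring with at most one
doubled edge, i.e. `D_lir(T) ≤ 1`. -/
theorem Dlir_tree_le_one {V : Type*} [Fintype V] (T : SimpleGraph V)
    (htree : T.Connected ∧ T.IsAcyclic) (horder : 3 ≤ Fintype.card V) :
    ∃ (D : Finset (Sym2 V)) (c : Sym2 V → Fin 2), ValidDC T D c ∧ D.card ≤ 1 := by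
  have hT : T.IsTree := ⟨htree.1, htree.2⟩
  have : Nontrivial V := Fintype.one_lt_card_iff_nontrivial.1 (by omega)
  obtain ⟨r, hr⟩ := hT.exists_vert_degree_one_of_nontrivial
  obtain ⟨u, hru, hu⟩ := SimpleGraph.degree_eq_one_iff_existsUnique_adj.1 hr
  obtain ⟨p, hp, hadj⟩ := exists_parent T hT r
  set d : V → ℕ := T.dist r with hd
  have hur : u ≠ r := hru.ne'
  have hpr : ∀ v, v ≠ r → p v = r → v = u := fun v hv h =>
    hu v (by have := (hp v hv).1; rw [h] at this; exact this.symm)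
  have hpu : p u = r := by
    rcases hadj r u hru with h | h
    · exact absurd rfl h.1
    · exact h.2
  have hinj : ∀ x y, x ≠ r → y ≠ r → s(x, p x) = s(y, p y) → x = y := by
    intro x y hx hy h
    rcases Sym2.eq_iff.1 h with h | h
    · exact h.1
    · have h1 := (hp x hx).2
      have h2 := (hp y hy).2
      rw [h.2] at h1
      rw [← h.1] at h2
      omega
  let ch : V → Finset V := fun v => Finset.univ.filter (fun w => w ≠ r ∧ p w = v)
  have hmem : ∀ v w, w ∈ ch v ↔ w ≠ r ∧ p w = v := by intro v w; simp [ch]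
  have hchd : ∀ v, ∀ w ∈ ch v, d v < d w := by
    intro v w hw
    rw [hmem] at hw
    have := (hp w hw.1).2
    rwa [hw.2] at this
  obtain ⟨B, hB⟩ := exists_labels d ch hchd
  have hchu : (ch u).card ≠ 0 := by
    intro h0
    rw [card_eq_zero] at h0
    -- every vertex is `r` or `u`
    have hall : ∀ n v, d v = n → v = r ∨ v = u := by
      intro n
      induction n using Nat.strong_induction_on with
      | _ n ih =>
        intro v hv
        by_contra hc
        push Not at hc
        rcases ih _ (hv ▸ (hp v hc.1).2) (p v) rfl with h | h
        · exact hc.2 (hpr v hc.1 h)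
        · have : v ∈ ch u := (hmem u v).2 ⟨hc.1, h⟩
          rw [h0] at this
          simp at this
    have : (Finset.univ : Finset V) ⊆ {r, u} := fun v _ => by
      rcases hall _ v rfl with h | h <;> simp [h]
    have := card_le_card this
    have h2 := Finset.card_le_two (a := r) (b := u)
    rw [card_univ] at this
    omega
  obtain ⟨w, hw, Bu, hBu1, hBu2, hBu3, hBu4⟩ :=
    exists_split_top (ch u) (fun i => (ch i \ B i).card + 1) hchu
  let B' : V → Finset V := fun v => if v = u then Bu else B v
  let wt : V → ℕ := fun v => if v = u then w else 1
  have hchne : ∀ v, ∀ i ∈ ch v, v ≠ r → i ≠ u := by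
    rintro v i hi hv rfl
    exact hv (((hmem v i).1 hi).2.symm.trans hpu)
  have hsub : ∀ v, B' v ⊆ ch v := by
    intro v
    by_cases h : v = u
    · subst h; simpa [B'] using hBu1
    · simpa [B', h] using (hB v).1
  have hB1 : ∀ v, v ≠ r → ∀ i ∈ B' v, (ch i \ B' i).card + wt i ≠ (B' v).card := by
    intro v hv i hi
    have hiu := hchne v i (hsub v hi) hv
    by_cases h : v = u
    · subst h; simp only [B', wt, if_true, hiu, if_false] at hi ⊢; exact hBu3 i hi
    · simp only [B', wt, h, hiu, if_false] at hi ⊢; exact (hB v).2.1 i hi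
  have hB2 : ∀ v, v ≠ r → ∀ i ∈ ch v \ B' v,
      (ch i \ B' i).card + wt i ≠ (ch v \ B' v).card + wt v := by
    intro v hv i hi
    have hiu := hchne v i (mem_sdiff.1 hi).1 hv
    by_cases h : v = u
    · subst h; simp only [B', wt, if_true, hiu, if_false] at hi ⊢; exact hBu4 i hi
    · simp only [B', wt, h, hiu, if_false] at hi ⊢; exact (hB v).2.2 i hi
  have hBu5 : (ch u \ B' u).card ≠ 0 := by simpa [B'] using hBu2
  obtain ⟨col, hcol⟩ := exists_col d p r (fun v => v ∈ B' (p v)) (fun v hv => (hp v hv).2)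
  let c : Sym2 V → Fin 2 := fun e => if ∃ x, x ≠ r ∧ e = s(x, p x) ∧ col x = 1 then 1 else 0
  have hc : ∀ x, x ≠ r → c s(x, p x) = col x := by
    intro x hx
    by_cases h : col x = 1
    · have : ∃ y, y ≠ r ∧ s(x, p x) = s(y, p y) ∧ col y = 1 := ⟨x, hx, rfl, h⟩
      simp only [c, if_pos this, h]
    · have : ¬ ∃ y, y ≠ r ∧ s(x, p x) = s(y, p y) ∧ col y = 1 := by
        rintro ⟨y, hy, h1, h2⟩
        rw [hinj x y hx hy h1] at h
        exact h h2
      simp only [c, if_neg this]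
      omega
  let D : Finset (Sym2 V) := if w = 2 then {s(u, r)} else ∅
  have hDwt : ∀ x, x ≠ r → (if s(x, p x) ∈ D then 2 else 1) = wt x := by
    intro x hx
    have : s(x, p x) = s(u, r) ↔ x = u := by
      constructor
      · intro h; rw [← hpu] at h; exact hinj x u hx hur h
      · rintro rfl; rw [hpu]
    rcases hw with rfl | rfl
    · simp [D, wt]
    · simp [D, wt, this]
  have hDsub : ↑D ⊆ T.edgeSet := by
    intro e he
    rcases hw with rfl | rfl
    · simp [D] at he
    · simp [D] at he
      subst he
      exact hru.symm
  have hDcard : D.card ≤ 1 := by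
    rcases hw with rfl | rfl <;> simp [D]
  -- weighted degrees
  have hdeg : ∀ v, v ≠ r → ∀ i, wdeg T D c i v =
      ((ch v).filter (fun x => col x = i)).card + (if col v = i then wt v else 0) := by
    intro v hv i
    have hpv := (hp v hv).1
    have hnot : p v ∉ (ch v).filter (fun x => col x = i) := by
      intro h
      have h1 := hchd v _ (mem_filter.1 h).1
      have h2 := (hp v hv).2
      omega
    have hsum : ∑ x ∈ (ch v).filter (fun x => col x = i), (if s(v, x) ∈ D then 2 else 1) =
        ((ch v).filter (fun x => col x = i)).card := by
      rw [card_eq_sum_ones]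
      apply sum_congr rfl
      intro x hx
      have hx1 := (mem_filter.1 hx).1
      have hx2 := (hmem v x).1 hx1
      have := hDwt x hx2.1
      rw [hx2.2, Sym2.eq_swap] at this
      rw [this]
      simp [wt, hchne v x hx1 hv]
    unfold wdeg
    by_cases hi : col v = i
    · have : Finset.univ.filter (fun x => T.Adj v x ∧ c s(v, x) = i) =
          insert (p v) ((ch v).filter (fun x => col x = i)) := by
        ext x
        simp only [mem_filter, mem_univ, true_and, mem_insert, hmem]
        constructor
        · rintro ⟨h1, h2⟩
          rcases hadj v x h1 with h | h
          · exact Or.inl h.2.symm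
          · refine Or.inr ⟨h, ?_⟩
            rw [← h.2, Sym2.eq_swap, hc x h.1] at h2
            exact h2
        · rintro (rfl | ⟨⟨h1, rfl⟩, h3⟩)
          · exact ⟨hpv, by rw [hc v hv]; exact hi⟩
          · exact ⟨(hp x h1).1.symm, by rw [Sym2.eq_swap, hc x h1]; exact h3⟩
      rw [this, sum_insert hnot, hsum, hDwt v hv, if_pos hi, add_comm]
    · have : Finset.univ.filter (fun x => T.Adj v x ∧ c s(v, x) = i) =
          ((ch v).filter (fun x => col x = i)) := by
        ext x
        simp only [mem_filter, mem_univ, true_and, hmem]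
        constructor
        · rintro ⟨h1, h2⟩
          rcases hadj v x h1 with h | h
          · rw [← h.2, hc v hv] at h2
            exact absurd h2 hi
          · refine ⟨h, ?_⟩
            rw [← h.2, Sym2.eq_swap, hc x h.1] at h2
            exact h2
        · rintro ⟨⟨h1, rfl⟩, h3⟩
          exact ⟨(hp x h1).1.symm, by rw [Sym2.eq_swap, hc x h1]; exact h3⟩
      rw [this, hsum, if_neg hi, add_zero]
  have hcolB : ∀ v, ∀ x ∈ ch v, (col x = col v ↔ x ∉ B' v) := by
    intro v x hx
    have hx' := (hmem v x).1 hx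
    have := hcol x hx'.1
    simp only [hx'.2] at this
    rw [this]
    by_cases h : x ∈ B' v
    · simp [h]
    · simp [h]
  have hdeg1 : ∀ v, v ≠ r → wdeg T D c (col v) v = (ch v \ B' v).card + wt v := by
    intro v hv
    rw [hdeg v hv, if_pos rfl]
    congr 2
    ext x
    simp only [mem_filter, mem_sdiff]
    exact and_congr_right (hcolB v x)
  have hdeg2 : ∀ v, v ≠ r → ∀ i, col v ≠ i → wdeg T D c i v = (B' v).card := by
    intro v hv i hi
    rw [hdeg v hv, if_neg hi, add_zero]
    congr 1
    ext x
    simp only [mem_filter]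
    constructor
    · rintro ⟨h1, rfl⟩
      by_contra h
      exact hi ((hcolB v x h1).2 h).symm
    · intro h
      have h1 := hsub v h
      refine ⟨h1, ?_⟩
      have h2 : col x ≠ col v := fun h3 => (hcolB v x h1).1 h3 h
      omega
  have hdegr : wdeg T D c (col u) r = wt u := by
    unfold wdeg
    have : Finset.univ.filter (fun x => T.Adj r x ∧ c s(r, x) = col u) = {u} := by
      ext x
      simp only [mem_filter, mem_univ, true_and, mem_singleton]
      constructor
      · exact fun h => hu x h.1
      · rintro rfl
        have := hc x hur
        rw [hpu, Sym2.eq_swap] at this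
        exact ⟨hru, this⟩
    rw [this, sum_singleton, ← hDwt u hur, hpu, Sym2.eq_swap]
  have hmain : ∀ x, x ≠ r → wdeg T D c (col x) x ≠ wdeg T D c (col x) (p x) := by
    intro x hx
    by_cases hpx : p x = r
    · obtain rfl := hpr x hx hpx
      rw [hpx, hdegr, hdeg1 x hx]
      omega
    · have hxc : x ∈ ch (p x) := (hmem _ _).2 ⟨hx, rfl⟩
      rw [hdeg1 x hx]
      by_cases hxB : x ∈ B' (p x)
      · rw [hdeg2 (p x) hpx (col x) (fun h => (hcolB _ x hxc).1 h.symm hxB)]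
        exact hB1 _ hpx x hxB
      · rw [(hcolB _ x hxc).2 hxB, hdeg1 _ hpx]
        exact hB2 _ hpx x (mem_sdiff.2 ⟨hxc, hxB⟩)
  refine ⟨D, c, ⟨hDsub, ?_⟩, hDcard⟩
  intro x y hxy
  rcases hadj x y hxy with ⟨h, rfl⟩ | ⟨h, rfl⟩
  · rw [hc x h]; exact hmain x h
  · rw [Sym2.eq_swap, hc y h]; exact (hmain y h).symm
end

section
/- Let G be a simple graph containing eight distinct vertices x0, x1, y0, y1, y2, z0, z1, z2 such that x0y0, x0z0, y0z0, x0x1, y0y1, y1y2, z0z1, z1z2 are edges of G, and such that in G the degrees satisfy deg(x0) = deg(y0) = deg(z0) = 3, deg(y1) = deg(z1) = 2 and deg(y2) = deg(z2) = 1. Then every valid doubling-coloring (D, c) of G satisfies D ∩ {x0y0, x0z0, y0z0, x0x1, y0y1, y1y2, z0z1, z1z2} ≠ ∅. -/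
open Finset
open scoped Classical

/-- The degree of a vertex (as the number of neighbors). -/
noncomputable def ndeg {V : Type*} (G : SimpleGraph V) (v : V) : ℕ :=
  {w | G.Adj v w}.ncard

/-- Weighted degree as a sum over any finset that enumerates the neighborhood, when
no incident edge is doubled. -/
lemma wdeg_of_sub {V : Type*} [Fintype V] (G : SimpleGraph V)
    (D : Finset (Sym2 V)) (c : Sym2 V → Fin 2) (i : Fin 2) (v : V) (S : Finset V)
    (hS : ∀ w ∈ S, G.Adj v w) (hc : ndeg G v = S.card) (hD : ∀ w ∈ S, s(v, w) ∉ D) :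
    wdeg G D c i v = ∑ w ∈ S, if c s(v, w) = i then 1 else 0 := by
  have hset : (S : Set V) = {w | G.Adj v w} := by
    apply Set.eq_of_subset_of_ncard_le
    · intro w hw
      exact hS w (by simpa using hw)
    · rw [Set.ncard_coe_finset, ← hc]
      rfl
    · exact Set.toFinite _
  have hmem : ∀ w, G.Adj v w ↔ w ∈ S := by
    intro w
    have := Set.ext_iff.mp hset w
    simpa using this.symm
  have hfil : Finset.univ.filter (fun w => G.Adj v w ∧ c s(v, w) = i)
      = S.filter (fun w => c s(v, w) = i) := by
    ext w
    simp [hmem]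
  unfold wdeg
  rw [hfil, Finset.sum_filter]
  apply Finset.sum_congr rfl
  intro w hw
  simp [hD w hw]

/-- If `G` contains a pendant triangle `x₀y₀z₀` whose vertices all have degree three,
with pendant paths `y₀y₁y₂` and `z₀z₁z₂` of length two and `x₁` the third neighbor of
`x₀`, then every valid doubling-coloring of `G` must double one of the listed edges. -/
theorem doubling_on_pendant_triangle {V : Type*} [Fintype V] (G : SimpleGraph V)
    (x0 x1 y0 y1 y2 z0 z1 z2 : V)
    (hdist : List.Nodup [x0, x1, y0, y1, y2, z0, z1, z2])
    (hxy : G.Adj x0 y0) (hxz : G.Adj x0 z0) (hyz : G.Adj y0 z0)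
    (hxx : G.Adj x0 x1) (hyy1 : G.Adj y0 y1) (hy12 : G.Adj y1 y2)
    (hzz1 : G.Adj z0 z1) (hz12 : G.Adj z1 z2)
    (hdx0 : ndeg G x0 = 3) (hdy0 : ndeg G y0 = 3) (hdz0 : ndeg G z0 = 3)
    (hdy1 : ndeg G y1 = 2) (hdz1 : ndeg G z1 = 2)
    (hdy2 : ndeg G y2 = 1) (hdz2 : ndeg G z2 = 1) :
    ∀ (D : Finset (Sym2 V)) (c : Sym2 V → Fin 2), ValidDC G D c →
      (s(x0, y0) ∈ D ∨ s(x0, z0) ∈ D ∨ s(y0, z0) ∈ D ∨ s(x0, x1) ∈ D ∨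
        s(y0, y1) ∈ D ∨ s(y1, y2) ∈ D ∨ s(z0, z1) ∈ D ∨ s(z1, z2) ∈ D) := by
  intro D c hv
  by_contra hcon
  push Not at hcon
  obtain ⟨n1, n2, n3, n4, n5, n6, n7, n8⟩ := hcon
  simp only [List.nodup_cons, List.mem_cons, List.not_mem_nil, not_or, or_false] at hdist
  obtain ⟨⟨a1, a2, a3, a4, a5, a6, a7⟩, ⟨b2, b3, b4, b5, b6, b7⟩, ⟨c3, c4, c5, c6, c7⟩,
    ⟨d4, d5, d6, d7⟩, ⟨e5, e6, e7⟩, ⟨f6, f7⟩, g7, -⟩ := hdist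
  have hx (i) : wdeg G D c i x0 = (if c s(x0, y0) = i then 1 else 0)
      + ((if c s(x0, z0) = i then 1 else 0) + (if c s(x0, x1) = i then 1 else 0)) := by
    rw [wdeg_of_sub G D c i x0 {y0, z0, x1} (by simp [*])
      (by rw [hdx0, Finset.card_eq_three.mpr ⟨y0, z0, x1, c5, Ne.symm b2, Ne.symm b5, rfl⟩])
      (by simp [*])]
    rw [Finset.sum_insert (by simp [c5, Ne.symm b2]), Finset.sum_pair (Ne.symm b5)]
  have hy (i) : wdeg G D c i y0 = (if c s(x0, y0) = i then 1 else 0)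
      + ((if c s(y0, z0) = i then 1 else 0) + (if c s(y0, y1) = i then 1 else 0)) := by
    rw [wdeg_of_sub G D c i y0 {x0, z0, y1} (by simp [*, hxy.symm])
      (by rw [hdy0, Finset.card_eq_three.mpr ⟨x0, z0, y1, a5, a3, Ne.symm d5, rfl⟩])
      (by simp [*, Sym2.eq_swap (a := y0) (b := x0)])]
    rw [Finset.sum_insert (by simp [a5, a3]), Finset.sum_pair (Ne.symm d5),
      Sym2.eq_swap (a := y0) (b := x0)]
  have hz (i) : wdeg G D c i z0 = (if c s(x0, z0) = i then 1 else 0)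
      + ((if c s(y0, z0) = i then 1 else 0) + (if c s(z0, z1) = i then 1 else 0)) := by
    rw [wdeg_of_sub G D c i z0 {x0, y0, z1} (by simp [*, hxz.symm, hyz.symm])
      (by rw [hdz0, Finset.card_eq_three.mpr ⟨x0, y0, z1, a2, a6, c6, rfl⟩])
      (by simp [*, Sym2.eq_swap (a := z0) (b := x0), Sym2.eq_swap (a := z0) (b := y0)])]
    rw [Finset.sum_insert (by simp [a2, a6]), Finset.sum_pair c6,
      Sym2.eq_swap (a := z0) (b := x0), Sym2.eq_swap (a := z0) (b := y0)]
  have hy1 (i) : wdeg G D c i y1 = (if c s(y0, y1) = i then 1 else 0)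
      + (if c s(y1, y2) = i then 1 else 0) := by
    rw [wdeg_of_sub G D c i y1 {y0, y2} (by simp [*, hyy1.symm])
      (by rw [hdy1, Finset.card_pair c4]) (by simp [*, Sym2.eq_swap (a := y1) (b := y0)]),
      Finset.sum_pair c4, Sym2.eq_swap (a := y1) (b := y0)]
  have hz1 (i) : wdeg G D c i z1 = (if c s(z0, z1) = i then 1 else 0)
      + (if c s(z1, z2) = i then 1 else 0) := by
    rw [wdeg_of_sub G D c i z1 {z0, z2} (by simp [*, hzz1.symm])
      (by rw [hdz1, Finset.card_pair f7]) (by simp [*, Sym2.eq_swap (a := z1) (b := z0)]),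
      Finset.sum_pair f7, Sym2.eq_swap (a := z1) (b := z0)]
  have hy2 (i) : wdeg G D c i y2 = (if c s(y1, y2) = i then 1 else 0) := by
    rw [wdeg_of_sub G D c i y2 {y1} (by simp [hy12.symm])
      (by rw [hdy2, Finset.card_singleton]) (by simp [*, Sym2.eq_swap (a := y2) (b := y1)]),
      Finset.sum_singleton, Sym2.eq_swap (a := y2) (b := y1)]
  have hz2 (i) : wdeg G D c i z2 = (if c s(z1, z2) = i then 1 else 0) := by
    rw [wdeg_of_sub G D c i z2 {z1} (by simp [hz12.symm])
      (by rw [hdz2, Finset.card_singleton]) (by simp [*, Sym2.eq_swap (a := z2) (b := z1)]),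
      Finset.sum_singleton, Sym2.eq_swap (a := z2) (b := z1)]
  have v1 := hv.2 _ _ hxy
  have v2 := hv.2 _ _ hxz
  have v3 := hv.2 _ _ hyz
  have v5 := hv.2 _ _ hyy1
  have v6 := hv.2 _ _ hy12
  have v7 := hv.2 _ _ hzz1
  have v8 := hv.2 _ _ hz12
  simp only [hx, hy, hz, hy1, hz1, hy2, hz2] at v1 v2 v3 v5 v6 v7 v8
  clear hx hy hz hy1 hz1 hy2 hz2
  generalize c s(x0, y0) = p1 at *
  generalize c s(x0, z0) = p2 at *
  generalize c s(y0, z0) = p3 at *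
  generalize c s(x0, x1) = p4 at *
  generalize c s(y0, y1) = p5 at *
  generalize c s(y1, y2) = p6 at *
  generalize c s(z0, z1) = p7 at *
  generalize c s(z1, z2) = p8 at *
  simp only [if_true] at v1 v2 v3 v5 v6 v7 v8
  have key : ∀ p q : Fin 2, ((if p = q then 1 else 0) + 1 : ℕ) ≠ 1 → p = q := by
    decide
  obtain rfl := key _ _ v6
  obtain rfl := key _ _ v8
  clear * - v1 v2 v3 v5 v7
  revert v1 v2 v3 v5 v7
  revert p1 p2 p3 p4 p5 p7
  decide
end

section
/- For every integer m ≥ 1 there exists a connected simple graph G with exactly 8m edges such that every valid doubling-coloring (D, c) of G satisfies |D| ≥ m, and G admits a valid doubling-coloring (D, c) with |D| = m; in particular D_lir(G) = m = |E(G)|/8. -/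
open Finset
open scoped Classical

/-- Labels adjacent to the root inside a gadget: `0` (a leaf) and `1` (the attached `K₄` vertex). -/
def rA (k : Fin 5) : Bool := decide (k.val < 2)

/-- Adjacency inside a gadget: `K₄` on labels `1,2,3,4`. -/
def kA (k l : Fin 5) : Bool := decide (k ≠ l ∧ 1 ≤ k.val ∧ 1 ≤ l.val)

/-- The adjacency relation of the construction. -/
def adjB {m : ℕ} : Option (Fin m × Fin 5) → Option (Fin m × Fin 5) → Prop
  | none, none => False
  | none, some p => rA p.2 = true
  | some p, none => rA p.2 = true
  | some p, some q => p.1 = q.1 ∧ kA p.2 q.2 = true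

theorem kA_symm : ∀ k l, kA k l = kA l k := by decide

theorem kA_irrefl : ∀ k, kA k k = false := by decide

/-- `m` gadgets glued at a root, each a `K₄` with a pendant edge to the root, plus a leaf. -/
def GG (m : ℕ) : SimpleGraph (Option (Fin m × Fin 5)) where
  Adj := adjB
  symm := ⟨by
    rintro (_ | p) (_ | q) h
    · exact h
    · exact h
    · exact h
    · exact ⟨h.1.symm, by rw [kA_symm]; exact h.2⟩⟩
  loopless := ⟨by
    rintro (_ | p) h
    · exact h
    · have := h.2
      rw [kA_irrefl] at this
      cases this⟩

@[simp] theorem GG_nn (m : ℕ) : ¬ (GG m).Adj none none := fun h => h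
@[simp] theorem GG_ns (m : ℕ) (j : Fin m) (k : Fin 5) :
    (GG m).Adj none (some (j, k)) ↔ rA k = true := Iff.rfl
@[simp] theorem GG_sn (m : ℕ) (j : Fin m) (k : Fin 5) :
    (GG m).Adj (some (j, k)) none ↔ rA k = true := Iff.rfl
@[simp] theorem GG_ss (m : ℕ) (j j' : Fin m) (k l : Fin 5) :
    (GG m).Adj (some (j, k)) (some (j', l)) ↔ j = j' ∧ kA k l = true := Iff.rfl

theorem wdeg_some (m : ℕ) (D : Finset (Sym2 (Option (Fin m × Fin 5))))
    (c : Sym2 (Option (Fin m × Fin 5)) → Fin 2) (i : Fin 2) (j : Fin m) (k : Fin 5) :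
    wdeg (GG m) D c i (some (j, k)) =
      (if rA k = true ∧ c s(some (j, k), none) = i then
        (if s(some (j, k), none) ∈ D then 2 else 1) else 0) +
      ∑ l : Fin 5, if kA k l = true ∧ c s(some (j, k), some (j, l)) = i then
        (if s(some (j, k), some (j, l)) ∈ D then 2 else 1) else 0 := by
  unfold wdeg
  rw [Finset.sum_filter, Fintype.sum_option, Fintype.sum_prod_type]
  congr 1
  · simp only [GG_sn]
    congr!
  rw [Finset.sum_eq_single j]
  · simp only [GG_ss, true_and]
    congr!
  · intro b _ hb
    apply Finset.sum_eq_zero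
    intro l _
    rw [if_neg]
    simp [hb.symm]
  · simp

theorem wdeg_none (m : ℕ) (D : Finset (Sym2 (Option (Fin m × Fin 5))))
    (c : Sym2 (Option (Fin m × Fin 5)) → Fin 2) (i : Fin 2) :
    wdeg (GG m) D c i none =
      ∑ j : Fin m, ∑ l : Fin 5, if rA l = true ∧ c s(none, some (j, l)) = i then
        (if s(none, some (j, l)) ∈ D then 2 else 1) else 0 := by
  unfold wdeg
  rw [Finset.sum_filter, Fintype.sum_option, Fintype.sum_prod_type]
  simp only [GG_nn, false_and, if_false, zero_add, GG_ns]
  congr!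

theorem GG_connected (m : ℕ) : (GG m).Connected := by
  have h1 : ∀ j : Fin m, (GG m).Reachable none (some (j, 1)) := fun j =>
    SimpleGraph.Adj.reachable (by simp; decide)
  have h : ∀ v, (GG m).Reachable none v := by
    rintro (_ | ⟨j, k⟩)
    · exact SimpleGraph.Reachable.refl _
    · have : k = 0 ∨ k = 1 ∨ kA 1 k = true := by revert k; decide
      rcases this with rfl | rfl | hk
      · exact SimpleGraph.Adj.reachable (by simp; decide)
      · exact h1 j
      · exact (h1 j).trans (SimpleGraph.Adj.reachable (by simpa using hk))
  exact { preconnected := fun u v => (h u).symm.trans (h v), nonempty := ⟨none⟩ }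

theorem GG_edges (m : ℕ) : (GG m).edgeSet.ncard = 8 * m := by
  have hd : ∀ v, (GG m).degree v = wdeg (GG m) ∅ (fun _ => 0) 0 v := by
    intro v
    unfold wdeg
    simp [SimpleGraph.degree, SimpleGraph.neighborFinset_eq_filter]
  have hs := (GG m).sum_degrees_eq_twice_card_edges
  simp only [hd] at hs
  rw [Fintype.sum_option, Fintype.sum_prod_type, wdeg_none] at hs
  simp only [wdeg_some] at hs
  simp only [Fin.sum_univ_five] at hs
  simp [rA, kA] at hs
  rw [← SimpleGraph.coe_edgeFinset, Set.ncard_coe_finset]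
  omega

/-- No undoubled colouring of a single gadget: the finite check. -/
theorem gadget_check : ∀ r a b c d e f : Fin 2,
    let w1 : Fin 2 → ℕ := fun i => (if r = i then 1 else 0) + (if a = i then 1 else 0) +
      (if b = i then 1 else 0) + (if c = i then 1 else 0)
    let w2 : Fin 2 → ℕ := fun i => (if a = i then 1 else 0) +
      (if d = i then 1 else 0) + (if e = i then 1 else 0)
    let w3 : Fin 2 → ℕ := fun i => (if b = i then 1 else 0) +
      (if d = i then 1 else 0) + (if f = i then 1 else 0)
    let w4 : Fin 2 → ℕ := fun i => (if c = i then 1 else 0) +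
      (if e = i then 1 else 0) + (if f = i then 1 else 0)
    ¬ (w1 a ≠ w2 a ∧ w1 b ≠ w3 b ∧ w1 c ≠ w4 c ∧ w2 d ≠ w3 d ∧ w2 e ≠ w4 e ∧ w3 f ≠ w4 f) := by
  decide

/-- The edge belongs to gadget `j`. -/
def inGad {m : ℕ} (j : Fin m) (e : Sym2 (Option (Fin m × Fin 5))) : Prop :=
  ∃ k, some (j, k) ∈ e

theorem gadget_hit (m : ℕ) (D : Finset (Sym2 (Option (Fin m × Fin 5))))
    (c : Sym2 (Option (Fin m × Fin 5)) → Fin 2) (h : ValidDC (GG m) D c) (j : Fin m) :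
    ∃ e ∈ D, inGad j e := by
  by_contra! hn
  have hD : ∀ k x, s(some (j, k), x) ∉ D := fun k x hx => hn _ hx ⟨k, by simp⟩
  have sy : ∀ k l, c s(some (j, k), some (j, l)) = c s(some (j, l), some (j, k)) := fun k l => by
    rw [Sym2.eq_swap]
  have key : ∀ k l, kA k l = true → _ := fun k l hk => h.2 (some (j, k)) (some (j, l)) (by simpa using hk)
  have k12 := key 1 2 (by decide)
  have k13 := key 1 3 (by decide)
  have k14 := key 1 4 (by decide)
  have k23 := key 2 3 (by decide)
  have k24 := key 2 4 (by decide)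
  have k34 := key 3 4 (by decide)
  have W1 : ∀ i, wdeg (GG m) D c i (some (j, 1)) = _ := fun i => wdeg_some m D c i j 1
  have W2 : ∀ i, wdeg (GG m) D c i (some (j, 2)) = _ := fun i => wdeg_some m D c i j 2
  have W3 : ∀ i, wdeg (GG m) D c i (some (j, 3)) = _ := fun i => wdeg_some m D c i j 3
  have W4 : ∀ i, wdeg (GG m) D c i (some (j, 4)) = _ := fun i => wdeg_some m D c i j 4
  simp only [Fin.sum_univ_five] at W1 W2 W3 W4
  simp [-Fin.forall_fin_two, rA, kA, hD] at W1 W2 W3 W4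
  rw [sy 2 1] at W2
  rw [sy 3 1, sy 3 2] at W3
  rw [sy 4 1, sy 4 2, sy 4 3] at W4
  rw [W1, W2] at k12
  rw [W1, W3] at k13
  rw [W1, W4] at k14
  rw [W2, W3] at k23
  rw [W2, W4] at k24
  rw [W3, W4] at k34
  have := gadget_check (c s(some (j, 1), none)) (c s(some (j, 1), some (j, 2)))
    (c s(some (j, 1), some (j, 3))) (c s(some (j, 1), some (j, 4)))
    (c s(some (j, 2), some (j, 3))) (c s(some (j, 2), some (j, 4)))
    (c s(some (j, 3), some (j, 4)))
  simp only [add_assoc] at this k12 k13 k14 k23 k24 k34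
  exact this ⟨k12, k13, k14, k23, k24, k34⟩

theorem GG_lower (m : ℕ) (D : Finset (Sym2 (Option (Fin m × Fin 5))))
    (c : Sym2 (Option (Fin m × Fin 5)) → Fin 2) (h : ValidDC (GG m) D c) : m ≤ D.card := by
  choose e he hg using gadget_hit m D c h
  have inj : Function.Injective e := by
    intro j j' hjj
    obtain ⟨k, hk⟩ := hg j
    obtain ⟨k', hk'⟩ := hg j'
    have hE : e j ∈ (GG m).edgeSet := h.1 (he j)
    rw [← hjj] at hk'
    revert hE hk hk'
    generalize e j = x
    induction x using Sym2.ind with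
    | _ a b =>
      intro hk hk' hE
      rw [SimpleGraph.mem_edgeSet] at hE
      rw [Sym2.mem_iff] at hk hk'
      rcases hk with rfl | rfl <;> rcases hk' with hk' | hk'
      · simp at hk'; exact hk'.1.symm
      · subst hk'; exact hE.1
      · subst hk'; exact hE.1.symm
      · simp at hk'; exact hk'.1.symm
  calc m = (Finset.univ.image e).card := by
        rw [Finset.card_image_of_injective _ inj]; simp
    _ ≤ D.card := Finset.card_le_card (by
        intro x hx
        simp only [Finset.mem_image, Finset.mem_univ, true_and] at hx
        obtain ⟨j, rfl⟩ := hx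
        exact he j)

/-- Labels of vertices, the root having label `none`. -/
def lab {m : ℕ} (v : Option (Fin m × Fin 5)) : Option (Fin 5) := v.map Prod.snd

/-- The colouring. -/
noncomputable def cc {m : ℕ} (e : Sym2 (Option (Fin m × Fin 5))) : Fin 2 :=
  if e.map lab ∈ ({s(some 1, some 2), s(some 1, some 3), s(some 1, some 4),
    s(some 2, some 3)} : Finset (Sym2 (Option (Fin 5)))) then 1 else 0

/-- The doubled edges. -/
noncomputable def DD (m : ℕ) : Finset (Sym2 (Option (Fin m × Fin 5))) :=
  Finset.univ.image fun j : Fin m => s(some (j, 1), some (j, 2))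

theorem mem_DD_ss (m : ℕ) (j : Fin m) (k l : Fin 5) :
    s(some (j, k), some (j, l)) ∈ DD m ↔ (k = 1 ∧ l = 2) ∨ (k = 2 ∧ l = 1) := by
  unfold DD
  simp only [Finset.mem_image, Finset.mem_univ, true_and, Sym2.eq_iff, Option.some.injEq,
    Prod.mk.injEq]
  constructor
  · rintro ⟨a, h | h⟩
    · exact Or.inl ⟨h.1.2.symm, h.2.2.symm⟩
    · exact Or.inr ⟨h.2.2.symm, h.1.2.symm⟩
  · rintro (⟨rfl, rfl⟩ | ⟨rfl, rfl⟩) <;> exact ⟨j, by simp⟩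

theorem not_mem_DD_sn (m : ℕ) (j : Fin m) (k : Fin 5) : s(some (j, k), none) ∉ DD m := by
  simp [DD]

theorem not_mem_DD_ns (m : ℕ) (j : Fin m) (k : Fin 5) : s(none, some (j, k)) ∉ DD m := by
  simp [DD]

theorem DD_card (m : ℕ) : (DD m).card = m := by
  unfold DD
  rw [Finset.card_image_of_injective]
  · simp
  · intro a b h
    simp at h
    exact h

/-- Label form of the colouring inside a gadget. -/
def cK (k l : Fin 5) : Fin 2 :=
  if (k = 1 ∧ 2 ≤ l) ∨ (l = 1 ∧ 2 ≤ k) ∨ (k = 2 ∧ l = 3) ∨ (k = 3 ∧ l = 2) then 1 else 0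

theorem cc_ss (m : ℕ) (j : Fin m) (k l : Fin 5) : cc s(some (j, k), some (j, l)) = cK k l := by
  unfold cc cK lab
  fin_cases k <;> fin_cases l <;> simp

theorem cc_sn (m : ℕ) (j : Fin m) (k : Fin 5) : cc s(some (j, k), none) = 0 := by
  simp [cc, lab]

theorem cc_ns (m : ℕ) (j : Fin m) (k : Fin 5) : cc s(none, some (j, k)) = 0 := by
  simp [cc, lab]

/-- Weighted degree of a gadget vertex. -/
def wK (i : Fin 2) (k : Fin 5) : ℕ :=
  (if rA k = true ∧ 0 = i then 1 else 0) + ∑ l : Fin 5, if kA k l = true ∧ cK k l = i then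
    (if (k = 1 ∧ l = 2) ∨ (k = 2 ∧ l = 1) then 2 else 1) else 0

theorem wdeg_cc (m : ℕ) (i : Fin 2) (j : Fin m) (k : Fin 5) :
    wdeg (GG m) (DD m) cc i (some (j, k)) = wK i k := by
  rw [wdeg_some]
  simp only [cc_ss, cc_sn, mem_DD_ss, not_mem_DD_sn, wK, if_false]

theorem wdeg_cc_none (m : ℕ) : wdeg (GG m) (DD m) cc 0 none = 2 * m := by
  rw [wdeg_none]
  simp only [Fin.sum_univ_five]
  simp [cc_ns, not_mem_DD_ns, rA]
  omega

theorem wK_valid : ∀ k l, kA k l = true → wK (cK k l) k ≠ wK (cK k l) l := by decide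

theorem wK_root : ∀ k, rA k = true → wK 0 k = 1 := by decide

theorem GG_upper (m : ℕ) : ValidDC (GG m) (DD m) cc := by
  constructor
  · intro e he
    simp only [DD, Finset.coe_image, Finset.coe_univ, Set.image_univ, Set.mem_range] at he
    obtain ⟨j, rfl⟩ := he
    rw [SimpleGraph.mem_edgeSet]
    exact ⟨rfl, (by decide : kA 1 2 = true)⟩
  · rintro (_ | ⟨j, k⟩) (_ | ⟨j', l⟩) h
    · exact h.elim
    · rw [cc_ns, wdeg_cc, wdeg_cc_none, wK_root l h]; omega
    · rw [cc_sn, wdeg_cc, wdeg_cc_none, wK_root k h]; omega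
    · obtain ⟨h1, h2⟩ := h
      simp only at h1 h2
      subst h1
      rw [cc_ss, wdeg_cc, wdeg_cc]
      exact wK_valid k l h2

theorem wdeg_iso {V W : Type*} [Fintype V] [Fintype W] (G : SimpleGraph V) (H : SimpleGraph W)
    (φ : G ≃g H) (D : Finset (Sym2 W)) (c : Sym2 W → Fin 2) (i : Fin 2) (v : V) :
    wdeg G (D.preimage (Sym2.map φ) (Sym2.map.injective φ.injective).injOn)
      (fun e => c (e.map φ)) i v = wdeg H D c i (φ v) := by
  unfold wdeg
  rw [Finset.sum_filter, Finset.sum_filter]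
  apply Fintype.sum_equiv φ.toEquiv
  intro w
  have : φ.toEquiv w = φ w := rfl
  simp [this, φ.map_adj_iff]

theorem valid_iso {V W : Type*} [Fintype V] [Fintype W] (G : SimpleGraph V) (H : SimpleGraph W)
    (φ : G ≃g H) (D : Finset (Sym2 W)) (c : Sym2 W → Fin 2) (h : ValidDC H D c) :
    ∃ (D' : Finset (Sym2 V)) (c' : Sym2 V → Fin 2), ValidDC G D' c' ∧ D'.card = D.card := by
  refine ⟨D.preimage (Sym2.map φ) (Sym2.map.injective φ.injective).injOn,
    fun e => c (e.map φ), ⟨?_, ?_⟩, ?_⟩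
  · intro e he
    simp only [Finset.coe_preimage, Set.mem_preimage] at he
    have := h.1 he
    revert this
    induction e using Sym2.ind with
    | _ a b => simp [φ.map_adj_iff]
  · intro u v huv
    rw [wdeg_iso, wdeg_iso]
    exact h.2 _ _ (φ.map_adj_iff.2 huv)
  · rw [Finset.card_preimage, Finset.filter_true_of_mem]
    intro x _
    refine ⟨x.map φ.symm, ?_⟩
    rw [Sym2.map_map]
    have : (φ ∘ φ.symm : W → W) = id := by
      funext y
      simp
    rw [this, Sym2.map_id]
    rfl

/-- For every `m ≥ 1` there is a connected graph with exactly `8m` edges whose every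
valid doubling-coloring doubles at least `m` edges, and which admits a valid
doubling-coloring with exactly `m` doubled edges; i.e. `D_lir(G) = m = |E(G)|/8`. -/
theorem Dlir_one_eighth_edges (m : ℕ) (hm : 1 ≤ m) :
    ∃ (n : ℕ) (G : SimpleGraph (Fin n)), G.Connected ∧
      G.edgeSet.ncard = 8 * m ∧
      (∀ (D : Finset (Sym2 (Fin n))) (c : Sym2 (Fin n) → Fin 2),
        ValidDC G D c → m ≤ D.card) ∧
      (∃ (D : Finset (Sym2 (Fin n))) (c : Sym2 (Fin n) → Fin 2),
        ValidDC G D c ∧ D.card = m) := by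
  have hc : Fintype.card (Option (Fin m × Fin 5)) = m * 5 + 1 := by simp
  let e : Option (Fin m × Fin 5) ≃ Fin (m * 5 + 1) := Fintype.equivFinOfCardEq hc
  let φ : GG m ≃g (GG m).map e.toEmbedding := SimpleGraph.Iso.map e (GG m)
  refine ⟨m * 5 + 1, (GG m).map e.toEmbedding, ?_, ?_, ?_, ?_⟩
  · exact φ.connected_iff.1 (GG_connected m)
  · rw [← GG_edges m]
    exact (Nat.card_congr φ.mapEdgeSet).symm
  · intro D c h
    obtain ⟨D', c', h', hD⟩ := valid_iso _ _ φ D c h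
    rw [← hD]
    exact GG_lower m D' c' h'
  · obtain ⟨D', c', h', hD⟩ := valid_iso _ _ φ.symm (DD m) cc (GG_upper m)
    exact ⟨D', c', h', by rw [hD, DD_card]⟩
end

section
/- Let k ≥ 2 and let G be the complete k-partite graph K_{n_1,...,n_k} with parts of sizes n_1, ..., n_k ≥ 1, where not all parts have size 1 (i.e., G is different from the complete graph K_k). Then lir(G) ≤ 2; that is, G admits a 2-liec. -/
/-- The number of edges of color `i` incident to `v`. -/
noncomputable def cdeg {V : Type*} (G : SimpleGraph V) (c : Sym2 V → Fin 2)
    (i : Fin 2) (v : V) : ℕ :=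
  {w | G.Adj v w ∧ c s(v, w) = i}.ncard

/-- `c` is a locally irregular 2-edge-coloring (2-liec) of `G`: for every edge `uv`
of color `i`, the numbers of color-`i` edges at `u` and at `v` differ. -/
def IsLiec2 {V : Type*} (G : SimpleGraph V) (c : Sym2 V → Fin 2) : Prop :=
  ∀ u v, G.Adj u v →
    cdeg G c (c s(u, v)) u ≠ cdeg G c (c s(u, v)) v

open Finset

/-- Degree of `v` in colour `i` counted inside the parts of `S`. -/
def liD {k : ℕ} (n : Fin k → ℕ) (c : (Σ i : Fin k, Fin (n i)) → (Σ i : Fin k, Fin (n i)) → Fin 2)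
    (S : Finset (Fin k)) (i : Fin 2) (v : Σ i : Fin k, Fin (n i)) : ℕ :=
  ∑ p ∈ S.erase v.1, #{x : Fin (n p) | c v ⟨p, x⟩ = i}

/-- `c` is a symmetric 2-liec on the parts of `S`. -/
def liGood {k : ℕ} (n : Fin k → ℕ)
    (c : (Σ i : Fin k, Fin (n i)) → (Σ i : Fin k, Fin (n i)) → Fin 2)
    (S : Finset (Fin k)) : Prop :=
  (∀ u v, c u v = c v u) ∧ ∀ u v, u.1 ∈ S → v.1 ∈ S → u.1 ≠ v.1 →
    liD n c S (c u v) u ≠ liD n c S (c u v) v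

lemma liD_add {k : ℕ} (n : Fin k → ℕ)
    (c : (Σ i : Fin k, Fin (n i)) → (Σ i : Fin k, Fin (n i)) → Fin 2)
    (S : Finset (Fin k)) (i j : Fin 2) (hij : i ≠ j) (v : Σ i : Fin k, Fin (n i))
    (hv : v.1 ∈ S) :
    n v.1 + (liD n c S i v + liD n c S j v) = ∑ q ∈ S, n q := by
  rw [← Finset.add_sum_erase S n hv, liD, liD, ← Finset.sum_add_distrib]
  congr 1
  refine Finset.sum_congr rfl fun q _ => ?_
  have h : ∀ x : Fin (n q), (c v ⟨q, x⟩ = j) ↔ ¬ (c v ⟨q, x⟩ = i) := by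
    intro x; omega
  simp only [h]
  rw [Finset.card_filter_add_card_filter_not]
  simp

lemma li_step {k : ℕ} (n : Fin k → ℕ) (hpos : ∀ i, 1 ≤ n i)
    (c : (Σ i : Fin k, Fin (n i)) → (Σ i : Fin k, Fin (n i)) → Fin 2)
    (S : Finset (Fin k)) (hS : S.Nonempty) (hc : liGood n c S) (i j : Fin 2) (hij : i ≠ j)
    (p : Fin k) (hp : p ∉ S)
    (H : ∀ v : Σ i : Fin k, Fin (n i), v.1 ∈ S → n p < n v.1 + liD n c S j v) :
    ∃ c', liGood n c' (insert p S) ∧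
      ∀ v : Σ i : Fin k, Fin (n i), v.1 ∈ insert p S → 0 < liD n c' (insert p S) i v := by
  obtain ⟨hsym, hc⟩ := hc
  let c' : (Σ i : Fin k, Fin (n i)) → (Σ i : Fin k, Fin (n i)) → Fin 2 :=
    fun u v => if u.1 = p ∨ v.1 = p then i else c u v
  have hnew : ∀ v : Σ i : Fin k, Fin (n i), v.1 = p →
      liD n c' (insert p S) i v = ∑ q ∈ S, n q := by
    intro v hv
    simp [liD, c', hv, Finset.erase_insert hp]
  have hold : ∀ (v : Σ i : Fin k, Fin (n i)) (a : Fin 2), v.1 ∈ S →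
      liD n c' (insert p S) a v = (if a = i then n p else 0) + liD n c S a v := by
    intro v a hv
    have hvp : v.1 ≠ p := fun h => hp (h ▸ hv)
    rw [liD, Finset.erase_insert_of_ne (Ne.symm hvp),
      Finset.sum_insert (fun h => hp (Finset.mem_of_mem_erase h)), liD]
    congr 1
    · by_cases h : a = i
      · simp [c', h]
      · simp [c', h, Ne.symm h]
    · refine Finset.sum_congr rfl fun q hq => ?_
      have hqp : q ≠ p := fun h => hp (h ▸ Finset.mem_of_mem_erase hq)
      simp [c', hvp, hqp]
  have key : ∀ u v : Σ i : Fin k, Fin (n i), u.1 = p → v.1 ∈ S →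
      liD n c' (insert p S) i u ≠ liD n c' (insert p S) i v := by
    intro u v hu hv
    rw [hnew u hu, hold v i hv, ← liD_add n c S i j hij v hv]
    have := H v hv
    simp only [if_true]
    omega
  refine ⟨c', ⟨?_, ?_⟩, ?_⟩
  · intro u v
    simp only [c', or_comm, hsym u v]
  · intro u v hu hv huv
    rw [Finset.mem_insert] at hu hv
    by_cases h1 : u.1 = p
    · have : c' u v = i := by simp [c', h1]
      rw [this]
      exact key u v h1 (hv.resolve_left (fun h => huv (h1.trans h.symm)))
    · by_cases h2 : v.1 = p
      · have : c' u v = i := by simp [c', h2]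
        rw [this]
        exact (key v u h2 (hu.resolve_left h1)).symm
      · have : c' u v = c u v := by simp [c', h1, h2]
        have hu := hu.resolve_left h1
        have hv := hv.resolve_left h2
        rw [this, hold _ _ hu, hold _ _ hv]
        have := hc u v hu hv huv
        omega
  · intro v hv
    rw [Finset.mem_insert] at hv
    rcases hv with hv | hv
    · rw [hnew v hv]
      obtain ⟨q, hq⟩ := hS
      exact Finset.sum_pos (fun q _ => hpos q) ⟨q, hq⟩
    · rw [hold v i hv]
      have := hpos p
      simp only [if_true]
      omega

/-- Add all the remaining parts, largest first, alternating colours. -/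
lemma li_extend {k : ℕ} (n : Fin k → ℕ) (hpos : ∀ i, 1 ≤ n i) (d : ℕ) :
    ∀ (S : Finset (Fin k)) (i : Fin 2)
    (c : (Σ i : Fin k, Fin (n i)) → (Σ i : Fin k, Fin (n i)) → Fin 2),
    #(Sᶜ) = d → S.Nonempty → liGood n c S → (∀ q ∉ S, ∀ s ∈ S, n q ≤ n s) →
    (∀ v : Σ i : Fin k, Fin (n i), v.1 ∈ S → 0 < liD n c S i v) →
    ∃ c', liGood n c' Finset.univ := by
  induction d with
  | zero =>
    intro S i c h _ hc _ _
    have : S = Finset.univ := by simpa using h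
    exact ⟨c, this ▸ hc⟩
  | succ d ih =>
    intro S i c h hS hc hle hD
    have hne : (Sᶜ).Nonempty := by
      rw [← Finset.card_pos]; omega
    obtain ⟨p, hp, hmax⟩ := Finset.exists_max_image (Sᶜ) n hne
    rw [Finset.mem_compl] at hp
    have hij : (1 - i) ≠ i := by clear hD; revert i; decide
    obtain ⟨c', hc', hD'⟩ := li_step n hpos c S hS hc (1 - i) i hij p hp (by
      intro v hv
      have := hle p hp v.1 hv
      have := hD v hv
      omega)
    refine ih (insert p S) (1 - i) c' ?_ (by simp) hc' ?_ hD'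
    · rw [Finset.compl_insert, Finset.card_erase_of_mem (by simpa using hp)]; omega
    · intro q hq s hs
      rw [Finset.mem_insert, not_or] at hq
      rw [Finset.mem_insert] at hs
      rcases hs with rfl | hs
      · exact hmax q (by simpa using hq.2)
      · exact hle q hq.2 s hs

lemma li_card_eq (m a : ℕ) (h : a < m) : #{x : Fin m | (x : ℕ) = a} = 1 := by
  rw [Finset.card_eq_one]
  exact ⟨⟨a, h⟩, by ext x; simp [Fin.ext_iff]⟩

lemma li_card_ne (m a : ℕ) (h : a < m) : #{x : Fin m | ¬ (x : ℕ) = a} = m - 1 := by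
  have := Finset.card_filter_add_card_filter_not (s := (Finset.univ : Finset (Fin m)))
    (fun x => (x : ℕ) = a)
  rw [li_card_eq m a h] at this
  rw [Finset.card_univ, Fintype.card_fin] at this
  omega

lemma li_card_eq' (m a : ℕ) (h : a < m) : #{x : Fin m | a = (x : ℕ)} = 1 := by
  simp only [eq_comm (a := a)]; exact li_card_eq m a h

lemma li_card_ne' (m a : ℕ) (h : a < m) : #{x : Fin m | ¬ a = (x : ℕ)} = m - 1 := by
  simp only [eq_comm (a := a)]; exact li_card_ne m a h

lemma li_base2 {k : ℕ} (n : Fin k → ℕ) (a b : Fin k) (hab : a ≠ b) (hn : n b = n a)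
    (h2 : 2 ≤ n a) : ∃ c, liGood n c {b, a} := by
  have h0 : 0 < n b := by omega
  let c : (Σ i : Fin k, Fin (n i)) → (Σ i : Fin k, Fin (n i)) → Fin 2 :=
    fun u v => if (u.1 = b ∧ (u.2 : ℕ) = 0) ∨ (v.1 = b ∧ (v.2 : ℕ) = 0) then 0 else 1
  have ea : ({b, a} : Finset (Fin k)).erase a = {b} := by ext; simp; grind
  have eb : ({b, a} : Finset (Fin k)).erase b = {a} := by ext; simp; grind
  have hA0 : ∀ x, liD n c {b, a} 0 ⟨a, x⟩ = 1 := by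
    intro x; simp only [liD, ea, c, Finset.sum_singleton]
    simp [hab, li_card_eq _ _ h0]
  have hA1 : ∀ x, liD n c {b, a} 1 ⟨a, x⟩ = n a - 1 := by
    intro x; simp only [liD, ea, c, Finset.sum_singleton]
    simp [hab, li_card_ne _ _ h0, hn]
  have hB0 : ∀ x : Fin (n b), (x : ℕ) = 0 → liD n c {b, a} 0 ⟨b, x⟩ = n a := by
    intro x hx; simp only [liD, eb, c, Finset.sum_singleton]
    simp [hx]
  have hB1 : ∀ x : Fin (n b), (x : ℕ) ≠ 0 → liD n c {b, a} 1 ⟨b, x⟩ = n a := by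
    intro x hx; simp only [liD, eb, c, Finset.sum_singleton]
    simp [hx, hab]
  have hs : ∀ u v, c u v = c v u := by
    intro u v; simp only [c, or_comm]
  have key : ∀ (x : Fin (n a)) (y : Fin (n b)),
      liD n c {b, a} (c ⟨a, x⟩ ⟨b, y⟩) ⟨a, x⟩ ≠ liD n c {b, a} (c ⟨a, x⟩ ⟨b, y⟩) ⟨b, y⟩ := by
    intro x y
    by_cases hy : (y : ℕ) = 0
    · have : c ⟨a, x⟩ ⟨b, y⟩ = 0 := by simp [c, hy]
      rw [this, hA0, hB0 y hy]; omega
    · have : c ⟨a, x⟩ ⟨b, y⟩ = 1 := by simp [c, hy, hab]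
      rw [this, hA1, hB1 y hy]; omega
  refine ⟨c, hs, ?_⟩
  rintro ⟨p, x⟩ ⟨q, y⟩ hu hv huv
  simp only [Finset.mem_insert, Finset.mem_singleton] at hu hv huv
  rcases hu with rfl | rfl <;> rcases hv with rfl | rfl
  · exact absurd rfl huv
  · rw [hs]; exact (key y x).symm
  · exact key x y
  · exact absurd rfl huv

lemma li_base3 {k : ℕ} (n : Fin k → ℕ) (a b e : Fin k) (hab : a ≠ b) (hae : a ≠ e) (hbe : b ≠ e)
    (hn : n b = n a) (hn' : n e = n a) (h2 : 3 ≤ n a) :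
    ∃ c, liGood n c {e, b, a} ∧
      ∀ v : Σ i : Fin k, Fin (n i), v.1 ∈ ({e, b, a} : Finset (Fin k)) →
        0 < liD n c {e, b, a} 0 v := by
  have h0 : 0 < n b := by omega
  let c : (Σ i : Fin k, Fin (n i)) → (Σ i : Fin k, Fin (n i)) → Fin 2 :=
    fun u v => if (u.1 = e ∨ v.1 = e) ↔ ((u.1 = b ∧ (u.2 : ℕ) = 0) ∨ (v.1 = b ∧ (v.2 : ℕ) = 0))
      then 1 else 0
  have ea : ({e, b, a} : Finset (Fin k)).erase a = {e, b} := by ext; simp; grind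
  have eb : ({e, b, a} : Finset (Fin k)).erase b = {e, a} := by ext; simp; grind
  have ee : ({e, b, a} : Finset (Fin k)).erase e = {b, a} := by ext; simp; grind
  have hA0 : ∀ x, liD n c {e, b, a} 0 ⟨a, x⟩ = n a + 1 := by
    intro x; simp only [liD, ea, c, Finset.sum_pair hbe.symm]
    simp [hab, hae, hbe, hbe.symm, li_card_eq _ _ h0, hn']
  have hA1 : ∀ x, liD n c {e, b, a} 1 ⟨a, x⟩ = n a - 1 := by
    intro x; simp only [liD, ea, c, Finset.sum_pair hbe.symm]
    simp [hab, hae, hbe, hbe.symm, li_card_ne _ _ h0, hn]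
  have hB0 : ∀ x : Fin (n b), liD n c {e, b, a} 0 ⟨b, x⟩ = n a := by
    intro x; simp only [liD, eb, c, Finset.sum_pair hae.symm]
    by_cases hx : (x : ℕ) = 0 <;> simp [hx, hab, hae, hbe, hbe.symm, hn']
  have hB1 : ∀ x : Fin (n b), liD n c {e, b, a} 1 ⟨b, x⟩ = n a := by
    intro x; simp only [liD, eb, c, Finset.sum_pair hae.symm]
    by_cases hx : (x : ℕ) = 0 <;> simp [hx, hab, hae, hbe, hbe.symm, hn']
  have hE0 : ∀ x, liD n c {e, b, a} 0 ⟨e, x⟩ = n a - 1 + n a := by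
    intro x; simp only [liD, ee, c, Finset.sum_pair hab.symm]
    simp [hab, hae, hbe, hbe.symm, li_card_ne _ _ h0, hn]
  have hE1 : ∀ x, liD n c {e, b, a} 1 ⟨e, x⟩ = 1 := by
    intro x; simp only [liD, ee, c, Finset.sum_pair hab.symm]
    simp [hab, hae, hbe, hbe.symm, li_card_eq _ _ h0]
  have hs : ∀ u v, c u v = c v u := by
    intro u v; simp only [c, or_comm]
  have two : ∀ z : Fin 2, z = 0 ∨ z = 1 := by decide
  have kab : ∀ (x : Fin (n a)) (y : Fin (n b)) (z : Fin 2),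
      liD n c {e, b, a} z ⟨a, x⟩ ≠ liD n c {e, b, a} z ⟨b, y⟩ := by
    intro x y z
    rcases two z with rfl | rfl
    · rw [hA0, hB0]; omega
    · rw [hA1, hB1]; omega
  have kbe : ∀ (x : Fin (n b)) (y : Fin (n e)) (z : Fin 2),
      liD n c {e, b, a} z ⟨b, x⟩ ≠ liD n c {e, b, a} z ⟨e, y⟩ := by
    intro x y z
    rcases two z with rfl | rfl
    · rw [hB0, hE0]; omega
    · rw [hB1, hE1]; omega
  have kae : ∀ (x : Fin (n a)) (y : Fin (n e)) (z : Fin 2),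
      liD n c {e, b, a} z ⟨a, x⟩ ≠ liD n c {e, b, a} z ⟨e, y⟩ := by
    intro x y z
    rcases two z with rfl | rfl
    · rw [hA0, hE0]; omega
    · rw [hA1, hE1]; omega
  refine ⟨c, ⟨hs, ?_⟩, ?_⟩
  · rintro ⟨p, x⟩ ⟨q, y⟩ hu hv huv
    simp only [Finset.mem_insert, Finset.mem_singleton] at hu hv huv
    rcases hu with rfl | rfl | rfl <;> rcases hv with rfl | rfl | rfl
    · exact absurd rfl huv
    · exact (kbe y x _).symm
    · exact (kae y x _).symm
    · exact kbe x y _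
    · exact absurd rfl huv
    · exact (kab y x _).symm
    · exact kae x y _
    · exact kab x y _
    · exact absurd rfl huv
  · rintro ⟨p, x⟩ hu
    simp only [Finset.mem_insert, Finset.mem_singleton] at hu
    rcases hu with rfl | rfl | rfl
    · rw [hE0]; omega
    · rw [hB0]; omega
    · rw [hA0]; omega

lemma li_base222 {k : ℕ} (n : Fin k → ℕ) (a b e : Fin k) (hab : a ≠ b) (hae : a ≠ e) (hbe : b ≠ e)
    (hn : n b = 2) (hn' : n e = 2) (h2 : n a = 2) :
    ∃ c, liGood n c {e, b, a} ∧
      ∀ v : Σ i : Fin k, Fin (n i), v.1 ∈ ({e, b, a} : Finset (Fin k)) →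
        0 < liD n c {e, b, a} 0 v := by
  let c : (Σ i : Fin k, Fin (n i)) → (Σ i : Fin k, Fin (n i)) → Fin 2 :=
    fun u v => if (u.1 = a ∨ v.1 = a) ∧ ((u.1 = b ∨ v.1 = b) ∨ (u.2 : ℕ) = (v.2 : ℕ))
      then 1 else 0
  have ea : ({e, b, a} : Finset (Fin k)).erase a = {e, b} := by ext; simp; grind
  have eb : ({e, b, a} : Finset (Fin k)).erase b = {e, a} := by ext; simp; grind
  have ee : ({e, b, a} : Finset (Fin k)).erase e = {b, a} := by ext; simp; grind
  have hA0 : ∀ x, liD n c {e, b, a} 0 ⟨a, x⟩ = 1 := by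
    intro x; simp only [liD, ea, c, Finset.sum_pair hbe.symm]
    have hx : (x : ℕ) < n e := by omega
    simp [hab, hbe.symm, li_card_ne' _ _ hx, hn']
  have hA1 : ∀ x, liD n c {e, b, a} 1 ⟨a, x⟩ = 3 := by
    intro x; simp only [liD, ea, c, Finset.sum_pair hbe.symm]
    have hx : (x : ℕ) < n e := by omega
    simp [hab, hbe.symm, li_card_eq' _ _ hx, hn]
  have hB0 : ∀ x : Fin (n b), liD n c {e, b, a} 0 ⟨b, x⟩ = 2 := by
    intro x; simp only [liD, eb, c, Finset.sum_pair hae.symm]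
    simp [hab.symm, hae.symm, hn']
  have hB1 : ∀ x : Fin (n b), liD n c {e, b, a} 1 ⟨b, x⟩ = 2 := by
    intro x; simp only [liD, eb, c, Finset.sum_pair hae.symm]
    simp [hab.symm, hae.symm, h2]
  have hE0 : ∀ x, liD n c {e, b, a} 0 ⟨e, x⟩ = 3 := by
    intro x; simp only [liD, ee, c, Finset.sum_pair hab.symm]
    have hx : (x : ℕ) < n a := by omega
    simp [hab, hab.symm, hae.symm, hbe.symm, li_card_ne' _ _ hx, hn, h2]
  have hE1 : ∀ x, liD n c {e, b, a} 1 ⟨e, x⟩ = 1 := by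
    intro x; simp only [liD, ee, c, Finset.sum_pair hab.symm]
    have hx : (x : ℕ) < n a := by omega
    simp [hab, hab.symm, hae.symm, hbe.symm, li_card_eq' _ _ hx]
  have hs : ∀ u v, c u v = c v u := by
    intro u v; simp only [c, or_comm, eq_comm (a := (u.2 : ℕ))]
  have two : ∀ z : Fin 2, z = 0 ∨ z = 1 := by decide
  have kab : ∀ (x : Fin (n a)) (y : Fin (n b)) (z : Fin 2),
      liD n c {e, b, a} z ⟨a, x⟩ ≠ liD n c {e, b, a} z ⟨b, y⟩ := by
    intro x y z
    rcases two z with rfl | rfl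
    · rw [hA0, hB0]; omega
    · rw [hA1, hB1]; omega
  have kbe : ∀ (x : Fin (n b)) (y : Fin (n e)) (z : Fin 2),
      liD n c {e, b, a} z ⟨b, x⟩ ≠ liD n c {e, b, a} z ⟨e, y⟩ := by
    intro x y z
    rcases two z with rfl | rfl
    · rw [hB0, hE0]; omega
    · rw [hB1, hE1]; omega
  have kae : ∀ (x : Fin (n a)) (y : Fin (n e)) (z : Fin 2),
      liD n c {e, b, a} z ⟨a, x⟩ ≠ liD n c {e, b, a} z ⟨e, y⟩ := by
    intro x y z
    rcases two z with rfl | rfl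
    · rw [hA0, hE0]; omega
    · rw [hA1, hE1]; omega
  refine ⟨c, ⟨hs, ?_⟩, ?_⟩
  · rintro ⟨p, x⟩ ⟨q, y⟩ hu hv huv
    simp only [Finset.mem_insert, Finset.mem_singleton] at hu hv huv
    rcases hu with rfl | rfl | rfl <;> rcases hv with rfl | rfl | rfl
    · exact absurd rfl huv
    · exact (kbe y x _).symm
    · exact (kae y x _).symm
    · exact kbe x y _
    · exact absurd rfl huv
    · exact (kab y x _).symm
    · exact kae x y _
    · exact kab x y _
    · exact absurd rfl huv
  · rintro ⟨p, x⟩ hu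
    simp only [Finset.mem_insert, Finset.mem_singleton] at hu
    rcases hu with rfl | rfl | rfl
    · rw [hE0]; omega
    · rw [hB0]; omega
    · rw [hA0]; omega

lemma li_exists {k : ℕ} (hk : 2 ≤ k) (n : Fin k → ℕ)
    (hpos : ∀ i, 1 ≤ n i) (hnotK : ∃ i, 2 ≤ n i) : ∃ c, liGood n c Finset.univ := by
  have z1 : (0 : Fin 2) ≠ 1 := by decide
  obtain ⟨i0, hi0⟩ := hnotK
  obtain ⟨a, -, ha⟩ := Finset.exists_max_image (Finset.univ : Finset (Fin k)) n ⟨i0, by simp⟩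
  have ha2 : 2 ≤ n a := hi0.trans (ha i0 (by simp))
  have hne : (({a} : Finset (Fin k))ᶜ).Nonempty := by
    rw [← Finset.card_pos, Finset.card_compl]; simp; omega
  obtain ⟨b, hb, hbm⟩ := Finset.exists_max_image _ n hne
  have hba : b ≠ a := by simpa using hb
  have hbm' : ∀ q ∉ ({b, a} : Finset (Fin k)), ∀ s ∈ ({b, a} : Finset (Fin k)), n q ≤ n s := by
    intro q hq s hs
    simp only [Finset.mem_insert, Finset.mem_singleton, not_or] at hq hs
    rcases hs with rfl | rfl
    · exact hbm q (by simpa using hq.2)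
    · exact ha q (by simp)
  rcases Nat.lt_or_ge (n b) (n a) with hlt | hge
  · obtain ⟨c, hc, hD⟩ := li_step n hpos (fun _ _ => 0) {a} (by simp)
      ⟨fun _ _ => rfl, by
        intro u v hu hv huv
        simp only [Finset.mem_singleton] at hu hv
        exact absurd (hu.trans hv.symm) huv⟩ 0 1 z1 b (by simpa using hba) (by
        intro v hv
        rw [Finset.mem_singleton] at hv
        rw [hv]; omega)
    exact li_extend n hpos _ {b, a} 0 c rfl (by simp) hc hbm' hD
  have hnb : n b = n a := le_antisymm (ha b (by simp)) hge
  rcases Finset.eq_empty_or_nonempty (({b, a} : Finset (Fin k))ᶜ) with hem | hne2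
  · obtain ⟨c, hc⟩ := li_base2 n a b hba.symm hnb ha2
    have : ({b, a} : Finset (Fin k)) = Finset.univ := (Finset.compl_eq_empty_iff _).1 hem
    exact ⟨c, this ▸ hc⟩
  obtain ⟨e, he, hem⟩ := Finset.exists_max_image _ n hne2
  have he' : e ∉ ({b, a} : Finset (Fin k)) := by rwa [Finset.mem_compl] at he
  have hee : e ≠ b ∧ e ≠ a := by simpa using he'
  have hem' : ∀ q ∉ ({e, b, a} : Finset (Fin k)), ∀ s ∈ ({e, b, a} : Finset (Fin k)),
      n q ≤ n s := by
    intro q hq s hs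
    rw [Finset.mem_insert] at hs
    rw [Finset.mem_insert, not_or] at hq
    rcases hs with rfl | hs
    · exact hem q (by rw [Finset.mem_compl]; exact hq.2)
    · exact hbm' q hq.2 s hs
  have : ∃ c, liGood n c {e, b, a} ∧
      ∀ v : Σ i : Fin k, Fin (n i), v.1 ∈ ({e, b, a} : Finset (Fin k)) →
        0 < liD n c {e, b, a} 0 v := by
    rcases Nat.lt_or_ge (n e) (n a) with hlt | hge2
    · obtain ⟨c, hc⟩ := li_base2 n a b hba.symm hnb ha2
      refine li_step n hpos c {b, a} (by simp) hc 0 1 z1 e he' ?_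
      intro v hv
      simp only [Finset.mem_insert, Finset.mem_singleton] at hv
      rcases hv with hv | hv <;> rw [hv] <;> omega
    · have hne : n e = n a := le_antisymm (ha e (by simp)) hge2
      rcases Nat.lt_or_ge 2 (n a) with h3 | h3
      · exact li_base3 n a b e hba.symm hee.2.symm hee.1.symm hnb hne h3
      · exact li_base222 n a b e hba.symm hee.2.symm hee.1.symm (by omega) (by omega) (by omega)
  obtain ⟨c, hc, hD⟩ := this
  exact li_extend n hpos _ {e, b, a} 0 c rfl (by simp) hc hem' hD

/-- Every complete `k`-partite graph (`k ≥ 2`) with all parts nonempty which is not a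
complete graph (i.e. some part has at least two vertices) admits a 2-liec, so its
locally irregular chromatic index is at most 2. -/
theorem lir_complete_multipartite (k : ℕ) (hk : 2 ≤ k) (n : Fin k → ℕ)
    (hpos : ∀ i, 1 ≤ n i) (hnotK : ∃ i, 2 ≤ n i) :
    ∃ c : Sym2 (Σ i : Fin k, Fin (n i)) → Fin 2,
      IsLiec2 (SimpleGraph.completeMultipartiteGraph (fun i : Fin k => Fin (n i))) c := by
  obtain ⟨c, hs, hc⟩ := li_exists hk n hpos hnotK
  refine ⟨Sym2.lift ⟨c, hs⟩, ?_⟩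
  have hdeg : ∀ i v, cdeg (SimpleGraph.completeMultipartiteGraph (fun i : Fin k => Fin (n i)))
      (Sym2.lift ⟨c, hs⟩) i v = liD n c Finset.univ i v := by
    intro i v
    rw [liD, ← Finset.card_sigma, cdeg, ← Set.ncard_coe_finset]
    congr 1
    ext w
    simp [SimpleGraph.completeMultipartiteGraph, eq_comm]
  intro u v huv
  rw [hdeg, hdeg]
  exact hc u v (by simp) (by simp) (by simpa [SimpleGraph.completeMultipartiteGraph] using huv)
end

section
/- Let n ≥ 4. Then D_lir(K_n) = 2 if 6 ≤ n ≤ 10, and D_lir(K_n) = 1 otherwise (i.e., for n ∈ {4, 5} and for n ≥ 11). Concretely: the complete graph K_n admits a valid doubling-coloring (D, c) with |D| equal to the stated value, and admits none with |D| strictly smaller. -/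
open Finset
open scoped Classical

/-! ### Constructions -/

/-- Weighted degree of `v` in colour `i` for a colouring `r` and doubling `q` given on `ℕ`. -/
def sdeg (n : ℕ) (r q : ℕ → ℕ → Bool) (i : Bool) (v : ℕ) : ℕ :=
  ∑ w ∈ Finset.range n, cond (!(v == w) && (r v w == i)) (cond (q v w) 2 1) 0

/-- Boolean check that the colouring is valid. -/
def vcheck (n : ℕ) (r q : ℕ → ℕ → Bool) : Bool :=
  (List.range n).all fun u => (List.range n).all fun v =>
    (u == v) || !(sdeg n r q (r u v) u == sdeg n r q (r u v) v)

/-- The colour associated with a Boolean. -/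
def bcol (b : Bool) : Fin 2 := cond b 1 0

lemma bcol_inj (a b : Bool) : bcol a = bcol b ↔ a = b := by
  cases a <;> cases b <;> simp [bcol]

lemma exists_valid {n : ℕ} (r q : ℕ → ℕ → Bool) (hr : ∀ u < n, ∀ v < n, r u v = r v u)
    (D : Finset (Sym2 (Fin n))) (hD : ∀ u v : Fin n, s(u, v) ∈ D ↔ q u v = true)
    (hq : ∀ u, q u u = false)
    (h : ∀ u < n, ∀ v < n, u ≠ v → sdeg n r q (r u v) u ≠ sdeg n r q (r u v) v) :
    ∃ c : Sym2 (Fin n) → Fin 2, ValidDC (⊤ : SimpleGraph (Fin n)) D c := by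
  let c : Sym2 (Fin n) → Fin 2 :=
    Sym2.lift ⟨fun u v => bcol (r u v), fun u v =>
      congrArg bcol (hr u u.2 v v.2)⟩
  have hc : ∀ u v, c s(u, v) = bcol (r u v) := fun u v => rfl
  have hw : ∀ (i : Bool) (v : Fin n), wdeg ⊤ D c (bcol i) v = sdeg n r q i v := by
    intro i v
    unfold wdeg sdeg
    rw [Finset.sum_filter, ← Fin.sum_univ_eq_sum_range (fun w =>
      cond (!((v : ℕ) == w) && (r v w == i)) (cond (q v w) 2 1) 0)]
    refine Finset.sum_congr rfl fun w _ => ?_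
    simp only [hc, bcol_inj, hD, SimpleGraph.top_adj]
    by_cases h1 : v = w
    · simp [h1]
    · have h2 : ((v : ℕ) == w) = false := by
        simpa [Fin.ext_iff] using h1
      cases h3 : r v w <;> cases h4 : q v w <;> cases i <;> simp [h1, h2]
  refine ⟨c, ?_, ?_⟩
  · intro e he
    induction e using Sym2.ind with
    | _ u v =>
      have h1 := (hD u v).1 he
      rw [SimpleGraph.mem_edgeSet, SimpleGraph.top_adj]
      rintro rfl
      rw [hq] at h1
      cases h1
  · intro u v huv
    rw [hc, hw, hw]
    exact h u u.2 v v.2 (fun h => huv (Fin.ext h))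

/-- Adjacency from bit masks. -/
def bmask (M : List ℕ) (u v : ℕ) : Bool := (M.getD u 0).testBit v

/-- Doubling of the edge `01`. -/
def qone (u v : ℕ) : Bool := (u == 0 && v == 1) || (u == 1 && v == 0)

/-- Doubling of the edges `01` and `23`. -/
def qtwo (u v : ℕ) : Bool := qone u v || (u == 2 && v == 3) || (u == 3 && v == 2)

/-- Boolean symmetry check. -/
def scheck (n : ℕ) (r : ℕ → ℕ → Bool) : Bool :=
  (List.range n).all fun u => (List.range n).all fun v => r u v == r v u

lemma scheck_spec {n : ℕ} {r : ℕ → ℕ → Bool} (h : scheck n r = true) :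
    ∀ u < n, ∀ v < n, r u v = r v u := by
  simpa [scheck] using h

lemma vcheck_spec {n : ℕ} {r q : ℕ → ℕ → Bool} (h : vcheck n r q = true) :
    ∀ u < n, ∀ v < n, u ≠ v → sdeg n r q (r u v) u ≠ sdeg n r q (r u v) v := by
  intro u hu v hv huv
  simp only [vcheck, List.all_eq_true, List.mem_range] at h
  have := h u hu v hv
  simpa [huv] using this

lemma qone_self (u : ℕ) : qone u u = false := by
  simp only [qone]; grind

lemma qtwo_self (u : ℕ) : qtwo u u = false := by
  simp only [qtwo, qone]; grind

lemma exists_one {n : ℕ} (hn : 2 ≤ n) (r : ℕ → ℕ → Bool)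
    (hr : ∀ u < n, ∀ v < n, r u v = r v u)
    (h : ∀ u < n, ∀ v < n, u ≠ v → sdeg n r qone (r u v) u ≠ sdeg n r qone (r u v) v) :
    ∃ (D : Finset (Sym2 (Fin n))) (c : Sym2 (Fin n) → Fin 2),
      ValidDC (⊤ : SimpleGraph (Fin n)) D c ∧ D.card = 1 := by
  obtain ⟨c, hc⟩ := exists_valid r qone hr
    {s((⟨0, by omega⟩ : Fin n), (⟨1, by omega⟩ : Fin n))} (by
      intro u v
      simp [qone, Fin.ext_iff]) qone_self h
  exact ⟨_, c, hc, Finset.card_singleton _⟩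

lemma exists_two {n : ℕ} (hn : 4 ≤ n) (r : ℕ → ℕ → Bool)
    (hr : ∀ u < n, ∀ v < n, r u v = r v u)
    (h : ∀ u < n, ∀ v < n, u ≠ v → sdeg n r qtwo (r u v) u ≠ sdeg n r qtwo (r u v) v) :
    ∃ (D : Finset (Sym2 (Fin n))) (c : Sym2 (Fin n) → Fin 2),
      ValidDC (⊤ : SimpleGraph (Fin n)) D c ∧ D.card = 2 := by
  obtain ⟨c, hc⟩ := exists_valid r qtwo hr
    {s((⟨0, by omega⟩ : Fin n), (⟨1, by omega⟩ : Fin n)),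
      s((⟨2, by omega⟩ : Fin n), (⟨3, by omega⟩ : Fin n))} (by
      intro u v
      simp [qtwo, qone, Fin.ext_iff, or_assoc]) qtwo_self h
  refine ⟨_, c, hc, Finset.card_pair ?_⟩
  simp

/-- The colouring used for `n ≥ 11`: a fixed graph on 11 vertices, followed by alternately
isolated (odd) and universal (even) vertices. -/
def rbig (u v : ℕ) : Bool :=
  if max u v < 11 then
    bmask [1858, 1677, 2, 1026, 1792, 1920, 1921, 1890, 1777, 1523, 1019] u v
  else !(u == v) && (max u v % 2 == 0)

/-- Degree in the `true` graph. -/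
def dbig (n v : ℕ) : ℕ := ∑ w ∈ Finset.range n, (rbig v w).toNat

lemma rbig_symm (u v : ℕ) : rbig u v = rbig v u := by
  unfold rbig
  rw [max_comm v u]
  split_ifs with h
  · exact scheck_spec (n := 11) (by decide +kernel) u (by omega) v (by omega)
  · rw [Bool.beq_comm]

lemma rbig_self (u : ℕ) : rbig u u = false := by
  unfold rbig
  split_ifs with h
  · rw [max_self] at h
    interval_cases u <;> decide +kernel
  · simp

lemma dbig_succ (n v : ℕ) : dbig (n + 1) v = dbig n v + (rbig v n).toNat := by
  unfold dbig
  rw [Finset.sum_range_succ]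

lemma rbig_new {n v : ℕ} (hn : 11 ≤ n) (hv : v < n) : rbig v n = (n % 2 == 0) := by
  unfold rbig
  rw [if_neg (by omega), max_eq_right hv.le]
  have : (v == n) = false := by simp; omega
  simp [this]

lemma dbig_new {n : ℕ} (hn : 11 ≤ n) :
    dbig (n + 1) n = if n % 2 = 0 then n else 0 := by
  rw [dbig_succ, rbig_self]
  unfold dbig
  rw [Finset.sum_congr rfl (g := fun _ => (n % 2 == 0).toNat)]
  · split_ifs with h <;> simp [h]
  · intro w hw
    rw [rbig_symm, rbig_new hn (Finset.mem_range.1 hw)]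

/-- Invariant of the inductive construction. -/
structure BigInv (n : ℕ) : Prop where
  xy : dbig n 0 ≠ dbig n 1
  dist : ∀ u < n, ∀ v < n, 2 ≤ u → 2 ≤ v → u ≠ v → dbig n u ≠ dbig n v
  red : ∀ z < 2, ∀ v < n, 2 ≤ v → rbig z v = true → dbig n z + 1 ≠ dbig n v
  blue : ∀ z < 2, ∀ v < n, 2 ≤ v → rbig z v = false → dbig n z ≠ dbig n v
  odd : n % 2 = 1 → (∀ v < n, 1 ≤ dbig n v) ∧ (∀ v < n, dbig n v + 1 ≤ n) ∧
    ∀ z < 2, dbig n z + 2 ≤ n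
  even : n % 2 = 0 → (∀ v < n, dbig n v + 2 ≤ n) ∧ ∀ z < 2, dbig n z + 3 ≤ n

lemma bigInv {n : ℕ} (hn : 11 ≤ n) : BigInv n := by
  induction n, hn using Nat.le_induction with
  | base =>
    constructor
    · decide +kernel
    · have : ∀ u < 11, ∀ v < 11, (2 ≤ u ∧ 2 ≤ v ∧ u ≠ v) → dbig 11 u ≠ dbig 11 v := by
        decide +kernel
      exact fun u hu v hv h1 h2 h3 => this u hu v hv ⟨h1, h2, h3⟩
    · decide +kernel
    · decide +kernel
    · decide +kernel
    · decide +kernel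
  | succ n hn ih =>
    obtain ⟨hxy, hd, hr, hb, ho, he⟩ := ih
    have hnew := dbig_new hn
    have hold : ∀ v < n, dbig (n + 1) v = dbig n v + if n % 2 = 0 then 1 else 0 := by
      intro v hv
      rw [dbig_succ, rbig_new hn hv]
      split_ifs with h <;> simp [h]
    have hrn : ∀ z < 2, rbig z n = (n % 2 == 0) := fun z hz => rbig_new hn (by omega)
    have h0 := hold 0 (by omega)
    have h1 := hold 1 (by omega)
    rcases Nat.mod_two_eq_zero_or_one n with hm | hm
    · obtain ⟨e1, e2⟩ := he hm
      simp only [hm, if_true] at hnew hold h0 h1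
      constructor
      · omega
      · intro u hu v hv hu2 hv2 huv
        rcases Nat.lt_succ_iff_lt_or_eq.1 hu with hu | rfl <;>
        rcases Nat.lt_succ_iff_lt_or_eq.1 hv with hv | rfl
        · have := hd u hu v hv hu2 hv2 huv
          have := hold u hu
          have := hold v hv
          omega
        · have := hold u hu
          have := e1 u hu
          omega
        · have := hold v hv
          have := e1 v hv
          omega
        · omega
      · intro z hz v hv hv2 hzv
        have := hold z (by omega)
        rcases Nat.lt_succ_iff_lt_or_eq.1 hv with hv | rfl
        · have := hold v hv
          have := hr z hz v hv hv2 hzv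
          omega
        · have := e2 z hz
          omega
      · intro z hz v hv hv2 hzv
        have := hold z (by omega)
        rcases Nat.lt_succ_iff_lt_or_eq.1 hv with hv | rfl
        · have := hold v hv
          have := hb z hz v hv hv2 hzv
          omega
        · have := e2 z hz
          omega
      · intro _
        refine ⟨?_, ?_, ?_⟩
        · intro v hv
          rcases Nat.lt_succ_iff_lt_or_eq.1 hv with hv | rfl
          · have := hold v hv
            omega
          · omega
        · intro v hv
          rcases Nat.lt_succ_iff_lt_or_eq.1 hv with hv | rfl
          · have := hold v hv
            have := e1 v hv
            omega
          · omega
        · intro z hz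
          have := hold z (by omega)
          have := e2 z hz
          omega
      · intro h
        omega
    · obtain ⟨o1, o2, o3⟩ := ho hm
      have hm' : ¬ (n % 2 = 0) := by omega
      simp only [hm', if_false, Nat.add_zero] at hnew hold h0 h1
      constructor
      · omega
      · intro u hu v hv hu2 hv2 huv
        rcases Nat.lt_succ_iff_lt_or_eq.1 hu with hu | rfl <;>
        rcases Nat.lt_succ_iff_lt_or_eq.1 hv with hv | rfl
        · have := hd u hu v hv hu2 hv2 huv
          have := hold u hu
          have := hold v hv
          omega
        · have := hold u hu
          have := o1 u hu
          omega
        · have := hold v hv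
          have := o1 v hv
          omega
        · omega
      · intro z hz v hv hv2 hzv
        have := hold z (by omega)
        rcases Nat.lt_succ_iff_lt_or_eq.1 hv with hv | rfl
        · have := hold v hv
          have := hr z hz v hv hv2 hzv
          omega
        · omega
      · intro z hz v hv hv2 hzv
        have := hold z (by omega)
        rcases Nat.lt_succ_iff_lt_or_eq.1 hv with hv | rfl
        · have := hold v hv
          have := hb z hz v hv hv2 hzv
          omega
        · have := o1 z (by omega)
          omega
      · intro h
        omega
      · intro _
        refine ⟨?_, ?_⟩
        · intro v hv
          rcases Nat.lt_succ_iff_lt_or_eq.1 hv with hv | rfl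
          · have := hold v hv
            have := o2 v hv
            omega
          · omega
        · intro z hz
          have := hold z (by omega)
          have := o3 z hz
          omega

lemma rbig_zero_one : rbig 0 1 = true := by decide +kernel

lemma sdeg_true {n : ℕ} (hn : 2 ≤ n) (v : ℕ) :
    sdeg n rbig qone true v = dbig n v + if v < 2 then 1 else 0 := by
  have h1 : ∀ w ∈ Finset.range n, cond (!(v == w) && (rbig v w == true)) (cond (qone v w) 2 1) 0
      = (rbig v w).toNat + if v < 2 ∧ w = 1 - v then 1 else 0 := by
    intro w _
    by_cases hvw : v = w
    · subst hvw
      rw [rbig_self, if_neg (by omega)]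
      simp
    · have h2 : (v == w) = false := by simpa using hvw
      by_cases hq : v < 2 ∧ w = 1 - v
      · have hq1 : qone v w = true := by
          obtain ⟨a, rfl⟩ := hq
          interval_cases v <;> rfl
        have hr : rbig v w = true := by
          obtain ⟨a, rfl⟩ := hq
          interval_cases v
          · exact rbig_zero_one
          · rw [rbig_symm]; exact rbig_zero_one
        rw [if_pos hq, hq1, hr, h2]
        rfl
      · have hq1 : qone v w = false := by
          by_contra h
          simp only [qone, Bool.not_eq_false, Bool.or_eq_true, Bool.and_eq_true, beq_iff_eq] at h
          omega
        rw [if_neg hq]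
        cases hr : rbig v w <;> simp [hq1, h2]
  unfold sdeg dbig
  rw [Finset.sum_congr rfl h1, Finset.sum_add_distrib]
  congr 1
  split_ifs with hv
  · simp only [hv, true_and]
    rw [Finset.sum_ite_eq' (Finset.range n) (1 - v) (fun _ => 1), if_pos]
    rw [Finset.mem_range]; omega
  · simp [hv]

lemma sdeg_false {n v : ℕ} (hv : v < n) :
    sdeg n rbig qone false v + dbig n v + 1 = n := by
  have h1 : ∀ w ∈ Finset.range n, cond (!(v == w) && (rbig v w == false)) (cond (qone v w) 2 1) 0
      + (rbig v w).toNat + (if w = v then 1 else 0) = 1 := by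
    intro w _
    by_cases hvw : v = w
    · subst hvw
      rw [rbig_self]
      simp
    · have h2 : (v == w) = false := by simpa using hvw
      have h3 : w ≠ v := fun h => hvw h.symm
      cases hr : rbig v w
      · have hq1 : qone v w = false := by
          by_contra hq
          have : rbig v w = true := by
            have : (v = 0 ∧ w = 1) ∨ (v = 1 ∧ w = 0) := by
              simpa only [qone, Bool.not_eq_false, Bool.or_eq_true, Bool.and_eq_true,
                beq_iff_eq] using hq
            rcases this with ⟨rfl, rfl⟩ | ⟨rfl, rfl⟩
            · exact rbig_zero_one
            · rw [rbig_symm]; exact rbig_zero_one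
          rw [hr] at this
          cases this
        simp [hq1, h2, h3]
      · simp [h3]
  have h2 := Finset.sum_congr (rfl : Finset.range n = Finset.range n) h1
  rw [Finset.sum_add_distrib, Finset.sum_add_distrib,
    Finset.sum_ite_eq' (Finset.range n) v (fun _ => 1), if_pos (Finset.mem_range.2 hv)] at h2
  simpa [sdeg, dbig] using h2

lemma exists_big {n : ℕ} (hn : 11 ≤ n) :
    ∃ (D : Finset (Sym2 (Fin n))) (c : Sym2 (Fin n) → Fin 2),
      ValidDC (⊤ : SimpleGraph (Fin n)) D c ∧ D.card = 1 := by
  refine exists_one (by omega) rbig (fun u _ v _ => rbig_symm u v) ?_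
  obtain ⟨hxy, hd, hr, hb, -, -⟩ := bigInv hn
  intro u hu v hv huv
  have fu := sdeg_false hu
  have fv := sdeg_false hv
  have tu := sdeg_true (n := n) (by omega) u
  have tv := sdeg_true (n := n) (by omega) v
  by_cases hu2 : u < 2 <;> by_cases hv2 : v < 2
  · have : dbig n u ≠ dbig n v := by
      interval_cases u <;> interval_cases v <;> omega
    cases rbig u v <;> simp only [hu2, hv2, if_true] at tu tv <;> omega
  · have h1 := hr u hu2 v hv (by omega)
    have h2 := hb u hu2 v hv (by omega)
    simp only [hu2, hv2, if_true, if_false] at tu tv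
    cases h : rbig u v
    · have := h2 h
      omega
    · have := h1 h
      omega
  · have h1 := hr v hv2 u hu (by omega)
    have h2 := hb v hv2 u hu (by omega)
    simp only [hu2, hv2, if_true, if_false] at tu tv
    rw [rbig_symm v u] at h1 h2
    cases h : rbig u v
    · have := h2 h
      omega
    · have := h1 h
      omega
  · have := hd u hu v hv (by omega) (by omega) huv
    simp only [hu2, hv2, if_false] at tu tv
    cases rbig u v <;> omega

lemma exists_small_one {n : ℕ} (M : List ℕ) (hn : 2 ≤ n) (h1 : scheck n (bmask M) = true)
    (h2 : vcheck n (bmask M) qone = true) :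
    ∃ (D : Finset (Sym2 (Fin n))) (c : Sym2 (Fin n) → Fin 2),
      ValidDC (⊤ : SimpleGraph (Fin n)) D c ∧ D.card = 1 :=
  exists_one hn _ (scheck_spec h1) (vcheck_spec h2)

lemma exists_small_two {n : ℕ} (M : List ℕ) (hn : 4 ≤ n) (h1 : scheck n (bmask M) = true)
    (h2 : vcheck n (bmask M) qtwo = true) :
    ∃ (D : Finset (Sym2 (Fin n))) (c : Sym2 (Fin n) → Fin 2),
      ValidDC (⊤ : SimpleGraph (Fin n)) D c ∧ D.card = 2 :=
  exists_two hn _ (scheck_spec h1) (vcheck_spec h2)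

lemma exists_all (n : ℕ) (hn : 4 ≤ n) :
    ∃ (D : Finset (Sym2 (Fin n))) (c : Sym2 (Fin n) → Fin 2),
        ValidDC (⊤ : SimpleGraph (Fin n)) D c ∧
        D.card = (if 6 ≤ n ∧ n ≤ 10 then 2 else 1) := by
  by_cases h : 11 ≤ n
  · rw [if_neg (by omega)]
    exact exists_big h
  · have : n ≤ 10 := by omega
    interval_cases n
    · exact exists_small_one [14, 5, 3, 1] (by omega) (by decide +kernel) (by decide +kernel)
    · exact exists_small_one [24, 8, 24, 23, 13] (by omega) (by decide +kernel)
        (by decide +kernel)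
    · exact exists_small_two [4, 44, 59, 54, 44, 30] (by omega) (by decide +kernel)
        (by decide +kernel)
    · exact exists_small_two [54, 37, 59, 4, 5, 7, 0] (by omega) (by decide +kernel)
        (by decide +kernel)
    · exact exists_small_two [64, 68, 234, 228, 96, 92, 191, 76] (by omega)
        (by decide +kernel) (by decide +kernel)
    · exact exists_small_two [32, 308, 242, 80, 366, 471, 60, 36, 50] (by omega)
        (by decide +kernel) (by decide +kernel)
    · exact exists_small_two [32, 996, 802, 544, 96, 735, 690, 610, 518, 494] (by omega)
        (by decide +kernel) (by decide +kernel)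

/-! ### Lower bound -/

section Lower

variable {V : Type*}

/-- Degree of `v` into the set `S`. -/
noncomputable def gd (r : V → V → Prop) (S : Finset V) (v : V) : ℕ :=
  (S.filter fun w => r v w).card

/-- Degree conditions for a colouring with the single doubled edge `xy`. -/
structure Good (r : V → V → Prop) (x y : V) (S : Finset V) : Prop where
  symm : ∀ u v, r u v → r v u
  irr : ∀ u, ¬ r u u
  hx : x ∈ S
  hy : y ∈ S
  rxy : r x y
  dxy : gd r S x ≠ gd r S y
  dist : ∀ u ∈ S, ∀ v ∈ S, u ≠ x → u ≠ y → v ≠ x → v ≠ y → u ≠ v → gd r S u ≠ gd r S v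
  red : ∀ z, (z = x ∨ z = y) → ∀ v ∈ S, v ≠ x → v ≠ y → r z v → gd r S z + 1 ≠ gd r S v
  blue : ∀ z, (z = x ∨ z = y) → ∀ v ∈ S, v ≠ x → v ≠ y → ¬ r z v → gd r S z ≠ gd r S v

lemma gd_erase (r : V → V → Prop) {S : Finset V} {u : V} (hu : u ∈ S) (v : V) :
    gd r S v = gd r (S.erase u) v + if r v u then 1 else 0 := by
  unfold gd
  conv_lhs => rw [← Finset.insert_erase hu, Finset.filter_insert]
  split_ifs with h
  · rw [Finset.card_insert_of_notMem]
    simp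
  · rfl

lemma gd_lt {r : V → V → Prop} (hi : ∀ u, ¬ r u u) {S : Finset V} {u : V} (hu : u ∈ S) :
    gd r S u < S.card := by
  refine Finset.card_lt_card (Finset.filter_ssubset.2 ⟨u, hu, hi u⟩)

lemma gd_zero {r : V → V → Prop} {S : Finset V} {u : V} (h : gd r S u = 0) :
    ∀ v ∈ S, ¬ r u v := by
  intro v hv
  exact Finset.filter_eq_empty_iff.1 (Finset.card_eq_zero.1 h) hv

lemma gd_full {r : V → V → Prop} (hi : ∀ u, ¬ r u u) {S : Finset V} {u : V} (hu : u ∈ S)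
    (h : gd r S u + 1 = S.card) : ∀ v ∈ S, v ≠ u → r u v := by
  have h1 : S.filter (fun w => r u w) = S.erase u := by
    apply Finset.eq_of_subset_of_card_le
    · intro w hw
      rw [Finset.mem_filter] at hw
      rw [Finset.mem_erase]
      refine ⟨?_, hw.1⟩
      rintro rfl
      exact hi _ hw.2
    · rw [Finset.card_erase_of_mem hu]
      unfold gd at h
      omega
  intro v hv hvu
  have : v ∈ S.erase u := Finset.mem_erase.2 ⟨hvu, hv⟩
  rw [← h1, Finset.mem_filter] at this
  exact this.2

lemma Good.strip {r : V → V → Prop} {x y : V} {S : Finset V} (h : Good r x y S) {u : V}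
    (hux : u ≠ x) (huy : u ≠ y) (t : ℕ)
    (ht : ∀ v ∈ S, v ≠ u → gd r S v = gd r (S.erase u) v + t) : Good r x y (S.erase u) := by
  have hx := ht x h.hx hux.symm
  have hy := ht y h.hy huy.symm
  have hz : ∀ z, (z = x ∨ z = y) → gd r S z = gd r (S.erase u) z + t := by
    rintro z (rfl | rfl) <;> assumption
  refine ⟨h.symm, h.irr, Finset.mem_erase.2 ⟨hux.symm, h.hx⟩,
    Finset.mem_erase.2 ⟨huy.symm, h.hy⟩, h.rxy, ?_, ?_, ?_, ?_⟩
  · have := h.dxy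
    omega
  · intro a ha b hb h1 h2 h3 h4 h5
    rw [Finset.mem_erase] at ha hb
    have := h.dist a ha.2 b hb.2 h1 h2 h3 h4 h5
    have := ht a ha.2 ha.1
    have := ht b hb.2 hb.1
    omega
  · intro z hzz v hv h1 h2 h3
    rw [Finset.mem_erase] at hv
    have := h.red z hzz v hv.2 h1 h2 h3
    have := ht v hv.2 hv.1
    have := hz z hzz
    omega
  · intro z hzz v hv h1 h2 h3
    rw [Finset.mem_erase] at hv
    have := h.blue z hzz v hv.2 h1 h2 h3
    have := ht v hv.2 hv.1
    have := hz z hzz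
    omega

lemma gd_pos_of {r : V → V → Prop} {T : Finset V} {z w : V} (hw : w ∈ T) (h : r z w) :
    1 ≤ gd r T z :=
  Finset.card_pos.2 ⟨w, Finset.mem_filter.2 ⟨hw, h⟩⟩

lemma gd_lt_of {r : V → V → Prop} {T : Finset V} {z w : V} (hw : w ∈ T) (h : ¬ r z w) :
    gd r T z < T.card :=
  Finset.card_lt_card (Finset.filter_ssubset.2 ⟨w, hw, h⟩)

lemma gd_le (r : V → V → Prop) (T : Finset V) (z : V) : gd r T z ≤ T.card :=
  Finset.card_filter_le _ _

lemma sum_gd_comm {r : V → V → Prop} (hs : ∀ u v, r u v → r v u) (T B : Finset V) :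
    ∑ v ∈ T, gd r B v = ∑ w ∈ B, gd r T w := by
  have hs' : ∀ u v, r u v ↔ r v u := fun u v => ⟨hs u v, hs v u⟩
  unfold gd
  simp only [Finset.card_filter]
  rw [Finset.sum_comm]
  simp only [hs']

lemma sum_ind {r : V → V → Prop} (hs : ∀ u v, r u v → r v u) (T : Finset V) (x : V) :
    ∑ v ∈ T, (if r v x then 1 else 0) = gd r T x := by
  have hs' : ∀ u, r u x ↔ r x u := fun u => ⟨hs u x, hs x u⟩
  unfold gd
  rw [Finset.card_filter]
  simp only [hs']

/-- Bounds on the contribution of one endpoint of the doubled edge. -/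
def ContribBound (k d p a : ℕ) : Prop :=
  match k with
  | 0 => d = 1
  | 1 => d = 2
  | 2 => d = 2 ∧ p ≤ a + 1 ∨ d = 3 ∧ p ≤ a
  | 3 => d = 3 ∧ p ≤ a ∨ p + 1 ≤ a
  | 4 => d = 4 ∧ p ≤ a + 1 ∨ p ≤ a
  | 5 => p ≤ a
  | 6 => p ≤ a + 1
  | 7 => d = 4 ∧ p ≤ a + 1 ∨ p ≤ a
  | 8 => d = 5 ∧ p ≤ a + 2 ∨ p ≤ a + 1
  | _ => True

lemma arith_one {k tc bc d p a : ℕ}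
    (hk : k = 0 ∧ tc = 0 ∧ bc = 0 ∨ k = 1 ∧ tc = 0 ∧ bc = 1 ∨ k = 2 ∧ tc = 1 ∧ bc = 1 ∨
      k = 3 ∧ tc = 1 ∧ bc = 2 ∨ k = 4 ∧ tc = 2 ∧ bc = 2 ∨ k = 5 ∧ tc = 2 ∧ bc = 3 ∨
      k = 6 ∧ tc = 3 ∧ bc = 3 ∨ k = 7 ∧ tc = 3 ∧ bc = 4 ∨ k = 8 ∧ tc = 4 ∧ bc = 4)
    (hd : d = p + a + 1) (hp : p ≤ tc) (ha : a ≤ bc)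
    (h : (d ≤ k → (k + 1) / 2 < d → 1 ≤ p) ∧ (d ≤ k → ¬ (k + 1) / 2 < d → 1 ≤ a) ∧
      (d + 1 ≤ k → (k + 1) / 2 < d + 1 → p < tc) ∧
      (d + 1 ≤ k → ¬ (k + 1) / 2 < d + 1 → a < bc)) : ContribBound k d p a := by
  obtain ⟨h1, h2, h3, h4⟩ := h
  subst hd
  rcases hk with ⟨rfl, rfl, rfl⟩ | ⟨rfl, rfl, rfl⟩ | ⟨rfl, rfl, rfl⟩ | ⟨rfl, rfl, rfl⟩ |
    ⟨rfl, rfl, rfl⟩ | ⟨rfl, rfl, rfl⟩ | ⟨rfl, rfl, rfl⟩ | ⟨rfl, rfl, rfl⟩ | ⟨rfl, rfl, rfl⟩ <;>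
  simp only [ContribBound] <;> interval_cases p <;> omega

/-- The case where no vertex other than `x`, `y` is isolated or universal. -/
lemma Good.stripped {r : V → V → Prop} {x y : V} {S : Finset V} (h : Good r x y S) {k : ℕ}
    (hk : k ≤ 8) (hS : S.card = k + 2)
    (hW : ∀ v ∈ S, v ≠ x → v ≠ y → 1 ≤ gd r S v ∧ gd r S v ≤ k) :
    k = 2 ∧ ((gd r S x = 2 ∧ gd r S y = 3) ∨ (gd r S x = 3 ∧ gd r S y = 2)) := by
  have hxy : x ≠ y := by
    intro e
    have := h.rxy
    rw [e] at this
    exact h.irr _ this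
  obtain ⟨W, hWdef⟩ : ∃ W, W = (S.erase x).erase y := ⟨_, rfl⟩
  have hyx : y ∈ S.erase x := Finset.mem_erase.2 ⟨hxy.symm, h.hy⟩
  have memW : ∀ v, v ∈ W ↔ v ≠ y ∧ v ≠ x ∧ v ∈ S := by
    intro v
    rw [hWdef, Finset.mem_erase, Finset.mem_erase]
  have cardW : W.card = k := by
    rw [hWdef, Finset.card_erase_of_mem hyx, Finset.card_erase_of_mem h.hx]
    omega
  have hinj : Set.InjOn (gd r S) W := by
    intro u hu v hv huv
    by_contra hne
    have hu := (memW u).1 hu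
    have hv := (memW v).1 hv
    exact h.dist u hu.2.2 v hv.2.2 hu.2.1 hu.1 hv.2.1 hv.1 hne huv
  have himg : W.image (gd r S) = Finset.Icc 1 k := by
    apply Finset.eq_of_subset_of_card_le
    · intro i hi
      obtain ⟨v, hv, rfl⟩ := Finset.mem_image.1 hi
      have hv := (memW v).1 hv
      rw [Finset.mem_Icc]
      exact hW v hv.2.2 hv.2.1 hv.1
    · rw [Finset.card_image_of_injOn hinj, cardW]
      simp
  have hex : ∀ i, 1 ≤ i → i ≤ k → ∃ w ∈ W, gd r S w = i := by
    intro i h1 h2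
    have : i ∈ W.image (gd r S) := by
      rw [himg, Finset.mem_Icc]
      exact ⟨h1, h2⟩
    simpa using this
  have hdec : ∀ v, gd r S v = gd r W v + (if r v x then 1 else 0) + (if r v y then 1 else 0) := by
    intro v
    rw [gd_erase r h.hx v, gd_erase r hyx v, ← hWdef]
    omega
  obtain ⟨τ, hτ⟩ : ∃ τ, τ = (k + 1) / 2 := ⟨_, rfl⟩
  obtain ⟨T, hT⟩ : ∃ T, T = W.filter (fun v => τ < gd r S v) := ⟨_, rfl⟩
  obtain ⟨B, hB⟩ : ∃ B, B = W.filter (fun v => ¬ τ < gd r S v) := ⟨_, rfl⟩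
  have imT : T.image (gd r S) = (Finset.Icc 1 k).filter (fun i => τ < i) := by
    rw [← himg, Finset.filter_image, hT]
  have imB : B.image (gd r S) = (Finset.Icc 1 k).filter (fun i => ¬ τ < i) := by
    rw [← himg, Finset.filter_image, hB]
  have subT : T ⊆ W := by rw [hT]; exact Finset.filter_subset _ _
  have subB : B ⊆ W := by rw [hB]; exact Finset.filter_subset _ _
  have injT : Set.InjOn (gd r S) T := hinj.mono (by exact_mod_cast subT)
  have injB : Set.InjOn (gd r S) B := hinj.mono (by exact_mod_cast subB)
  have cT : T.card = ((Finset.Icc 1 k).filter (fun i => τ < i)).card := by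
    rw [← imT, Finset.card_image_of_injOn injT]
  have cB : B.card = ((Finset.Icc 1 k).filter (fun i => ¬ τ < i)).card := by
    rw [← imB, Finset.card_image_of_injOn injB]
  have sT : ∑ v ∈ T, gd r S v = ∑ i ∈ (Finset.Icc 1 k).filter (fun i => τ < i), i := by
    rw [← imT, Finset.sum_image injT]
  have sB : ∑ v ∈ B, gd r S v = ∑ i ∈ (Finset.Icc 1 k).filter (fun i => ¬ τ < i), i := by
    rw [← imB, Finset.sum_image injB]
  have hWTB : ∀ v, gd r W v = gd r T v + gd r B v := by
    intro v
    unfold gd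
    rw [hT, hB, Finset.filter_filter, Finset.filter_filter,
      ← Finset.card_filter_add_card_filter_not (s := W.filter fun w => r v w)
        (fun w => τ < gd r S w), Finset.filter_filter, Finset.filter_filter]
    simp only [gd, and_comm]
    congr!
  have sT2 : ∑ v ∈ T, gd r S v = ∑ v ∈ T, gd r T v + ∑ v ∈ T, gd r B v
      + gd r T x + gd r T y := by
    rw [← sum_ind h.symm T x, ← sum_ind h.symm T y, ← Finset.sum_add_distrib,
      ← Finset.sum_add_distrib, ← Finset.sum_add_distrib]
    refine Finset.sum_congr rfl fun v _ => ?_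
    rw [hdec v, hWTB v]
  have sB2 : ∑ v ∈ B, gd r S v = ∑ v ∈ B, gd r T v + ∑ v ∈ B, gd r B v
      + gd r B x + gd r B y := by
    rw [← sum_ind h.symm B x, ← sum_ind h.symm B y, ← Finset.sum_add_distrib,
      ← Finset.sum_add_distrib, ← Finset.sum_add_distrib]
    refine Finset.sum_congr rfl fun v _ => ?_
    rw [hdec v, hWTB v]
  have hTT : ∑ v ∈ T, gd r T v ≤ T.card * (T.card - 1) := by
    refine Finset.sum_le_card_nsmul _ _ _ ?_
    intro v hv
    have := gd_lt h.irr hv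
    omega
  have hTB := sum_gd_comm h.symm T B
  have dz : ∀ z, (z = x ∨ z = y) → gd r S z = gd r T z + gd r B z + 1 := by
    rintro z (rfl | rfl)
    · rw [hdec, hWTB, if_neg (h.irr _), if_pos h.rxy]
    · rw [hdec, hWTB, if_neg (h.irr _), if_pos (h.symm _ _ h.rxy)]
  have inT : ∀ w ∈ W, τ < gd r S w → w ∈ T := by
    intro w hw h1
    rw [hT, Finset.mem_filter]
    exact ⟨hw, h1⟩
  have inB : ∀ w ∈ W, ¬ τ < gd r S w → w ∈ B := by
    intro w hw h1
    rw [hB, Finset.mem_filter]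
    exact ⟨hw, h1⟩
  have key : ∀ z, (z = x ∨ z = y) →
      (gd r S z ≤ k → τ < gd r S z → 1 ≤ gd r T z) ∧
      (gd r S z ≤ k → ¬ τ < gd r S z → 1 ≤ gd r B z) ∧
      (gd r S z + 1 ≤ k → τ < gd r S z + 1 → gd r T z < T.card) ∧
      (gd r S z + 1 ≤ k → ¬ τ < gd r S z + 1 → gd r B z < B.card) := by
    intro z hz
    have hd := dz z hz
    have hred : ∀ w ∈ W, gd r S w = gd r S z → r z w := by
      intro w hw he
      have hw := (memW w).1 hw
      by_contra hc
      exact h.blue z hz w hw.2.2 hw.2.1 hw.1 hc he.symm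
    have hblue : ∀ w ∈ W, gd r S w = gd r S z + 1 → ¬ r z w := by
      intro w hw he hc
      have hw := (memW w).1 hw
      exact h.red z hz w hw.2.2 hw.2.1 hw.1 hc he.symm
    refine ⟨?_, ?_, ?_, ?_⟩
    · intro h1 h2
      obtain ⟨w, hw, he⟩ := hex (gd r S z) (by omega) h1
      exact gd_pos_of (inT w hw (by omega)) (hred w hw he)
    · intro h1 h2
      obtain ⟨w, hw, he⟩ := hex (gd r S z) (by omega) h1
      exact gd_pos_of (inB w hw (by omega)) (hred w hw he)
    · intro h1 h2
      obtain ⟨w, hw, he⟩ := hex (gd r S z + 1) (by omega) h1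
      exact gd_lt_of (inT w hw (by omega)) (hblue w hw he)
    · intro h1 h2
      obtain ⟨w, hw, he⟩ := hex (gd r S z + 1) (by omega) h1
      exact gd_lt_of (inB w hw (by omega)) (hblue w hw he)
  have kx := key x (Or.inl rfl)
  have ky := key y (Or.inr rfl)
  have dx := dz x (Or.inl rfl)
  have dy := dz y (Or.inr rfl)
  have lx := gd_le r T x
  have ly := gd_le r T y
  have lx' := gd_le r B x
  have ly' := gd_le r B y
  have hne := h.dxy
  have hsum : ∑ i ∈ (Finset.Icc 1 k).filter (fun i => τ < i), i ≤
      T.card * (T.card - 1) + (∑ i ∈ (Finset.Icc 1 k).filter (fun i => ¬ τ < i), i)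
      + gd r T x + gd r T y - gd r B x - gd r B y := by
    rw [← sT, ← sB]
    omega
  clear sT sB sT2 sB2 hTT hTB key dz hW hS hex himg imT imB
  generalize gd r S x = d at *
  generalize gd r S y = e at *
  generalize gd r T x = p at *
  generalize gd r T y = q at *
  generalize gd r B x = a at *
  generalize gd r B y = b at *
  generalize T.card = tc at *
  generalize B.card = bc at *
  have fin : ∀ A1 A2 A3 A4 : ℕ,
      ((Finset.Icc 1 k).filter (fun i => τ < i)).card = A1 →
      ((Finset.Icc 1 k).filter (fun i => ¬ τ < i)).card = A2 →
      ∑ i ∈ (Finset.Icc 1 k).filter (fun i => τ < i), i = A3 →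
      ∑ i ∈ (Finset.Icc 1 k).filter (fun i => ¬ τ < i), i = A4 →
      tc = A1 ∧ bc = A2 ∧ A3 ≤ A1 * (A1 - 1) + A4 + p + q - a - b := by
    rintro A1 A2 A3 A4 rfl rfl rfl rfl
    refine ⟨cT, cB, ?_⟩
    rw [← cT]
    exact hsum
  clear hsum cT cB
  subst hτ
  have fin2 : k = 0 ∧ tc = 0 ∧ bc = 0 ∨
      k = 1 ∧ tc = 0 ∧ bc = 1 ∨
      k = 2 ∧ tc = 1 ∧ bc = 1 ∧ 2 ≤ 1 + p + q - a - b ∨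
      k = 3 ∧ tc = 1 ∧ bc = 2 ∧ 3 ≤ 3 + p + q - a - b ∨
      k = 4 ∧ tc = 2 ∧ bc = 2 ∧ 7 ≤ 5 + p + q - a - b ∨
      k = 5 ∧ tc = 2 ∧ bc = 3 ∧ 9 ≤ 8 + p + q - a - b ∨
      k = 6 ∧ tc = 3 ∧ bc = 3 ∧ 15 ≤ 12 + p + q - a - b ∨
      k = 7 ∧ tc = 3 ∧ bc = 4 ∧ 18 ≤ 16 + p + q - a - b ∨
      k = 8 ∧ tc = 4 ∧ bc = 4 ∧ 26 ≤ 22 + p + q - a - b := by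
    clear kx ky dx dy lx ly lx' ly' hne
    interval_cases k
    · obtain ⟨h1, h2, h3⟩ := fin 0 0 0 0 (by decide) (by decide) (by decide) (by decide)
      simp [h1, h2] <;> omega
    · obtain ⟨h1, h2, h3⟩ := fin 0 1 0 1 (by decide) (by decide) (by decide) (by decide)
      simp [h1, h2] <;> omega
    · obtain ⟨h1, h2, h3⟩ := fin 1 1 2 1 (by decide) (by decide) (by decide) (by decide)
      simp [h1, h2] <;> omega
    · obtain ⟨h1, h2, h3⟩ := fin 1 2 3 3 (by decide) (by decide) (by decide) (by decide)
      simp [h1, h2] <;> omega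
    · obtain ⟨h1, h2, h3⟩ := fin 2 2 7 3 (by decide) (by decide) (by decide) (by decide)
      simp [h1, h2] <;> omega
    · obtain ⟨h1, h2, h3⟩ := fin 2 3 9 6 (by decide) (by decide) (by decide) (by decide)
      simp [h1, h2] <;> omega
    · obtain ⟨h1, h2, h3⟩ := fin 3 3 15 6 (by decide) (by decide) (by decide) (by decide)
      simp [h1, h2] <;> omega
    · obtain ⟨h1, h2, h3⟩ := fin 3 4 18 10 (by decide) (by decide) (by decide) (by decide)
      simp [h1, h2] <;> omega
    · obtain ⟨h1, h2, h3⟩ := fin 4 4 26 10 (by decide) (by decide) (by decide) (by decide)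
      simp [h1, h2] <;> omega
  have fin3 : (k = 0 ∧ tc = 0 ∧ bc = 0 ∨ k = 1 ∧ tc = 0 ∧ bc = 1 ∨ k = 2 ∧ tc = 1 ∧ bc = 1 ∨
      k = 3 ∧ tc = 1 ∧ bc = 2 ∨ k = 4 ∧ tc = 2 ∧ bc = 2 ∨ k = 5 ∧ tc = 2 ∧ bc = 3 ∨
      k = 6 ∧ tc = 3 ∧ bc = 3 ∨ k = 7 ∧ tc = 3 ∧ bc = 4 ∨ k = 8 ∧ tc = 4 ∧ bc = 4) := by
    clear kx ky fin dx dy lx ly lx' ly' hne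
    rcases fin2 with f | f | f | f | f | f | f | f | f <;> simp [f]
  have ax := arith_one fin3 dx lx lx' kx
  have ay := arith_one fin3 dy ly ly' ky
  clear kx ky fin fin3 lx ly lx' ly'
  rcases fin2 with f | f | f | f | f | f | f | f | f <;>
    simp only [f, ContribBound] at ax ay <;> omega

lemma Good.small {r : V → V → Prop} {x y : V} (N : ℕ) : ∀ S : Finset V, S.card = N → N ≤ 10 →
    Good r x y S →
    (N = 4 ∧ ((gd r S x = 2 ∧ gd r S y = 3) ∨ (gd r S x = 3 ∧ gd r S y = 2))) ∨
    (N = 5 ∧ ((gd r S x = 2 ∧ gd r S y = 3) ∨ (gd r S x = 3 ∧ gd r S y = 2)) ∧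
      ∃ u ∈ S, u ≠ x ∧ u ≠ y ∧ gd r S u = 0) := by
  induction N using Nat.strong_induction_on with
  | _ N ih =>
    intro S hS hN h
    have hxy : x ≠ y := by
      intro e
      have := h.rxy
      rw [e] at this
      exact h.irr _ this
    have h2 : 2 ≤ S.card := by
      have : ({x, y} : Finset V) ⊆ S := by
        intro v hv
        rw [Finset.mem_insert, Finset.mem_singleton] at hv
        rcases hv with rfl | rfl
        · exact h.hx
        · exact h.hy
      have := Finset.card_le_card this
      rwa [Finset.card_pair hxy] at this
    by_cases h0 : ∃ u ∈ S, u ≠ x ∧ u ≠ y ∧ gd r S u = 0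
    · obtain ⟨u, hu, hux, huy, hu0⟩ := h0
      have hz := gd_zero hu0
      have ht : ∀ v ∈ S, v ≠ u → gd r S v = gd r (S.erase u) v + 0 := by
        intro v hv _
        rw [gd_erase r hu v, if_neg (fun hc => hz v hv (h.symm _ _ hc))]
      have hc := Finset.card_erase_of_mem hu
      have tx := ht x h.hx hux.symm
      have ty := ht y h.hy huy.symm
      rcases ih (N - 1) (by omega) (S.erase u) (by omega) (by omega)
        (h.strip hux huy 0 ht) with ⟨a, b⟩ | ⟨a, b, w, hw, hwx, hwy, hw0⟩
      · right
        refine ⟨by omega, by omega, u, hu, hux, huy, hu0⟩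
      · exfalso
        rw [Finset.mem_erase] at hw
        have := ht w hw.2 hw.1
        exact h.dist u hu w hw.2 hux huy hwx hwy hw.1.symm (by omega)
    · by_cases h1 : ∃ u ∈ S, u ≠ x ∧ u ≠ y ∧ gd r S u + 1 = S.card
      · exfalso
        obtain ⟨u, hu, hux, huy, hu1⟩ := h1
        have hz := gd_full h.irr hu hu1
        have ht : ∀ v ∈ S, v ≠ u → gd r S v = gd r (S.erase u) v + 1 := by
          intro v hv hvu
          rw [gd_erase r hu v, if_pos (h.symm _ _ (hz v hv hvu))]
        have hc := Finset.card_erase_of_mem hu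
        have tx := ht x h.hx hux.symm
        have ty := ht y h.hy huy.symm
        have rx := h.red x (Or.inl rfl) u hu hux huy (h.symm _ _ (hz x h.hx hux.symm))
        have ry := h.red y (Or.inr rfl) u hu hux huy (h.symm _ _ (hz y h.hy huy.symm))
        rcases ih (N - 1) (by omega) (S.erase u) (by omega) (by omega)
          (h.strip hux huy 1 ht) with ⟨a, b⟩ | ⟨a, b, -⟩
        · omega
        · omega
      · left
        have := h.stripped (k := N - 2) (by omega) (by omega) (by
          intro v hv hvx hvy
          push Not at h0 h1
          have a := h0 v hv hvx hvy
          have b := h1 v hv hvx hvy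
          have c := gd_lt h.irr hv
          omega)
        omega

end Lower

/-! ### From doubling-colourings to degree conditions -/

section Link

variable {n : ℕ}

/-- The graph of colour `i`. -/
def rel (c : Sym2 (Fin n) → Fin 2) (i : Fin 2) (u v : Fin n) : Prop := u ≠ v ∧ c s(u, v) = i

lemma rel_symm (c : Sym2 (Fin n) → Fin 2) (i : Fin 2) (u v : Fin n) (h : rel c i u v) :
    rel c i v u := ⟨h.1.symm, by rw [Sym2.eq_swap]; exact h.2⟩

lemma rel_irr (c : Sym2 (Fin n) → Fin 2) (i : Fin 2) (u : Fin n) : ¬ rel c i u u :=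
  fun h => h.1 rfl

lemma wdeg_eq (D : Finset (Sym2 (Fin n))) (c : Sym2 (Fin n) → Fin 2) (i : Fin 2) (v : Fin n) :
    wdeg ⊤ D c i v = gd (rel c i) Finset.univ v +
      (Finset.univ.filter fun w => rel c i v w ∧ s(v, w) ∈ D).card := by
  unfold wdeg gd
  rw [← Finset.filter_filter (fun w => rel c i v w) (fun w => s(v, w) ∈ D),
    Finset.card_filter (fun w => s(v, w) ∈ D), Finset.card_eq_sum_ones,
    ← Finset.sum_add_distrib]
  refine Finset.sum_congr ?_ ?_
  · ext w
    simp only [Finset.mem_filter, Finset.mem_univ, true_and, SimpleGraph.top_adj]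
    exact Iff.rfl
  · intro w _
    split_ifs <;> rfl

lemma gd_compl (c : Sym2 (Fin n) → Fin 2) {i j : Fin 2} (hij : i ≠ j) (v : Fin n) :
    gd (rel c i) Finset.univ v + gd (rel c j) Finset.univ v + 1 = n := by
  unfold gd
  rw [← Finset.card_union_of_disjoint]
  · have : Finset.univ.filter (fun w => rel c i v w) ∪ Finset.univ.filter (fun w => rel c j v w)
        = Finset.univ.erase v := by
      ext w
      simp only [Finset.mem_union, Finset.mem_filter, Finset.mem_univ, true_and,
        Finset.mem_erase, and_true]
      constructor
      · rintro (h | h) <;> exact h.1.symm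
      · intro h
        by_cases hc : c s(v, w) = i
        · exact Or.inl ⟨h.symm, hc⟩
        · exact Or.inr ⟨h.symm, by omega⟩
    rw [this, Finset.card_erase_of_mem (Finset.mem_univ v), Finset.card_univ, Fintype.card_fin]
    have := v.2
    omega
  · rw [Finset.disjoint_left]
    intro w h1 h2
    rw [Finset.mem_filter] at h1 h2
    exact hij (h1.2.2.symm.trans h2.2.2)

lemma not_valid_empty (hn : 2 ≤ n) (c : Sym2 (Fin n) → Fin 2) :
    ¬ ValidDC (⊤ : SimpleGraph (Fin n)) ∅ c := by
  rintro ⟨-, h⟩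
  have hw : ∀ i v, wdeg ⊤ ∅ c i v = gd (rel c i) Finset.univ v := by
    intro i v
    rw [wdeg_eq]
    simp
  have hinj : Function.Injective (gd (rel c 0) Finset.univ) := by
    intro u v huv
    by_contra hne
    have h1 := h u v (by simpa using hne)
    rw [hw, hw] at h1
    by_cases hc : c s(u, v) = 0
    · rw [hc] at h1
      exact h1 huv
    · have := gd_compl c hc u
      have := gd_compl c hc v
      omega
  have himg : Finset.univ.image (gd (rel c 0) Finset.univ) = Finset.range n := by
    apply Finset.eq_of_subset_of_card_le
    · intro i hi
      obtain ⟨v, -, rfl⟩ := Finset.mem_image.1 hi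
      have := gd_lt (rel_irr c 0) (Finset.mem_univ v)
      rw [Finset.card_univ, Fintype.card_fin] at this
      rwa [Finset.mem_range]
    · rw [Finset.card_image_of_injective _ hinj]
      simp
  have hex : ∀ i < n, ∃ v, gd (rel c 0) Finset.univ v = i := by
    intro i hi
    have : i ∈ Finset.univ.image (gd (rel c 0) Finset.univ) := by
      rw [himg, Finset.mem_range]
      exact hi
    simpa using this
  obtain ⟨u, hu⟩ := hex 0 (by omega)
  obtain ⟨v, hv⟩ := hex (n - 1) (by omega)
  have hne : u ≠ v := by
    rintro rfl
    omega
  have h1 := gd_zero hu v (Finset.mem_univ v)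
  have h2 := gd_full (rel_irr c 0) (Finset.mem_univ v) (by
    rw [Finset.card_univ, Fintype.card_fin]
    omega) u (Finset.mem_univ u) hne
  exact h1 (rel_symm _ _ _ _ h2)

lemma good_of_valid {x y : Fin n} (hxy : x ≠ y) (c : Sym2 (Fin n) → Fin 2)
    (h : ValidDC (⊤ : SimpleGraph (Fin n)) {s(x, y)} c) :
    Good (rel c (c s(x, y))) x y Finset.univ := by
  obtain ⟨-, h⟩ := h
  obtain ⟨i, hi⟩ : ∃ i, i = c s(x, y) := ⟨_, rfl⟩
  rw [← hi]
  have hs : ∀ v w, s(v, w) = s(x, y) ↔ (v = x ∧ w = y) ∨ (v = y ∧ w = x) := by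
    intro v w
    rw [Sym2.eq_iff]
  have rxy : rel c i x y := ⟨hxy, hi.symm⟩
  have wx : wdeg ⊤ {s(x, y)} c i x = gd (rel c i) Finset.univ x + 1 := by
    rw [wdeg_eq, Finset.card_eq_one.2]
    refine ⟨y, ?_⟩
    ext w
    simp only [Finset.mem_filter, Finset.mem_univ, true_and, Finset.mem_singleton, hs]
    constructor
    · rintro ⟨-, h | h⟩
      · exact h
      · exact absurd h.1 hxy
    · rintro rfl
      exact ⟨rxy, Or.inl rfl⟩
  have wy : wdeg ⊤ {s(x, y)} c i y = gd (rel c i) Finset.univ y + 1 := by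
    rw [wdeg_eq, Finset.card_eq_one.2]
    refine ⟨x, ?_⟩
    ext w
    simp only [Finset.mem_filter, Finset.mem_univ, true_and, Finset.mem_singleton, hs]
    constructor
    · rintro ⟨-, h | h⟩
      · exact absurd h.1.symm hxy
      · exact h
    · rintro rfl
      exact ⟨rel_symm _ _ _ _ rxy, Or.inr rfl⟩
  have wv : ∀ v, v ≠ x → v ≠ y → wdeg ⊤ {s(x, y)} c i v = gd (rel c i) Finset.univ v := by
    intro v h1 h2
    rw [wdeg_eq, Finset.card_eq_zero.2]
    · rfl
    · ext w
      simp [h1, h2]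
  have wz : ∀ z, (z = x ∨ z = y) →
      wdeg ⊤ {s(x, y)} c i z = gd (rel c i) Finset.univ z + 1 := by
    rintro z (rfl | rfl) <;> assumption
  have wj : ∀ j, j ≠ i → ∀ v, wdeg ⊤ {s(x, y)} c j v + gd (rel c i) Finset.univ v + 1 = n := by
    intro j hj v
    rw [wdeg_eq, Finset.card_eq_zero.2]
    · exact gd_compl c hj v
    · ext w
      simp only [Finset.mem_filter, Finset.mem_univ, true_and, Finset.mem_singleton,
        Finset.notMem_empty, iff_false]
      rintro ⟨h1, h2⟩
      apply hj
      rw [hi, ← h2]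
      exact h1.2.symm
  have hred : ∀ u v, u ≠ v → c s(u, v) = i →
      wdeg ⊤ {s(x, y)} c i u ≠ wdeg ⊤ {s(x, y)} c i v := by
    intro u v huv hc
    have := h u v (by simpa using huv)
    rwa [hc] at this
  have hblue : ∀ u v, u ≠ v → c s(u, v) ≠ i →
      gd (rel c i) Finset.univ u ≠ gd (rel c i) Finset.univ v := by
    intro u v huv hc
    have := h u v (by simpa using huv)
    have := wj _ hc u
    have := wj _ hc v
    omega
  refine ⟨rel_symm c i, rel_irr c i, Finset.mem_univ x, Finset.mem_univ y, rxy, ?_, ?_, ?_, ?_⟩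
  · have := hred x y hxy hi.symm
    omega
  · intro u _ v _ h1 h2 h3 h4 huv
    by_cases hc : c s(u, v) = i
    · have := hred u v huv hc
      rwa [wv u h1 h2, wv v h3 h4] at this
    · exact hblue u v huv hc
  · intro z hz v _ h1 h2 hr
    have := hred z v hr.1 hr.2
    rwa [wz z hz, wv v h1 h2] at this
  · intro z hz v _ h1 h2 hr
    have hzv : z ≠ v := by
      rcases hz with rfl | rfl
      · exact h1.symm
      · exact h2.symm
    exact hblue z v hzv (fun hc => hr ⟨hzv, hc⟩)

lemma lower_all (hn : 4 ≤ n) (D : Finset (Sym2 (Fin n))) (c : Sym2 (Fin n) → Fin 2)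
    (h : ValidDC (⊤ : SimpleGraph (Fin n)) D c) :
    (if 6 ≤ n ∧ n ≤ 10 then 2 else 1) ≤ D.card := by
  have h1 : D.card ≠ 0 := by
    intro h0
    rw [Finset.card_eq_zero] at h0
    subst h0
    exact not_valid_empty (by omega) c h
  split_ifs with hn6
  · by_contra hlt
    obtain ⟨e, he⟩ := Finset.card_eq_one.1 (show D.card = 1 by omega)
    subst he
    induction e using Sym2.ind with
    | _ x y =>
      have hxy : x ≠ y := by
        have : s(x, y) ∈ (⊤ : SimpleGraph (Fin n)).edgeSet := h.1 (by simp)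
        simpa using this
      have := (good_of_valid hxy c h).small n Finset.univ (by simp) hn6.2
      omega
  · omega

end Link

/-- For `n ≥ 4`, `D_lir(K_n) = 2` if `6 ≤ n ≤ 10` and `D_lir(K_n) = 1` otherwise:
`K_n` admits a valid doubling-coloring with that many doubled edges, and none with fewer. -/
theorem Dlir_completeGraph (n : ℕ) (hn : 4 ≤ n) :
    (∃ (D : Finset (Sym2 (Fin n))) (c : Sym2 (Fin n) → Fin 2),
        ValidDC (⊤ : SimpleGraph (Fin n)) D c ∧
        D.card = (if 6 ≤ n ∧ n ≤ 10 then 2 else 1)) ∧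
    (∀ (D : Finset (Sym2 (Fin n))) (c : Sym2 (Fin n) → Fin 2),
        ValidDC (⊤ : SimpleGraph (Fin n)) D c →
        (if 6 ≤ n ∧ n ≤ 10 then 2 else 1) ≤ D.card) := by
  exact ⟨exists_all n hn, fun D c h => lower_all hn D c h⟩
end

section
/- Let G be a split graph different from a complete graph, with a maximum clique X = {v_1, ..., v_n} and independent set Y = V(G) \ X, where the vertices are ordered so that deg(v_1) ≥ deg(v_2) ≥ ... ≥ deg(v_n), and let d_i = |N(v_i) ∩ Y| for each i. If one of the following holds: 1) G is a path on four vertices; 2) 4 ≤ n ≤ 10, d_1 = 1, d_2 = 0; 3) 6 ≤ n ≤ 10, d_1 = 2, d_2 = 0; 4) 8 ≤ n ≤ 10, d_1 = 3, d_2 = 0; 5) 6 ≤ n ≤ 8, d_1 = d_2 = 1, d_3 = 0; 6) n = 10, d_1 = 4, d_2 = 0; 7) n ≥ 11, d_1 < ⌊n/2⌋, d_2 = 0; then G admits no 2-liec (equivalently, D_lir(G) ≥ 1). -/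
section Aux

open Finset

/-- The surplus that an Erdős–Gallai type count requires. -/
def need (I : Finset ℕ) (θ : ℕ) : ℤ :=
  (∑ i ∈ I with θ ≤ i, (i : ℤ)) - (∑ i ∈ I with ¬ θ ≤ i, (i : ℤ))
    - (#{i ∈ I | θ ≤ i} : ℤ) * ((#{i ∈ I | θ ≤ i} : ℤ) - 1)

/-- Number of elements at least `θ` minus number of elements below `θ`. -/
def surp (A : Finset ℕ) (θ : ℕ) : ℤ :=
  (#{i ∈ A | θ ≤ i} : ℤ) - (#{i ∈ A | ¬ θ ≤ i} : ℤ)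

/-- No conflict between a special vertex of first color degree `r` with `d` outside neighbors and
the regular vertices. -/
def Good_s10 (I A : Finset ℕ) (d r : ℕ) : Prop :=
  (∀ i ∈ A, r ≠ i) ∧ ∀ i ∈ I, i ∉ A → r ≠ i + d

instance (I A : Finset ℕ) (d r : ℕ) : Decidable (Good_s10 I A d r) :=
  inferInstanceAs (Decidable (_ ∧ _))

/-- Candidate neighborhoods in the case of two special vertices. -/
def cand (I : Finset ℕ) (e θ : ℕ) : Finset (Finset ℕ × ℕ) :=
  {a ∈ I.powerset ×ˢ range 2 | need I 4 ≤ surp a.1 4 + (#{i ∈ I | 4 ≤ i} : ℤ) ∧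
    need I θ ≤ surp a.1 θ + (#{i ∈ I | θ ≤ i} : ℤ) ∧ Good_s10 I a.1 1 (#a.1 + e + a.2)}

/-- The finite check for two special vertices. -/
def Chk (n θ : ℕ) : Prop :=
  ∀ m ∈ Icc 1 (n - 1), ∀ e ∈ range 2,
    ∀ a ∈ cand ((Icc 1 (n - 1)).erase m) e θ, ∀ b ∈ cand ((Icc 1 (n - 1)).erase m) e θ,
      #a.1 + a.2 = #b.1 + b.2 ∨
      surp a.1 4 + surp b.1 4 < need ((Icc 1 (n - 1)).erase m) 4 ∨
      surp a.1 θ + surp b.1 θ < need ((Icc 1 (n - 1)).erase m) θ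

instance (n θ : ℕ) : Decidable (Chk n θ) :=
  inferInstanceAs (Decidable (∀ m ∈ Icc 1 (n - 1), ∀ e ∈ range 2,
    ∀ a ∈ cand ((Icc 1 (n - 1)).erase m) e θ, ∀ b ∈ cand ((Icc 1 (n - 1)).erase m) e θ,
      #a.1 + a.2 = #b.1 + b.2 ∨
      surp a.1 4 + surp b.1 4 < need ((Icc 1 (n - 1)).erase m) 4 ∨
      surp a.1 θ + surp b.1 θ < need ((Icc 1 (n - 1)).erase m) θ))

theorem chk6 : Chk 6 3 := by decide +kernel
theorem chk7 : Chk 7 3 := by decide +kernel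
theorem chk8 : Chk 8 5 := by decide +kernel

open Classical in
/-- First color degree inside the clique `X`. -/
noncomputable def RD {V : Type*} (X : Finset V) (red : V → V → Prop) (u : V) : ℕ :=
  #{w ∈ X | w ≠ u ∧ red u w}

open Classical in
/-- Values of the first color degrees of the regular neighbors of `v` in the first color. -/
noncomputable def AV {V : Type*} (X W : Finset V) (red : V → V → Prop) (v : V) : Finset ℕ :=
  (W.filter (red v)).image (RD X red)

theorem eg {V : Type*} [DecidableEq V] (X W : Finset V) (hWX : W ⊆ X) (red : V → V → Prop)
    (hsymm : ∀ u w, red u w → red w u) (hinj : Set.InjOn (RD X red) W) (θ : ℕ) :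
    need (W.image (RD X red)) θ ≤ ∑ v ∈ X \ W, surp (AV X W red v) θ := by
  classical
  set R := RD X red with hR
  set a : V → V → ℤ := fun u w => if w ≠ u ∧ red u w then 1 else 0 with ha
  have asymm : ∀ u w, a u w = a w u := by
    intro u w
    have : (w ≠ u ∧ red u w) ↔ (u ≠ w ∧ red w u) :=
      ⟨fun h => ⟨h.1.symm, hsymm _ _ h.2⟩, fun h => ⟨h.1.symm, hsymm _ _ h.2⟩⟩
    simp only [ha, this]
  have a0 : ∀ u w, 0 ≤ a u w := by intro u w; simp only [ha]; split_ifs <;> simp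
  have a1 : ∀ u w, a u w ≤ 1 := by intro u w; simp only [ha]; split_ifs <;> simp
  have aself : ∀ u, a u u = 0 := by intro u; simp [ha]
  have hRs : ∀ u, (R u : ℤ) = ∑ w ∈ X, a u w := by
    intro u
    simp [hR, RD, ha, Finset.sum_boole]
  set T := W.filter (fun w => θ ≤ R w) with hT
  set L := W.filter (fun w => ¬ θ ≤ R w) with hL
  have hTW : T ⊆ W := filter_subset _ _
  have hLW : L ⊆ W := filter_subset _ _
  have hTinj : Set.InjOn R T := hinj.mono (by exact_mod_cast hTW)
  have hLinj : Set.InjOn R L := hinj.mono (by exact_mod_cast hLW)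
  have hsX : ∀ f : V → ℤ, ∑ w ∈ X, f w = ∑ w ∈ T, f w + ∑ w ∈ L, f w + ∑ w ∈ X \ W, f w := by
    intro f
    rw [hT, hL, Finset.sum_filter_add_sum_filter_not, add_comm, Finset.sum_sdiff hWX]
  have e1 : need (W.image R) θ = ∑ w ∈ T, (R w : ℤ) - ∑ w ∈ L, (R w : ℤ) - (#T : ℤ) * (#T - 1) := by
    unfold need
    rw [Finset.filter_image, Finset.filter_image, Finset.sum_image hTinj, Finset.sum_image hLinj,
      Finset.card_image_of_injOn hTinj]
  have e2 : ∀ v ∈ X \ W, surp (AV X W red v) θ = ∑ w ∈ T, a w v - ∑ w ∈ L, a w v := by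
    intro v hv
    have hvW : v ∉ W := (Finset.mem_sdiff.1 hv).2
    have key : ∀ Z : Finset V, Z ⊆ W → (#(Z.filter (red v)) : ℤ) = ∑ w ∈ Z, a w v := by
      intro Z hZ
      rw [Finset.sum_congr rfl (fun w _ => asymm w v)]
      simp only [ha, Finset.sum_boole]
      congr 2
      apply Finset.filter_congr
      intro w hw
      have : w ≠ v := fun h => hvW (h ▸ hZ hw)
      simp [this]
    unfold surp AV
    rw [Finset.filter_image, Finset.filter_image, Finset.card_image_of_injOn,
      Finset.card_image_of_injOn, ← key T hTW, ← key L hLW, hT, hL, Finset.filter_comm,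
      Finset.filter_comm (p := red v)]
    · exact hinj.mono (by intro x hx; simp at hx ⊢; tauto)
    · exact hinj.mono (by intro x hx; simp at hx ⊢; tauto)
  rw [e1, Finset.sum_congr rfl e2, Finset.sum_sub_distrib]
  simp only [hRs, hsX, Finset.sum_add_distrib]
  have c1 : ∑ u ∈ T, ∑ w ∈ L, a u w = ∑ u ∈ L, ∑ w ∈ T, a u w := by
    rw [Finset.sum_comm]
    exact Finset.sum_congr rfl fun u _ => Finset.sum_congr rfl fun w _ => asymm _ _
  have c2 : 0 ≤ ∑ u ∈ L, ∑ w ∈ L, a u w :=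
    Finset.sum_nonneg fun u _ => Finset.sum_nonneg fun w _ => a0 _ _
  have c3 : ∑ u ∈ T, ∑ w ∈ T, a u w ≤ (#T : ℤ) * (#T - 1) := by
    calc ∑ u ∈ T, ∑ w ∈ T, a u w ≤ ∑ u ∈ T, ((#T : ℤ) - 1) := by
          apply Finset.sum_le_sum
          intro u hu
          rw [← Finset.add_sum_erase _ _ hu, aself, zero_add]
          calc ∑ w ∈ T.erase u, a u w ≤ ∑ w ∈ T.erase u, (1 : ℤ) :=
                Finset.sum_le_sum fun w _ => a1 _ _
            _ = (#T : ℤ) - 1 := by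
                rw [Finset.sum_const, Finset.card_erase_of_mem hu]
                have : 0 < #T := Finset.card_pos.2 ⟨u, hu⟩
                simp; omega
      _ = _ := by rw [Finset.sum_const, nsmul_eq_mul]
  have c4 : ∑ u ∈ T, ∑ w ∈ X \ W, a u w = ∑ v ∈ X \ W, ∑ w ∈ T, a w v := Finset.sum_comm
  have c5 : ∑ u ∈ L, ∑ w ∈ X \ W, a u w = ∑ v ∈ X \ W, ∑ w ∈ L, a w v := Finset.sum_comm
  linarith

/-- The data extracted from a 2-liec: regular vertices `W`, special vertices `X \ W`. -/
structure Sit {V : Type*} (X W : Finset V) (red : V → V → Prop) (p : V → ℕ) (d : ℕ) : Prop where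
  sub : W ⊆ X
  symm : ∀ u w, red u w → red w u
  inj : ∀ u ∈ W, ∀ w ∈ W, u ≠ w → RD X red u ≠ RD X red w
  ple : ∀ v ∈ X, v ∉ W → p v ≤ d
  spec1 : ∀ v ∈ X, v ∉ W → ∀ w ∈ W, red v w → RD X red v + p v ≠ RD X red w
  spec2 : ∀ v ∈ X, v ∉ W → ∀ w ∈ W, ¬ red v w → RD X red v + p v ≠ RD X red w + d
  spec : ∀ u ∈ X, u ∉ W → ∀ v ∈ X, v ∉ W → u ≠ v → RD X red u + p u ≠ RD X red v + p v

theorem RD_compl {V : Type*} (X : Finset V) (red : V → V → Prop) (u : V) (hu : u ∈ X) :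
    RD X red u + RD X (fun a b => ¬ red a b) u + 1 = #X := by
  classical
  unfold RD
  rw [← Finset.card_erase_add_one hu,
    ← Finset.card_filter_add_card_filter_not (s := X.erase u) (red u)]
  congr 3
  · ext w; simp; tauto
  · ext w; simp; tauto

theorem Sit.compl {V : Type*} {X W : Finset V} {red : V → V → Prop} {p : V → ℕ} {d : ℕ}
    (h : Sit X W red p d) : Sit X W (fun a b => ¬ red a b) (fun v => d - p v) d where
  sub := h.sub
  symm := fun u w h1 h2 => h1 (h.symm _ _ h2)
  inj := by
    intro u hu w hw hne
    have := h.inj u hu w hw hne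
    have := RD_compl X red u (h.sub hu)
    have := RD_compl X red w (h.sub hw)
    omega
  ple := by intro v _ _; simp
  spec1 := by
    intro v hv hv' w hw hr
    have := h.spec2 v hv hv' w hw hr
    have := RD_compl X red v hv
    have := RD_compl X red w (h.sub hw)
    have := h.ple v hv hv'
    omega
  spec2 := by
    intro v hv hv' w hw hr
    have := h.spec1 v hv hv' w hw (not_not.1 hr)
    have := RD_compl X red v hv
    have := RD_compl X red w (h.sub hw)
    have := h.ple v hv hv'
    omega
  spec := by
    intro v hv hv' w hw hw' hne
    have := h.spec v hv hv' w hw hw' hne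
    have := RD_compl X red v hv
    have := RD_compl X red w hw
    have := h.ple v hv hv'
    have := h.ple w hw hw'
    omega

theorem Sit.exists_pos {V : Type*} {X W : Finset V} {red : V → V → Prop} {p : V → ℕ} {d : ℕ}
    (h : Sit X W red p d) (hX : 2 ≤ #X) :
    ∃ red p, Sit X W red p d ∧ ∀ w ∈ W, RD X red w ≠ 0 := by
  classical
  by_cases h0 : ∀ w ∈ W, RD X red w ≠ 0
  · exact ⟨red, p, h, h0⟩
  · push Not at h0
    obtain ⟨u, hu, hu0⟩ := h0
    refine ⟨_, _, h.compl, ?_⟩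
    intro w hw hw0
    have h1 := RD_compl X red w (h.sub hw)
    have hne : u ≠ w := by rintro rfl; omega
    have a1 : ¬ red u w := by
      intro hr
      have := Finset.card_eq_zero.1 hu0
      have h2 : w ∈ ({w ∈ X | w ≠ u ∧ red u w} : Finset V) := by
        simp [h.sub hw, hne.symm, hr]
      simp_all
    have h3 := Finset.card_eq_zero.1 hw0
    simp at h3
    exact a1 (h.symm _ _ (h3 (h.sub hu) hne))

theorem Sit.injOn {V : Type*} {X W : Finset V} {red : V → V → Prop} {p : V → ℕ} {d : ℕ}
    (h : Sit X W red p d) : Set.InjOn (RD X red) W := by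
  intro u hu w hw he
  by_contra hne
  exact h.inj u hu w hw hne he

theorem Sit.card_AV {V : Type*} {X W : Finset V} {red : V → V → Prop} {p : V → ℕ} {d : ℕ}
    (h : Sit X W red p d) [DecidableEq V] (v : V) (hv : v ∉ W) [DecidablePred (red v)] :
    RD X red v = #(AV X W red v) + #{w ∈ X \ W | w ≠ v ∧ red v w} := by
  classical
  unfold AV
  rw [Finset.card_image_of_injOn (h.injOn.mono (by intro x hx; simp at hx ⊢; tauto))]
  unfold RD
  rw [← Finset.card_union_of_disjoint]
  · congr 1
    ext w
    have := @h.sub w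
    simp only [Finset.mem_filter, Finset.mem_union, Finset.mem_sdiff]
    by_cases hw : w ∈ W
    · have : w ≠ v := fun e => hv (e ▸ hw)
      simp_all
    · simp_all
  · rw [Finset.disjoint_left]
    intro w
    simp only [Finset.mem_filter, Finset.mem_sdiff]
    tauto

theorem Sit.good {V : Type*} {X W : Finset V} {red : V → V → Prop} {p : V → ℕ} {d : ℕ}
    (h : Sit X W red p d) (v : V) (hv : v ∈ X) (hv' : v ∉ W) :
    Good_s10 (W.image (RD X red)) (AV X W red v) d (RD X red v + p v) := by
  classical
  refine ⟨?_, ?_⟩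
  · intro i hi
    simp only [AV, Finset.mem_image, Finset.mem_filter] at hi
    obtain ⟨w, ⟨hw, hr⟩, rfl⟩ := hi
    exact h.spec1 v hv hv' w hw hr
  · intro i hi hi'
    obtain ⟨w, hw, rfl⟩ := Finset.mem_image.1 hi
    refine h.spec2 v hv hv' w hw fun hr => hi' ?_
    simp only [AV, Finset.mem_image, Finset.mem_filter]
    exact ⟨w, ⟨hw, hr⟩, rfl⟩

theorem AV_subset {V : Type*} (X W : Finset V) (red : V → V → Prop) (v : V) :
    AV X W red v ⊆ W.image (RD X red) := by
  classical
  exact Finset.image_subset_image (Finset.filter_subset _ _)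

theorem Sit.image_subset {V : Type*} {X W : Finset V} {red : V → V → Prop} {p : V → ℕ} {d : ℕ}
    (h : Sit X W red p d) (h0 : ∀ w ∈ W, RD X red w ≠ 0) :
    W.image (RD X red) ⊆ Icc 1 (#X - 1) := by
  intro i hi
  obtain ⟨w, hw, rfl⟩ := Finset.mem_image.1 hi
  have := RD_compl X red w (h.sub hw)
  have := h0 w hw
  rw [Finset.mem_Icc]
  omega

theorem surp_le (A I : Finset ℕ) (hA : A ⊆ I) (θ : ℕ) : surp A θ ≤ (#{i ∈ I | θ ≤ i} : ℤ) := by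
  have : #{i ∈ A | θ ≤ i} ≤ #{i ∈ I | θ ≤ i} :=
    Finset.card_le_card (Finset.filter_subset_filter _ hA)
  unfold surp
  omega

theorem need_Icc (n : ℕ) (hn : 2 ≤ n) : need (Icc 1 (n - 1)) ((n + 1) / 2) = (n / 2 : ℕ) ∧
    #{i ∈ Icc 1 (n - 1) | (n + 1) / 2 ≤ i} = n / 2 := by
  have f1 : ({i ∈ Icc 1 (n - 1) | (n + 1) / 2 ≤ i} : Finset ℕ) = Ico ((n + 1) / 2) n := by
    ext i; simp; omega
  have f2 : ({i ∈ Icc 1 (n - 1) | ¬ (n + 1) / 2 ≤ i} : Finset ℕ) = Ico 1 ((n + 1) / 2) := by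
    ext i; simp; omega
  have s1 : ∀ c : ℕ, 1 ≤ c → 2 * ∑ i ∈ Ico 1 c, (i : ℤ) = c * (c - 1) := by
    intro c hc
    induction c, hc using Nat.le_induction with
    | base => simp
    | succ c hc ih => rw [Finset.sum_Ico_succ_top hc, mul_add, ih]; push_cast; ring
  have s2 : ∑ i ∈ Ico ((n + 1) / 2) n, (i : ℤ)
      = ∑ i ∈ Ico 1 n, (i : ℤ) - ∑ i ∈ Ico 1 ((n + 1) / 2), (i : ℤ) := by
    rw [← Finset.sum_Ico_consecutive _ (show 1 ≤ (n + 1) / 2 by omega)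
      (show (n + 1) / 2 ≤ n by omega)]
    ring
  refine ⟨?_, ?_⟩
  · unfold need
    rw [f1, f2, s2, Nat.card_Ico]
    have h1 := s1 n (by omega)
    have h2 := s1 ((n + 1) / 2) (by omega)
    obtain ⟨k, hk | hk⟩ : ∃ k, n = 2 * k ∨ n = 2 * k + 1 := ⟨n / 2, by omega⟩
    · have e1 : (n + 1) / 2 = k := by omega
      have e2 : n / 2 = k := by omega
      have e3 : n - k = k := by omega
      rw [e1] at h2 ⊢
      rw [e2, e3]
      rw [hk] at h1 ⊢
      push_cast at h1 h2 ⊢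
      linarith
    · have e1 : (n + 1) / 2 = k + 1 := by omega
      have e2 : n / 2 = k := by omega
      have e3 : n - (k + 1) = k := by omega
      rw [e1] at h2 ⊢
      rw [e2, e3]
      rw [hk] at h1 ⊢
      push_cast at h1 h2 ⊢
      linarith
  · rw [f1, Nat.card_Ico]; omega

theorem final1 {V : Type*} {X : Finset V} [DecidableEq V] {red : V → V → Prop} {p : V → ℕ} {d : ℕ}
    (v : V) (hv : v ∈ X) (h : Sit X (X.erase v) red p d) (hn : 2 ≤ #X) (hd : d < #X / 2) :
    False := by
  classical
  obtain ⟨red, p, h, h0⟩ := h.exists_pos hn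
  have hvW : v ∉ X.erase v := by simp
  have hS : X \ X.erase v = {v} := by
    ext w; simp; constructor
    · rintro ⟨a, b⟩; by_contra hh; exact b hh a
    · rintro rfl; exact ⟨hv, fun h => absurd rfl h⟩
  have hI : (X.erase v).image (RD X red) = Icc 1 (#X - 1) := by
    apply Finset.eq_of_subset_of_card_le (h.image_subset h0)
    rw [Finset.card_image_of_injOn h.injOn, Finset.card_erase_of_mem hv]
    simp
  have hg := h.good v hv hvW
  have hc := h.card_AV v hvW
  have hsub := AV_subset X (X.erase v) red v
  have he := eg X _ h.sub red h.symm h.injOn ((#X + 1) / 2)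
  have hp := h.ple v hv hvW
  rw [hS] at he hc
  have hz : #{w ∈ ({v} : Finset V) | w ≠ v ∧ red v w} = 0 := by
    rw [Finset.card_eq_zero, Finset.filter_eq_empty_iff]
    intro w hw; simp at hw; simp [hw]
  rw [hz, add_zero] at hc
  rw [Finset.sum_singleton] at he
  rw [hI] at hg hsub he
  obtain ⟨n1, n2⟩ := need_Icc #X hn
  generalize AV X (X.erase v) red v = A at *
  generalize #X = n at *
  rw [n1] at he
  have hle : #{i ∈ A | (n + 1) / 2 ≤ i} ≤ n / 2 := by
    rw [← n2]; exact Finset.card_le_card (Finset.filter_subset_filter _ hsub)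
  unfold surp at he
  have k1 : #{i ∈ A | ¬ (n + 1) / 2 ≤ i} = 0 := by omega
  have k2 : #{i ∈ A | (n + 1) / 2 ≤ i} = n / 2 := by omega
  have k3 : ({i ∈ A | (n + 1) / 2 ≤ i} : Finset ℕ) = {i ∈ Icc 1 (n - 1) | (n + 1) / 2 ≤ i} := by
    apply Finset.eq_of_subset_of_card_le (Finset.filter_subset_filter _ hsub)
    rw [n2, k2]
  have k4 : #A = n / 2 := by
    rw [← Finset.card_filter_add_card_filter_not (s := A) (fun i => (n + 1) / 2 ≤ i), k1, k2,
      add_zero]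
  rw [hc, k4] at hg
  have hmem : ∀ i, (n + 1) / 2 ≤ i → i ≤ n - 1 → i ∈ A := by
    intro i h1 h2
    have : i ∈ ({i ∈ A | (n + 1) / 2 ≤ i} : Finset ℕ) := by
      rw [k3]; simp; omega
    exact (Finset.mem_filter.1 this).1
  have hnmem : ∀ i, ¬ (n + 1) / 2 ≤ i → i ∉ A := by
    intro i h1 h2
    rw [Finset.card_eq_zero, Finset.filter_eq_empty_iff] at k1
    exact k1 h2 h1
  by_cases hq : (n + 1) / 2 ≤ n / 2 + p v
  · exact hg.1 _ (hmem _ hq (by omega)) rfl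
  · exact hg.2 (n / 2 - d) (by simp; omega) (hnmem _ (by omega)) (by omega)

theorem final2 {V : Type*} {X : Finset V} [DecidableEq V] {red : V → V → Prop} {p : V → ℕ}
    (u v : V) (hu : u ∈ X) (hv : v ∈ X) (huv : u ≠ v) (h : Sit X ((X.erase u).erase v) red p 1)
    (hn : 6 ≤ #X) (hn' : #X ≤ 8) : False := by
  classical
  obtain ⟨red, p, h, h0⟩ := h.exists_pos (by omega)
  set W := (X.erase u).erase v with hW
  have huW : u ∉ W := by simp [hW]
  have hvW : v ∉ W := by simp [hW]
  have hS : X \ W = {u, v} := by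
    ext w; simp [hW]
    constructor
    · rintro ⟨a, b⟩; by_contra hh; push Not at hh; exact b hh.2 hh.1 a
    · rintro (rfl | rfl) <;> tauto
  have hcW : #W = #X - 2 := by
    rw [hW, Finset.card_erase_of_mem (by simp [hv, huv.symm]), Finset.card_erase_of_mem hu]; rfl
  obtain ⟨m, hm, hI⟩ : ∃ m ∈ Icc 1 (#X - 1), W.image (RD X red) = (Icc 1 (#X - 1)).erase m := by
    have hs := h.image_subset h0
    have hc : #(W.image (RD X red)) = #X - 2 := by
      rw [Finset.card_image_of_injOn h.injOn, hcW]
    have hc2 : #(Icc 1 (#X - 1) \ W.image (RD X red)) = 1 := by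
      rw [Finset.card_sdiff_of_subset hs, hc]; simp; omega
    obtain ⟨m, hm⟩ := Finset.card_eq_one.1 hc2
    refine ⟨m, ?_, ?_⟩
    · have : m ∈ Icc 1 (#X - 1) \ W.image (RD X red) := by rw [hm]; simp
      exact (Finset.mem_sdiff.1 this).1
    · rw [← Finset.sdiff_singleton_eq_erase, ← hm, Finset.sdiff_sdiff_eq_self hs]
  have hgu := h.good u hu huW
  have hgv := h.good v hv hvW
  have hcu := h.card_AV u huW
  have hcv := h.card_AV v hvW
  have hsu := AV_subset X W red u
  have hsv := AV_subset X W red v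
  have he := eg X _ h.sub red h.symm h.injOn
  have hpu := h.ple u hu huW
  have hpv := h.ple v hv hvW
  have hne := h.spec u hu huW v hv hvW huv
  set e : ℕ := if red u v then 1 else 0 with hedef
  have hs1 : red u v ↔ red v u := ⟨h.symm _ _, h.symm _ _⟩
  have heu : #{w ∈ X \ W | w ≠ u ∧ red u w} = e := by
    rw [hS, Finset.filter_insert, Finset.filter_singleton]
    simp only [ne_eq, not_true_eq_false, false_and, if_false, huv.symm, not_false_eq_true, true_and,
      hedef]
    split_ifs <;> simp
  have hev : #{w ∈ X \ W | w ≠ v ∧ red v w} = e := by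
    rw [hS, Finset.filter_insert, Finset.filter_singleton]
    simp only [ne_eq, not_true_eq_false, false_and, if_false, huv, not_false_eq_true, true_and,
      hedef, hs1]
    split_ifs <;> simp
  have he2 : e < 2 := by rw [hedef]; split_ifs <;> simp
  rw [heu] at hcu
  rw [hev] at hcv
  rw [hS] at he
  simp only [Finset.sum_pair huv] at he
  rw [hI] at hgu hgv hsu hsv
  simp only [hI] at he
  rw [hcu] at hgu hne
  rw [hcv] at hgv hne
  generalize AV X W red u = A at *
  generalize AV X W red v = B at *
  have main : ∀ θ, Chk #X θ → False := by
    intro θ hchk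
    have q4 := he 4
    have qθ := he θ
    have a4 := surp_le _ _ hsu 4
    have aθ := surp_le _ _ hsu θ
    have b4 := surp_le _ _ hsv 4
    have bθ := surp_le _ _ hsv θ
    have := hchk m hm e (Finset.mem_range.2 he2) (A, p u)
      (by
        simp only [cand, Finset.mem_filter, Finset.mem_product, Finset.mem_powerset,
          Finset.mem_range]
        exact ⟨⟨hsu, by omega⟩, by linarith, by linarith, hgu⟩) (B, p v)
      (by
        simp only [cand, Finset.mem_filter, Finset.mem_product, Finset.mem_powerset,
          Finset.mem_range]
        exact ⟨⟨hsv, by omega⟩, by linarith, by linarith, hgv⟩)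
    dsimp only at this
    rcases this with h | h | h
    · omega
    · linarith
    · linarith
  have : #X = 6 ∨ #X = 7 ∨ #X = 8 := by omega
  rcases this with h | h | h
  · exact main 3 (h ▸ chk6)
  · exact main 3 (h ▸ chk7)
  · exact main 5 (h ▸ chk8)

/-- Number of neighbors outside of `X`. -/
noncomputable def dY {V : Type*} (G : SimpleGraph V) (X : Finset V) (u : V) : ℕ :=
  {w | G.Adj u w ∧ w ∉ X}.ncard

/-- Number of neighbors outside of `X` in the first color. -/
noncomputable def pY {V : Type*} (G : SimpleGraph V) (X : Finset V) (c : Sym2 V → Fin 2)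
    (u : V) : ℕ :=
  {w | G.Adj u w ∧ w ∉ X ∧ c s(u, w) = 0}.ncard

theorem pY_le {V : Type*} [Fintype V] (G : SimpleGraph V) (X : Finset V) (c : Sym2 V → Fin 2)
    (u : V) : pY G X c u ≤ dY G X u :=
  Set.ncard_le_ncard (fun _ h => ⟨h.1, h.2.1⟩) (Set.toFinite _)

theorem cdeg_zero {V : Type*} [Fintype V] (G : SimpleGraph V) (X : Finset V)
    (hclique : G.IsClique ↑X) (c : Sym2 V → Fin 2) (u : V) (hu : u ∈ X) :
    cdeg G c 0 u = RD X (fun a b => c s(a, b) = 0) u + pY G X c u := by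
  classical
  unfold cdeg RD pY
  rw [← Set.ncard_coe_finset, ← Set.ncard_union_eq _ (Set.toFinite _) (Set.toFinite _)]
  · congr 1
    ext w
    simp only [Set.mem_ofPred_eq, Set.mem_union, Finset.coe_filter]
    by_cases hw : w ∈ X
    · have : G.Adj u w ↔ w ≠ u := ⟨fun h => h.ne', fun h => hclique hu hw h.symm⟩
      simp [hw, this]
    · simp [hw]
  · rw [Set.disjoint_left]
    intro w h1 h2
    simp at h1 h2
    tauto

theorem ndeg_eq {V : Type*} [Fintype V] (G : SimpleGraph V) (X : Finset V)
    (hclique : G.IsClique ↑X) (u : V) (hu : u ∈ X) :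
    ndeg G u + 1 = #X + dY G X u := by
  classical
  have h1 : ndeg G u = #(X.erase u) + dY G X u := by
    unfold ndeg dY
    rw [← Set.ncard_coe_finset, ← Set.ncard_union_eq _ (Set.toFinite _) (Set.toFinite _)]
    · congr 1
      ext w
      simp only [Set.mem_ofPred_eq, Set.mem_union, Finset.mem_coe, Finset.mem_erase]
      by_cases hw : w ∈ X
      · have : G.Adj u w ↔ w ≠ u := ⟨fun h => h.ne', fun h => hclique hu hw h.symm⟩
        simp [hw, this]
      · simp [hw]
    · rw [Set.disjoint_left]
      intro w h1 h2
      simp at h1 h2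
      tauto
  have := Finset.card_erase_add_one hu
  omega

theorem fin2_cases : ∀ x : Fin 2, x = 0 ∨ x = 1 := by decide

theorem cdeg_add {V : Type*} [Fintype V] (G : SimpleGraph V) (c : Sym2 V → Fin 2) (u : V) :
    cdeg G c 0 u + cdeg G c 1 u = ndeg G u := by
  unfold cdeg ndeg
  rw [← Set.ncard_union_eq _ (Set.toFinite _) (Set.toFinite _)]
  · congr 1
    ext w
    simp only [Set.mem_ofPred_eq, Set.mem_union]
    have := fin2_cases (c s(u, w))
    tauto
  · rw [Set.disjoint_left]
    rintro w ⟨_, h1⟩ ⟨_, h2⟩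
    rw [h1] at h2
    exact absurd h2 (by decide)

theorem mkSit {V : Type*} [Fintype V] (G : SimpleGraph V) (X W : Finset V)
    (hclique : G.IsClique ↑X) (c : Sym2 V → Fin 2) (hc : IsLiec2 G c) (hWX : W ⊆ X) (d : ℕ)
    (hW : ∀ w ∈ W, dY G X w = 0) (hS : ∀ v ∈ X, v ∉ W → dY G X v = d) :
    Sit X W (fun a b => c s(a, b) = 0) (pY G X c) d := by
  have k0 := cdeg_zero G X hclique c
  have k1 := cdeg_add G c
  have k2 := ndeg_eq G X hclique
  have k3 := pY_le G X c
  have hz : ∀ w ∈ W, pY G X c w = 0 := by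
    intro w hw
    have := k3 w
    have := hW w hw
    omega
  have hir : ∀ u ∈ X, ∀ w ∈ X, u ≠ w →
      (c s(u, w) = 0 ∧ cdeg G c 0 u ≠ cdeg G c 0 w) ∨
      (¬ c s(u, w) = 0 ∧ cdeg G c 1 u ≠ cdeg G c 1 w) := by
    intro u hu w hw hne
    have := hc u w (hclique hu hw hne)
    rcases fin2_cases (c s(u, w)) with h | h
    · rw [h] at this; exact Or.inl ⟨h, this⟩
    · rw [h] at this; exact Or.inr ⟨by rw [h]; decide, this⟩
  refine ⟨hWX, ?_, ?_, ?_, ?_, ?_, ?_⟩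
  · intro u w h
    rw [Sym2.eq_swap]; exact h
  · intro u hu w hw hne
    have := hir u (hWX hu) w (hWX hw) hne
    have := k0 u (hWX hu)
    have := k0 w (hWX hw)
    have := k1 u
    have := k1 w
    have := k2 u (hWX hu)
    have := k2 w (hWX hw)
    have := hz u hu
    have := hz w hw
    have := hW u hu
    have := hW w hw
    omega
  · intro v hv hv'
    rw [← hS v hv hv']; exact k3 v
  · intro v hv hv' w hw hr
    have hne : v ≠ w := fun h => hv' (h ▸ hw)
    have hh := hir v hv w (hWX hw) hne
    have := k0 v hv
    have := k0 w (hWX hw)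
    have := hz w hw
    rcases hh with hh | hh
    · omega
    · exact absurd hr hh.1
  · intro v hv hv' w hw hr
    have hne : v ≠ w := fun h => hv' (h ▸ hw)
    have := hir v hv w (hWX hw) hne
    have := k0 v hv
    have := k0 w (hWX hw)
    have := k1 v
    have := k1 w
    have := k2 v hv
    have := k2 w (hWX hw)
    have := hz w hw
    have := hW w hw
    have := hS v hv hv'
    omega
  · intro u hu hu' v hv hv' hne
    have := hir u hu v hv hne
    have := k0 u hu
    have := k0 v hv
    have := k1 v
    have := k1 u
    have := k2 v hv
    have := k2 u hu
    have := hS v hv hv'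
    have := hS u hu hu'
    omega

theorem no_path {V : Type*} (G : SimpleGraph V) (f : G ≃g SimpleGraph.pathGraph 4)
    (c : Sym2 V → Fin 2) (hc : IsLiec2 G c) : False := by
  classical
  set g := f.symm with hg
  have hcd : ∀ i k, cdeg G c i (g k) =
      #{j : Fin 4 | (SimpleGraph.pathGraph 4).Adj k j ∧ c s(g k, g j) = i} := by
    intro i k
    unfold cdeg
    rw [← Set.ncard_coe_finset, ← Set.ncard_image_of_injective _ g.injective]
    congr 1
    ext w
    simp only [Set.mem_ofPred_eq, Finset.coe_filter, Finset.mem_univ, true_and, Set.mem_image]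
    constructor
    · rintro ⟨h1, h2⟩
      refine ⟨f w, ⟨?_, ?_⟩, ?_⟩
      · rw [← g.map_adj_iff]; simpa [hg] using h1
      · simpa [hg] using h2
      · simp [hg]
    · rintro ⟨j, ⟨h1, h2⟩, rfl⟩
      exact ⟨g.map_adj_iff.2 h1, h2⟩
  have s1 : s(g 1, g 0) = s(g 0, g 1) := Sym2.eq_swap
  have s2 : s(g 2, g 1) = s(g 1, g 2) := Sym2.eq_swap
  have s3 : s(g 3, g 2) = s(g 2, g 3) := Sym2.eq_swap
  have n0 : ∀ i, cdeg G c i (g 0) = if c s(g 0, g 1) = i then 1 else 0 := by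
    intro i
    rw [hcd, Finset.card_filter, Fin.sum_univ_four]
    simp [SimpleGraph.pathGraph_adj]
  have n1 : ∀ i, cdeg G c i (g 1) =
      (if c s(g 0, g 1) = i then 1 else 0) + (if c s(g 1, g 2) = i then 1 else 0) := by
    intro i
    rw [hcd, Finset.card_filter, Fin.sum_univ_four]
    simp [SimpleGraph.pathGraph_adj, s1]
  have n2 : ∀ i, cdeg G c i (g 2) =
      (if c s(g 1, g 2) = i then 1 else 0) + (if c s(g 2, g 3) = i then 1 else 0) := by
    intro i
    rw [hcd, Finset.card_filter, Fin.sum_univ_four]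
    simp [SimpleGraph.pathGraph_adj, s2]
  have n3 : ∀ i, cdeg G c i (g 3) = if c s(g 2, g 3) = i then 1 else 0 := by
    intro i
    rw [hcd, Finset.card_filter, Fin.sum_univ_four]
    simp [SimpleGraph.pathGraph_adj, s3]
  have h1 := hc (g 0) (g 1) (g.map_adj_iff.2 (by simp [SimpleGraph.pathGraph_adj]))
  have h2 := hc (g 1) (g 2) (g.map_adj_iff.2 (by simp [SimpleGraph.pathGraph_adj]))
  have h3 := hc (g 2) (g 3) (g.map_adj_iff.2 (by simp [SimpleGraph.pathGraph_adj]))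
  rw [n0, n1] at h1
  rw [n1, n2] at h2
  rw [n2, n3] at h3
  generalize c s(g 0, g 1) = x at *
  generalize c s(g 1, g 2) = y at *
  generalize c s(g 2, g 3) = z at *
  clear n0 n1 n2 n3 hcd
  revert x y z
  decide

end Aux

/-- Split graphs with a maximum clique `X = {v_1, …, v_n}` (degrees nonincreasing) and
independent set `Y = V \ X`, with `d_i = |N(v_i) ∩ Y|`, that belong to one of the seven
listed families admit no 2-liec. -/
theorem split_graphs_no_liec {V : Type*} [Fintype V] (G : SimpleGraph V)
    (hnotcomplete : G ≠ ⊤)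
    (X : Finset V) (hclique : G.IsClique ↑X)
    (hmax : ∀ Z : Finset V, G.IsClique ↑Z → Z.card ≤ X.card)
    (hindep : ∀ u ∉ X, ∀ w ∉ X, ¬ G.Adj u w)
    (n : ℕ) (hn : n = X.card)
    (v : ℕ → V) (hinj : Set.InjOn v (Set.Icc 1 n))
    (himg : v '' Set.Icc 1 n = ↑X)
    (hmono : ∀ i j : ℕ, 1 ≤ i → i ≤ j → j ≤ n → ndeg G (v j) ≤ ndeg G (v i))
    (d : ℕ → ℕ) (hd : ∀ i, d i = {w | G.Adj (v i) w ∧ w ∉ X}.ncard)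
    (hcase :
      Nonempty (G ≃g SimpleGraph.pathGraph 4) ∨
      (4 ≤ n ∧ n ≤ 10 ∧ d 1 = 1 ∧ d 2 = 0) ∨
      (6 ≤ n ∧ n ≤ 10 ∧ d 1 = 2 ∧ d 2 = 0) ∨
      (8 ≤ n ∧ n ≤ 10 ∧ d 1 = 3 ∧ d 2 = 0) ∨
      (6 ≤ n ∧ n ≤ 8 ∧ d 1 = 1 ∧ d 2 = 1 ∧ d 3 = 0) ∨
      (n = 10 ∧ d 1 = 4 ∧ d 2 = 0) ∨
      (11 ≤ n ∧ d 1 < n / 2 ∧ d 2 = 0)) :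
    ¬ ∃ c : Sym2 V → Fin 2, IsLiec2 G c := by
  classical
  rintro ⟨c, hc⟩
  have hvX : ∀ i, 1 ≤ i → i ≤ n → v i ∈ X := by
    intro i h1 h2
    have : v i ∈ v '' Set.Icc 1 n := ⟨i, ⟨h1, h2⟩, rfl⟩
    rw [himg] at this
    exact this
  have hXv : ∀ w ∈ X, ∃ j, 1 ≤ j ∧ j ≤ n ∧ v j = w := by
    intro w hw
    have : w ∈ v '' Set.Icc 1 n := by rw [himg]; exact hw
    obtain ⟨j, hj, rfl⟩ := this
    exact ⟨j, hj.1, hj.2, rfl⟩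
  have hdd : ∀ i, dY G X (v i) = d i := fun i => (hd i).symm
  have hdm : ∀ i j : ℕ, 1 ≤ i → i ≤ j → j ≤ n → d j ≤ d i := by
    intro i j h1 h2 h3
    have a1 := hmono i j h1 h2 h3
    have a2 := ndeg_eq G X hclique (v i) (hvX i h1 (by omega))
    have a3 := ndeg_eq G X hclique (v j) (hvX j (by omega) h3)
    rw [hdd] at a2 a3
    omega
  have one : 4 ≤ n → d 1 < n / 2 → d 2 = 0 → False := by
    intro h1 h2 h3
    refine final1 (v 1) (hvX 1 le_rfl (by omega)) (d := d 1)
      (mkSit G X (X.erase (v 1)) hclique c hc (Finset.erase_subset _ _) (d 1) ?_ ?_)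
      (by omega) (by omega)
    · intro w hw
      rw [Finset.mem_erase] at hw
      obtain ⟨j, hj1, hj2, rfl⟩ := hXv w hw.2
      have : j ≠ 1 := fun h => hw.1 (h ▸ rfl)
      have := hdm 2 j (by omega) (by omega) hj2
      rw [hdd]; omega
    · intro w hw hw'
      have : w = v 1 := by
        by_contra h
        exact hw' (Finset.mem_erase.2 ⟨h, hw⟩)
      rw [this, hdd]
  rcases hcase with h | h | h | h | h | h | h
  · exact no_path G h.some c hc
  · exact one (by omega) (by omega) (by omega)
  · exact one (by omega) (by omega) (by omega)
  · exact one (by omega) (by omega) (by omega)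
  · obtain ⟨h1, h2, h3, h4, h5⟩ := h
    have hne : v 1 ≠ v 2 := by
      intro h
      have := hinj (show 1 ∈ Set.Icc 1 n from ⟨le_rfl, by omega⟩)
        (show 2 ∈ Set.Icc 1 n from ⟨by omega, by omega⟩) h
      omega
    refine final2 (v 1) (v 2) (hvX 1 le_rfl (by omega)) (hvX 2 (by omega) (by omega)) hne
      (mkSit G X ((X.erase (v 1)).erase (v 2)) hclique c hc
        ((Finset.erase_subset _ _).trans (Finset.erase_subset _ _)) 1 ?_ ?_)
      (by omega) (by omega)
    · intro w hw
      rw [Finset.mem_erase, Finset.mem_erase] at hw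
      obtain ⟨j, hj1, hj2, rfl⟩ := hXv w hw.2.2
      have : j ≠ 1 := fun h => hw.2.1 (h ▸ rfl)
      have : j ≠ 2 := fun h => hw.1 (h ▸ rfl)
      have := hdm 3 j (by omega) (by omega) hj2
      rw [hdd]; omega
    · intro w hw hw'
      have : w = v 1 ∨ w = v 2 := by
        by_contra h
        push Not at h
        exact hw' (Finset.mem_erase.2 ⟨h.2, Finset.mem_erase.2 ⟨h.1, hw⟩⟩)
      rcases this with rfl | rfl
      · rw [hdd, h3]
      · rw [hdd, h4]
  · exact one (by omega) (by omega) (by omega)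
  · exact one (by omega) (by omega) (by omega)
end

section
/- For every integer k ≥ 4 and every integer n ≥ 2k + 2, there exist nonnegative integers p, q and an integer t with p + q ≥ 2, k ≤ t ≤ ⌊(8k - 5)/5⌋, and n = p(t + 1) + q(t + 2). -/
/-- For every `k ≥ 4` and `n ≥ 2k + 2` there are nonnegative integers `p`, `q` and an
integer `t` with `p + q ≥ 2`, `k ≤ t ≤ ⌊(8k - 5)/5⌋`, and `n = p(t+1) + q(t+2)`. -/
theorem representation_p_q_t (k n : ℕ) (hk : 4 ≤ k) (hn : 2 * k + 2 ≤ n) :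
    ∃ p q t : ℕ, 2 ≤ p + q ∧ k ≤ t ∧ t ≤ (8 * k - 5) / 5 ∧
      n = p * (t + 1) + q * (t + 2) := by
  obtain ⟨T, hT⟩ : ∃ T, T = (8 * k - 5) / 5 := ⟨_, rfl⟩
  rw [← hT]
  obtain ⟨d, hd⟩ : ∃ d, T + 1 = k + d := ⟨T + 1 - k, by omega⟩
  have hd2 : k ≤ 2 * d := by omega
  obtain ⟨m, hm⟩ : ∃ m, m = n / (k + 1) := ⟨_, rfl⟩
  have h1 : (k + 1) * m + n % (k + 1) = n := by rw [hm]; exact Nat.div_add_mod n (k + 1)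
  have h2 : n % (k + 1) < k + 1 := Nat.mod_lt _ (by omega)
  have hm2 : 2 ≤ m := by
    rw [hm, Nat.le_div_iff_mul_le (by omega)]; omega
  have h3 : n ≤ m * (T + 2) := by
    have : T + 2 = k + 1 + d := by omega
    rw [this]
    nlinarith [Nat.mul_le_mul_right d hm2]
  obtain ⟨s, hs⟩ : ∃ s, s = n / m := ⟨_, rfl⟩
  have h4 : m * s + n % m = n := by rw [hs]; exact Nat.div_add_mod n m
  have h5 : n % m < m := Nat.mod_lt _ (by omega)
  have h6 : k + 1 ≤ s := by
    rw [hs, Nat.le_div_iff_mul_le (by omega)]; omega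
  by_cases h7 : s ≤ T + 1
  · obtain ⟨t, rfl⟩ : ∃ t, s = t + 1 := ⟨s - 1, by omega⟩
    obtain ⟨p, hp⟩ : ∃ p, m = p + n % m := ⟨m - n % m, by omega⟩
    refine ⟨p, n % m, t, by omega, by omega, by omega, ?_⟩
    generalize n % m = r at *
    subst hp
    rw [← h4]; ring
  · refine ⟨0, m, T, by omega, by omega, le_rfl, ?_⟩
    have : m * (T + 2) ≤ m * s := Nat.mul_le_mul_left m (by omega)
    omega
end

section
/- If G is a connected almost irregular graph of order n ≥ 2, then two distinct vertices u and v of G are adjacent if and only if deg(u) + deg(v) ≥ n. -/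
/-- A graph is almost irregular if there is exactly one unordered pair of distinct
vertices having equal degrees (all other degrees are pairwise distinct and different
from the repeated one). -/
def AlmostIrregular {V : Type*} (G : SimpleGraph V) : Prop :=
  ∃ u v : V, u ≠ v ∧ ndeg G u = ndeg G v ∧
    ∀ x y : V, x ≠ y → ndeg G x = ndeg G y → ((x = u ∧ y = v) ∨ (x = v ∧ y = u))

open Classical in
/-- Degree as the cardinality of a finset. -/
lemma ndeg_eq_card {V : Type*} [Fintype V] (G : SimpleGraph V) (v : V) :
    ndeg G v = (Finset.univ.filter (fun w => G.Adj v w)).card := by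
  unfold ndeg
  rw [← Set.ncard_coe_finset]
  congr 1
  ext w
  simp

open Classical in
/-- Every value between `1` and `n - 1` is a degree. -/
lemma degree_attained {V : Type*} [Fintype V] (G : SimpleGraph V)
    (hn : 2 ≤ Fintype.card V) (hconn : G.Connected) (hai : AlmostIrregular G) :
    ∀ m, 1 ≤ m → m < Fintype.card V → ∃ v, ndeg G v = m := by
  obtain ⟨a, b, hab, hd, huniq⟩ := hai
  have hinj : Set.InjOn (ndeg G) ((Finset.univ.erase a : Finset V) : Set V) := by
    intro x hx y hy hxy
    by_contra hne
    simp at hx hy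
    rcases huniq x y hne hxy with h | h
    · exact hx h.1
    · exact hy h.2
  have hcard := Finset.card_image_of_injOn hinj
  rw [Finset.card_erase_of_mem (Finset.mem_univ a), Finset.card_univ] at hcard
  have hsub : (Finset.univ.erase a).image (ndeg G) ⊆ Finset.Icc 1 (Fintype.card V - 1) := by
    intro m hm
    obtain ⟨v, -, rfl⟩ := Finset.mem_image.1 hm
    rw [Finset.mem_Icc, ndeg_eq_card]
    constructor
    · haveI : Nontrivial V := Fintype.one_lt_card_iff_nontrivial.1 hn
      obtain ⟨w, hw⟩ := hconn.preconnected.exists_adj_of_nontrivial v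
      exact Finset.card_pos.2 ⟨w, by simpa using hw⟩
    · have : Finset.univ.filter (fun w => G.Adj v w) ⊆ Finset.univ.erase v := by
        intro w hw
        simp at hw ⊢
        exact hw.ne'
      have := Finset.card_le_card this
      rwa [Finset.card_erase_of_mem (Finset.mem_univ v), Finset.card_univ] at this
  have heq := Finset.eq_of_subset_of_card_le hsub (by rw [hcard, Nat.card_Icc]; omega)
  intro m h1 h2
  have : m ∈ (Finset.univ.erase a).image (ndeg G) := by
    rw [heq, Finset.mem_Icc]; omega
  obtain ⟨v, -, hv⟩ := Finset.mem_image.1 this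
  exact ⟨v, hv⟩

open Classical in
/-- Main induction, symmetric around `n / 2`. -/
lemma adj_iff_aux {V : Type*} [Fintype V] (G : SimpleGraph V)
    (hatt : ∀ m, 1 ≤ m → m < Fintype.card V → ∃ v, ndeg G v = m) :
    ∀ k, 1 ≤ k → 2 * k ≤ Fintype.card V → 
      (∀ v w, v ≠ w → ndeg G v = Fintype.card V - k →
        (G.Adj v w ↔ k ≤ ndeg G w)) ∧
      (∀ v w, v ≠ w → ndeg G v = k →
        (G.Adj v w ↔ Fintype.card V - k ≤ ndeg G w)) := by
  intro k
  induction k using Nat.strong_induction_on with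
  | _ k ih =>
  intro hk1 hk2
  have hcount : ∀ a b, 1 ≤ a → b ≤ Fintype.card V →
      b - a ≤ (Finset.univ.filter (fun w => a ≤ ndeg G w ∧ ndeg G w < b)).card := by
    intro a b ha hb
    have : Finset.Ico a b ⊆
        (Finset.univ.filter (fun w => a ≤ ndeg G w ∧ ndeg G w < b)).image (ndeg G) := by
      intro m hm
      rw [Finset.mem_Ico] at hm
      obtain ⟨v, hv⟩ := hatt m (by omega) (by omega)
      exact Finset.mem_image.2 ⟨v, by simp [hv, hm], hv⟩
    have h := (Finset.card_le_card this).trans Finset.card_image_le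
    rwa [Nat.card_Ico] at h
  have hlt : ∀ v, ndeg G v < Fintype.card V := by
    intro v
    rw [ndeg_eq_card, ← Finset.card_univ]
    apply Finset.card_lt_card
    rw [Finset.ssubset_univ_iff]
    intro h
    have : v ∈ Finset.univ.filter (fun w => G.Adj v w) := by rw [h]; simp
    simp at this
  have hhigh : ∀ v w, v ≠ w → ndeg G v = Fintype.card V - k →
      (G.Adj v w ↔ k ≤ ndeg G w) := by
    intro v w hvw hv
    have hsub : Finset.univ.filter (fun w => G.Adj v w) ⊆
        (Finset.univ.filter (fun w => k ≤ ndeg G w)).erase v := by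
      intro x hx
      simp only [Finset.mem_filter, Finset.mem_univ, true_and, Finset.mem_erase] at hx ⊢
      refine ⟨hx.ne', ?_⟩
      by_contra hlow
      have hpos : 1 ≤ ndeg G x := by
        rw [ndeg_eq_card]
        exact Finset.card_pos.2 ⟨v, by simpa using hx.symm⟩
      have := ((ih (ndeg G x) (by omega) hpos (by omega)).2 x v hx.ne' rfl).1 hx.symm
      omega
    have hc : ((Finset.univ.filter (fun w => k ≤ ndeg G w)).erase v).card
        ≤ (Finset.univ.filter (fun w => G.Adj v w)).card := by
      rw [← ndeg_eq_card, hv, Finset.card_erase_of_mem (by simp; omega)]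
      have h1 := hcount 1 k le_rfl (by omega)
      have h2 : (Finset.univ.filter (fun w => 1 ≤ ndeg G w ∧ ndeg G w < k)).card ≤
          (Finset.univ.filter (fun w => ¬ k ≤ ndeg G w)).card := by
        apply Finset.card_le_card
        intro x hx
        simp at hx ⊢
        omega
      have h3 := Finset.card_filter_add_card_filter_not (s := (Finset.univ : Finset V))
        (fun w => k ≤ ndeg G w)
      rw [Finset.card_univ] at h3
      omega
    have heq := Finset.eq_of_subset_of_card_le hsub hc
    have := Finset.ext_iff.1 heq w
    simpa [hvw.symm] using this
  refine ⟨hhigh, ?_⟩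
  intro v w hvw hv
  rcases Nat.lt_or_ge k (Fintype.card V - k) with hlt' | hge
  · have hsub : Finset.univ.filter
        (fun w => Fintype.card V - k ≤ ndeg G w ∧ ndeg G w < Fintype.card V) ⊆
        Finset.univ.filter (fun w => G.Adj v w) := by
      intro x hx
      simp only [Finset.mem_filter, Finset.mem_univ, true_and] at hx ⊢
      have hxv : x ≠ v := by rintro rfl; omega
      rcases hx.1.eq_or_lt with h | h
      · exact ((hhigh x v hxv h.symm).2 hv.ge).symm
      · exact (((ih (Fintype.card V - ndeg G x) (by omega) (by omega) (by omega)).1 x v hxv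
          (by omega)).2 (by omega)).symm
    have hc := hcount (Fintype.card V - k) (Fintype.card V) (by omega) le_rfl
    have heq := Finset.eq_of_subset_of_card_le hsub (by
      rw [← ndeg_eq_card, hv]; omega)
    have := Finset.ext_iff.1 heq w
    simp only [Finset.mem_filter, Finset.mem_univ, true_and] at this
    rw [← this]
    exact ⟨fun h => h.1, fun h => ⟨h, hlt w⟩⟩
  · have : Fintype.card V - k = k := by omega
    rw [this]
    exact hhigh v w hvw (by omega)

/-- In a connected almost irregular graph of order `n ≥ 2`, two distinct vertices are
adjacent if and only if the sum of their degrees is at least `n`. -/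
theorem connected_almost_irregular_adj_iff {V : Type*} [Fintype V] (G : SimpleGraph V)
    (hn : 2 ≤ Fintype.card V) (hconn : G.Connected) (hai : AlmostIrregular G) :
    ∀ u v : V, u ≠ v → (G.Adj u v ↔ Fintype.card V ≤ ndeg G u + ndeg G v) := by
  intro u v huv
  have hatt := degree_attained G hn hconn hai
  have haux := adj_iff_aux G hatt
  have hpos : ∀ v, 1 ≤ ndeg G v := by
    classical
    intro v
    haveI : Nontrivial V := Fintype.one_lt_card_iff_nontrivial.1 hn
    obtain ⟨w, hw⟩ := hconn.preconnected.exists_adj_of_nontrivial v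
    rw [ndeg_eq_card]
    exact Finset.card_pos.2 ⟨w, by simpa using hw⟩
  have hlt : ndeg G u < Fintype.card V := by
    classical
    rw [ndeg_eq_card, ← Finset.card_univ]
    apply Finset.card_lt_card
    rw [Finset.ssubset_univ_iff]
    intro h
    have : u ∈ Finset.univ.filter (fun w => G.Adj u w) := by rw [h]; simp
    simp at this
  have := hpos u
  rcases Nat.lt_or_ge (Fintype.card V) (2 * ndeg G u) with h | h
  · rw [(haux (Fintype.card V - ndeg G u) (by omega) (by omega)).1 u v huv (by omega)]
    omega
  · rw [(haux (ndeg G u) (by omega) h).2 u v huv rfl]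
    omega
end
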